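/- arXiv:1907.05801 — 5 statements merged into one kernel-verified Lean document; each statement's English description precedes it below -/
import Mathlib

section
/- Let ℏ>0, m>0, σ₀>0, α∈ℝ\{0}, β := 2α/ℏ. There exists a constant C>0, independent of all parameters, such that for every λ>0 and every ξ=(q,p)∈ℝ² with q·p≠0, and for each choice of sign ±: ‖ Ω_α^±ψ^ℏ_{σ₀,ξ} − (W_β^±φ^ℏ_{σ₀,(·)})(ξ) ‖_{L²(ℝ,dx)} ≤ C·[ (ℏ/(m|α|σ₀)^{2/3})^{3/2−λ} + exp(−(1/2)·((m|α|σ₀)^{2/3}/ℏ)^{2λ}) + exp(−σ₀²p²/ℏ) + exp(−q²/(4ℏσ₀²)) ], where (W_β^±φ^ℏ_{σ₀,(·)})(ξ)(x) = ψ^ℏ_{σ₀,ξ}(x) − θ(∓qp)·(1 ± 2i|p|/(mβ))⁻¹·(ψ^ℏ_{σ₀,ξ}(x)+ψ^ℏ_{σ₀,−ξ}(x)). -/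
open MeasureTheory Complex Filter

noncomputable section

/-- Heaviside step function: `1` for positive arguments, `0` otherwise. -/
def heav (x : ℝ) : ℝ := if 0 < x then 1 else 0

/-- Gaussian coherent state `ψ^ℏ(σ,σ̆,q,p;x)`. -/
def coh (ℏ : ℝ) (σ σ' : ℂ) (q p x : ℝ) : ℂ :=
  ((2 * Real.pi * ℏ : ℝ) : ℂ) ^ (-(1/4 : ℂ)) * σ ^ (-(1/2 : ℂ)) *
    Complex.exp (-(σ' * ((x : ℂ) - (q : ℂ)) ^ 2) / (4 * (ℏ : ℂ) * σ) +
      Complex.I * (p : ℂ) * ((x : ℂ) - (q : ℂ)) / (ℏ : ℂ))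

/-- Fourier transform `ψ̂(k) = (2π)^{-1/2} ∫ e^{-ikx} ψ(x) dx`. -/
def ft (ψ : ℝ → ℂ) (k : ℝ) : ℂ :=
  (((Real.sqrt (2 * Real.pi))⁻¹ : ℝ) : ℂ) *
    ∫ x : ℝ, Complex.exp (-(Complex.I) * (k : ℂ) * (x : ℂ)) * ψ x

/-- Reflection coefficients `R_±(k) = -(1 ± iℏ²|k|/(mα))⁻¹`; `s = ±1`. -/
def Rpm (ℏ m α s k : ℝ) : ℂ :=
  -(1 + (s : ℂ) * Complex.I * (ℏ : ℂ) ^ 2 * ((|k| : ℝ) : ℂ) / ((m : ℂ) * (α : ℂ)))⁻¹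

/-- Generalized eigenfunctions `φ_k⁺(x)`. -/
def phiP (ℏ m α k x : ℝ) : ℂ :=
  (((Real.sqrt (2 * Real.pi))⁻¹ : ℝ) : ℂ) *
    (Complex.exp (Complex.I * (k : ℂ) * (x : ℂ)) +
      Rpm ℏ m α 1 k * Complex.exp (-(Complex.I) * ((|k| : ℝ) : ℂ) * ((|x| : ℝ) : ℂ)))

/-- Bound state `φ_α` of the delta interaction (for `α < 0`). -/
def phiB (ℏ m α x : ℝ) : ℂ :=
  ((Real.sqrt (m * |α|) / ℏ : ℝ) : ℂ) * Complex.exp (((-(m * |α| * |x|) / ℏ ^ 2 : ℝ) : ℂ))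

/-- Quantum evolution `e^{-(it/ℏ)H_α} ψ` via the eigenfunction expansion. -/
def qEvol (ℏ m α t : ℝ) (ψ : ℝ → ℂ) (x : ℝ) : ℂ :=
  (∫ k : ℝ, Complex.exp (-(Complex.I) * (ℏ : ℂ) * (t : ℂ) * (k : ℂ) ^ 2 / (2 * (m : ℂ))) *
      phiP ℏ m α k x * (∫ y : ℝ, (starRingEnd ℂ) (phiP ℏ m α k y) * ψ y)) +
    ((heav (-α) : ℝ) : ℂ) *
      Complex.exp (-(Complex.I) * (t : ℂ) / (ℏ : ℂ) * ((-(m * α ^ 2) / (2 * ℏ ^ 2) : ℝ) : ℂ)) *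
      phiB ℏ m α x * (∫ y : ℝ, phiB ℏ m α y * ψ y)

/-- Classical perturbed evolution `e^{itL_β}` acting on functions of `(q,p)`. -/
def cEvol (m β t : ℝ) (f : ℝ → ℝ → ℂ) (q p : ℝ) : ℂ :=
  f (q + p * t / m) p -
    ((heav (-(t * q * p)) * heav (|p * t| / m - |q|) : ℝ) : ℂ) /
      (1 - (Real.sign t : ℂ) * 2 * Complex.I * ((|p| : ℝ) : ℂ) / ((m : ℂ) * (β : ℂ))) *
      (f (q + p * t / m) p + f (-(q + p * t / m)) (-p))

end

/-- Quantum wave operators `Ω_α^±` in their stationary representation; `s = ±1`. -/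
noncomputable def waveOpQ (ℏ m α s : ℝ) (ψ : ℝ → ℂ) (x : ℝ) : ℂ :=
  ψ x + (((Real.sqrt (2 * Real.pi))⁻¹ : ℝ) : ℂ) *
    ∫ k : ℝ, Complex.exp (-(s : ℂ) * Complex.I * ((|k| : ℝ) : ℂ) * ((|x| : ℝ) : ℂ)) *
      Rpm ℏ m α s k * ft ψ k


/-!
Up to a constant phase, a coherent state is a Gaussian packet of variance `v = ℏ σ₀²` and mean wave
number `κ = p / ℏ`, and its Fourier transform is again a Gaussian packet. The spherical wave
`exp (-i s |k| |x|)` is, as a function of `x`, the plane wave `exp (-i k t |x|)` with `t = s` for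
`k > 0` and `t = -s` for `k < 0`. Freezing `R_±(k)` at `R_±(κ)` costs the Lipschitz constant of
`R_±` times the standard deviation of `k`, by Plancherel. Keeping only the plane wave selected by
the sign of `κ` then costs the momentum tail `exp (-v κ²)`. What remains is a multiple of the packet
evaluated at `-t |x|`: the packet plus its mirror image if `-t q > 0`, and zero otherwise, up to the
position tail `exp (-q² / (4 v))`. The exponent `λ` only interpolates between the Lipschitz bound
and the trivial bound on the freezing error.
-/

open scoped FourierTransform NNReal ENNReal
open ProbabilityTheory

section Plancherel

variable {V F : Type*} [NormedAddCommGroup V] [InnerProductSpace ℝ V] [FiniteDimensional ℝ V]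
  [MeasurableSpace V] [BorelSpace V] [NormedAddCommGroup F]

lemma continuous_fourier_of_integrable [NormedSpace ℂ F] {g : V → F} (hg : Integrable g) :
    Continuous (𝓕 g) :=
  VectorFourier.fourierIntegral_continuous Real.continuous_fourierChar continuous_inner hg

variable [InnerProductSpace ℂ F] [CompleteSpace F]

lemma coeFn_fourier_toLp_ae_eq {g : V → F} (hg : Integrable g) (hg2 : MemLp g 2) :
    (𝓕 (hg2.toLp g) : Lp F 2 (volume : Measure V)) =ᵐ[volume] 𝓕 g := by
  refine ae_eq_of_integral_contDiff_smul_eq ((Lp.memLp _).locallyIntegrable one_le_two)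
    (continuous_fourier_of_integrable hg).locallyIntegrable fun φ hφ hφc => ?_
  have hφc' : HasCompactSupport fun x => (φ x : ℂ) :=
    hφc.comp_left (g := fun t : ℝ => (t : ℂ)) Complex.ofReal_zero
  let Φ := hφc'.toSchwartzMap (Complex.ofRealCLM.contDiff.comp hφ)
  have hΦ : ∀ x, Φ x = (φ x : ℂ) := fun _ => rfl
  have hdistrib := congrArg (· Φ) (Lp.fourier_toTemperedDistribution_eq (hg2.toLp g))
  simp only [TemperedDistribution.fourier_apply, Lp.toTemperedDistribution_apply] at hdistrib
  have hswap := VectorFourier.integral_fourierIntegral_smul_eq_flip (μ := volume) (ν := volume)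
    (L := innerₗ V) Real.continuous_fourierChar continuous_inner Φ.integrable hg
  rw [flip_innerₗ] at hswap
  calc ∫ x, φ x • (𝓕 (hg2.toLp g) : Lp F 2 (volume : Measure V)) x
      = ∫ x, Φ x • (𝓕 (hg2.toLp g) : Lp F 2 (volume : Measure V)) x := by
        simp only [hΦ, Complex.coe_smul]
    _ = ∫ x, (𝓕 Φ) x • (hg2.toLp g) x := hdistrib.symm
    _ = ∫ x, (𝓕 Φ) x • g x :=
      integral_congr_ae (hg2.coeFn_toLp.mono fun x hx => congrArg ((𝓕 Φ) x • ·) hx)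
    _ = ∫ x, Φ x • 𝓕 g x := by rw [SchwartzMap.fourier_coe]; exact hswap
    _ = ∫ x, φ x • 𝓕 g x := by simp only [hΦ, Complex.coe_smul]

lemma eLpNorm_fourier_eq {g : V → F} (hg : Integrable g) (hg2 : MemLp g 2) :
    eLpNorm (𝓕 g) 2 = eLpNorm g 2 := by
  rw [← eLpNorm_congr_ae (coeFn_fourier_toLp_ae_eq hg hg2), ← Lp.enorm_def,
    ← Lp.enorm_toLp hg2, ← ofReal_norm, ← ofReal_norm, Lp.norm_fourier_eq]

end Plancherel

section Dilation

variable {E : Type*} [NormedAddCommGroup E]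

lemma eLpNorm_comp_mul_left (f : ℝ → E) {p : ℝ≥0∞} (hp : p ≠ ∞) {a : ℝ} (ha : a ≠ 0) :
    eLpNorm (fun x => f (a * x)) p = ENNReal.ofReal |a⁻¹| ^ (1 / p).toReal * eLpNorm f p := by
  have hmap := (measurableEmbedding_mulLeft₀ ha).eLpNorm_map_measure (g := f) (p := p)
    (μ := volume)
  rw [Real.map_volume_mul_left ha, eLpNorm_smul_measure_of_ne_top hp, smul_eq_mul] at hmap
  exact hmap.symm

lemma mul_abs_eq_self_or_neg {t : ℝ} (ht : |t| = 1) (x : ℝ) : t * |x| = x ∨ t * |x| = -x :=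
  abs_eq_abs.1 (by rw [abs_mul, ht, one_mul, abs_abs])

lemma eLpNorm_comp_mul_abs_le {f : ℝ → E} {p : ℝ≥0∞} (hf : AEStronglyMeasurable f) (hp : 1 ≤ p)
    {t : ℝ} (ht : |t| = 1) : eLpNorm (fun x => f (t * |x|)) p ≤ 2 * eLpNorm f p := by
  have hneg : MeasurePreserving (fun x : ℝ => -x) := Measure.measurePreserving_neg volume
  have hbound : ∀ x, ‖f (t * |x|)‖ ≤ ‖f x‖ + ‖f (-x)‖ := fun x => by
    rcases mul_abs_eq_self_or_neg ht x with h | h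
    · rw [h]; exact le_add_of_nonneg_right (norm_nonneg _)
    · rw [h]; exact le_add_of_nonneg_left (norm_nonneg _)
  have hadd := eLpNorm_add_le hf.norm (hf.comp_measurePreserving hneg).norm hp
  rw [eLpNorm_norm, eLpNorm_norm, eLpNorm_comp_measurePreserving hf hneg, ← two_mul] at hadd
  exact (eLpNorm_mono_real hbound).trans hadd

end Dilation

section LineFourier

lemma ft_const_mul (c : ℂ) (ψ : ℝ → ℂ) (k : ℝ) : ft (fun x => c * ψ x) k = c * ft ψ k := by
  simp only [ft, mul_left_comm _ c]
  rw [integral_const_mul, mul_left_comm]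

lemma norm_cexp_neg_I_mul_mul (k x : ℝ) : ‖cexp (-I * k * x)‖ = 1 := by
  rw [show -I * k * x = ((-k * x : ℝ) : ℂ) * I by push_cast; ring, norm_exp_ofReal_mul_I]

lemma integrable_cexp_mul {g : ℝ → ℂ} (hg : Integrable g) (k : ℝ) :
    Integrable fun x : ℝ => cexp (-I * k * x) * g x :=
  hg.bdd_mul (c := 1) (Continuous.aestronglyMeasurable (by fun_prop))
    (.of_forall fun x => (norm_cexp_neg_I_mul_mul k x).le)

lemma ft_eq_fourier (g : ℝ → ℂ) :
    ft g = (((Real.sqrt (2 * Real.pi))⁻¹ : ℝ) : ℂ) • fun k => 𝓕 g ((2 * Real.pi)⁻¹ * k) := by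
  funext k
  simp only [ft, Pi.smul_apply, Real.fourier_real_eq_integral_exp_smul, smul_eq_mul]
  congr! 5 with x
  push_cast
  field_simp

lemma continuous_ft {g : ℝ → ℂ} (hg : Integrable g) : Continuous (ft g) := by
  rw [ft_eq_fourier]
  exact ((continuous_fourier_of_integrable hg).comp (continuous_const_mul _)).const_smul _

lemma eLpNorm_ft {g : ℝ → ℂ} (hg : Integrable g) (hg2 : MemLp g 2) :
    eLpNorm (ft g) 2 = eLpNorm g 2 := by
  have hpi := Real.two_pi_pos
  rw [ft_eq_fourier, eLpNorm_const_smul, eLpNorm_comp_mul_left _ (by simp) (by positivity),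
    eLpNorm_fourier_eq hg hg2, ← mul_assoc, inv_inv, abs_of_pos hpi, ← ofReal_norm,
    Complex.norm_real, Real.norm_of_nonneg (by positivity),
    ENNReal.ofReal_rpow_of_pos hpi, ← ENNReal.ofReal_mul (by positivity),
    show (1 / 2 : ℝ≥0∞).toReal = 1 / 2 by simp, ← Real.sqrt_eq_rpow,
    inv_mul_cancel₀ (by positivity), ENNReal.ofReal_one, one_mul]

end LineFourier

section GaussianPacket

/-- The `L²`-normalised Gaussian wave packet with position density `gaussianReal q v` and mean
wave number `κ`. The phase vanishes at `q / 2`, so that the Fourier transform of a packet is again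
a packet, without an additional phase factor. -/
noncomputable def gaussianPacket (v q κ x : ℝ) : ℂ :=
  (((2 * Real.pi * v) ^ (-(1 / 4) : ℝ) : ℝ) : ℂ) *
    cexp (-((x - q : ℝ) : ℂ) ^ 2 / (4 * v) + I * κ * (x - q / 2))

variable {v : ℝ} (q κ : ℝ)

lemma gaussianPacket_neg_neg (v x : ℝ) :
    gaussianPacket v (-q) (-κ) x = gaussianPacket v q κ (-x) := by
  simp only [gaussianPacket]
  push_cast
  ring_nf

@[fun_prop]
lemma continuous_gaussianPacket (v : ℝ) : Continuous (gaussianPacket v q κ) := by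
  unfold gaussianPacket
  fun_prop

lemma norm_gaussianPacket (hv : 0 < v) (x : ℝ) : ‖gaussianPacket v q κ x‖ =
    (2 * Real.pi * v) ^ (-(1 / 4) : ℝ) * Real.exp (-(x - q) ^ 2 / (4 * v)) := by
  have hre : (-((x - q : ℝ) : ℂ) ^ 2 / (4 * v) + I * κ * (x - q / 2)).re =
      -(x - q) ^ 2 / (4 * v) := by
    rw [show -((x - q : ℝ) : ℂ) ^ 2 / (4 * v) + I * κ * (x - q / 2) =
      ((-(x - q) ^ 2 / (4 * v) : ℝ) : ℂ) + ((κ * (x - q / 2) : ℝ) : ℂ) * I by push_cast; ring]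
    simp only [add_re, ofReal_re, re_ofReal_mul, I_re, mul_zero, add_zero]
  rw [gaussianPacket, norm_mul, norm_real, Real.norm_of_nonneg (by positivity), norm_exp, hre]

lemma sq_norm_gaussianPacket (hv : 0 < v) (x : ℝ) :
    ‖gaussianPacket v q κ x‖ ^ 2 = gaussianPDFReal q v.toNNReal x := by
  have hconst : ((2 * Real.pi * v) ^ (-(1 / 4) : ℝ)) ^ 2 = (√(2 * Real.pi * v))⁻¹ := by
    rw [Real.sqrt_eq_rpow, ← Real.rpow_natCast, ← Real.rpow_mul (by positivity),
      ← Real.rpow_neg (by positivity)]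
    norm_num
  rw [norm_gaussianPacket q κ hv, gaussianPDFReal, Real.coe_toNNReal v hv.le, mul_pow, hconst,
    ← Real.exp_nat_mul]
  congr 2
  push_cast
  field

lemma eLpNorm_mul_gaussianPacket (hv : 0 < v) (f : ℝ → ℂ) :
    eLpNorm (fun x => f x * gaussianPacket v q κ x) 2 =
      eLpNorm f 2 (gaussianReal q v.toNNReal) := by
  have hdensity : ∀ x, ‖gaussianPacket v q κ x‖ₑ ^ (2 : ℝ) = gaussianPDF q v.toNNReal x :=
    fun x => by
      rw [← ofReal_norm, ENNReal.ofReal_rpow_of_nonneg (norm_nonneg _) zero_le_two,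
        Real.rpow_two, sq_norm_gaussianPacket q κ hv, gaussianPDF]
  simp only [eLpNorm_eq_lintegral_rpow_enorm_toReal two_ne_zero ENNReal.ofNat_ne_top,
    ENNReal.toReal_ofNat, enorm_mul, ENNReal.mul_rpow_of_nonneg _ _ zero_le_two, hdensity]
  rw [gaussianReal_of_var_ne_zero q (Real.toNNReal_pos.2 hv).ne',
    lintegral_withDensity_eq_lintegral_mul_non_measurable _ (measurable_gaussianPDF q _)
      (.of_forall fun _ => gaussianPDF_lt_top)]
  simp only [Pi.mul_apply, mul_comm]

lemma eLpNorm_gaussianPacket (hv : 0 < v) : eLpNorm (gaussianPacket v q κ) 2 = 1 := by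
  have h := eLpNorm_mul_gaussianPacket q κ hv fun _ => 1
  simp only [one_mul] at h
  rw [h, eLpNorm_const _ two_ne_zero (NeZero.ne _)]
  simp

lemma memLp_gaussianPacket (hv : 0 < v) : MemLp (gaussianPacket v q κ) 2 :=
  ⟨(continuous_gaussianPacket q κ v).aestronglyMeasurable,
    by rw [eLpNorm_gaussianPacket q κ hv]; exact ENNReal.one_lt_top⟩

lemma integrable_gaussianPacket (hv : 0 < v) : Integrable (gaussianPacket v q κ) := by
  have hre : 0 < (((4 * v)⁻¹ : ℝ) : ℂ).re := by rw [ofReal_re]; positivity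
  have hv' : (v : ℂ) ≠ 0 := ofReal_ne_zero.2 hv.ne'
  refine ((integrable_cexp_quadratic hre (q / (2 * v) + I * κ)
    (-(q : ℂ) ^ 2 / (4 * v) - I * κ * q / 2)).const_mul
      (((2 * Real.pi * v) ^ (-(1 / 4) : ℝ) : ℝ) : ℂ)).congr (.of_forall fun x => ?_)
  simp only [gaussianPacket]
  congr 2
  push_cast
  field

lemma rpow_neg_quarter_mul_sqrt (hv : 0 < v) :
    (2 * Real.pi * v) ^ (-(1 / 4) : ℝ) * √(4 * Real.pi * v) =
      √(2 * Real.pi) * (2 * Real.pi * (4 * v)⁻¹) ^ (-(1 / 4) : ℝ) := by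
  have hpow : ∀ {a : ℝ}, 0 < a → (a ^ (-(1 / 4) : ℝ)) ^ 4 = a⁻¹ := fun ha => by
    rw [← Real.rpow_natCast, ← Real.rpow_mul ha.le, ← Real.rpow_neg_one]
    norm_num
  have hsqrt : ∀ {a : ℝ}, 0 < a → √a ^ 4 = a ^ 2 := fun ha => by
    rw [show 4 = 2 * 2 from rfl, pow_mul, Real.sq_sqrt ha.le]
  refine (pow_left_inj₀ (by positivity) (by positivity) four_ne_zero).1 ?_
  rw [mul_pow, mul_pow, hpow (by positivity), hpow (by positivity), hsqrt (by positivity),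
    hsqrt (by positivity)]
  field

theorem ft_gaussianPacket (hv : 0 < v) :
    ft (gaussianPacket v q κ) = gaussianPacket (4 * v)⁻¹ κ (-q) := by
  funext k
  have hv' : (v : ℂ) ≠ 0 := ofReal_ne_zero.2 hv.ne'
  have hsqrt : (√(2 * Real.pi) : ℂ) ≠ 0 := ofReal_ne_zero.2 (by positivity)
  have hintegrand : ∀ x : ℝ, cexp (-I * k * x) * gaussianPacket v q κ x =
      (((2 * Real.pi * v) ^ (-(1 / 4) : ℝ) : ℝ) : ℂ) * cexp (-((4 * v)⁻¹ : ℂ) * (x : ℂ) ^ 2 +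
        (q / (2 * v) + I * (κ - k)) * x + (-(q : ℂ) ^ 2 / (4 * v) - I * κ * q / 2)) := fun x => by
    rw [gaussianPacket, mul_left_comm, ← Complex.exp_add]
    congr 2
    push_cast
    field
  have hexponent : (-(q : ℂ) ^ 2 / (4 * v) - I * κ * q / 2) -
      (q / (2 * v) + I * (κ - k)) ^ 2 / (4 * -((4 * v)⁻¹ : ℂ)) =
      -((k - κ : ℝ) : ℂ) ^ 2 / (4 * ((4 * v)⁻¹ : ℝ)) + I * ((-q : ℝ) : ℂ) * (k - κ / 2) := by
    push_cast
    field_simp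
    ring_nf
    simp only [I_sq]
    ring
  have hroot : (Real.pi / -(-((4 * v)⁻¹ : ℂ))) ^ (1 / 2 : ℂ) = (√(4 * Real.pi * v) : ℂ) := by
    rw [Real.sqrt_eq_rpow, ofReal_cpow (by positivity)]
    push_cast
    congr 1
    field_simp
  have hre : (-((4 * v)⁻¹ : ℂ)).re < 0 := by
    rw [show -((4 * v)⁻¹ : ℂ) = ((-(4 * v)⁻¹ : ℝ) : ℂ) by push_cast; rfl, ofReal_re]
    exact neg_lt_zero.2 (by positivity)
  have hconst := congrArg ((↑) : ℝ → ℂ) (rpow_neg_quarter_mul_sqrt hv)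
  simp only [ofReal_mul _ √(_), ofReal_mul √(_) _] at hconst
  simp only [ft, hintegrand]
  rw [integral_const_mul, integral_cexp_quadratic hre, hroot, hexponent, ← mul_assoc _ (√_ : ℂ),
    hconst, gaussianPacket, ofReal_inv]
  field_simp

theorem ft_ft_gaussianPacket (hv : 0 < v) (x : ℝ) :
    ft (ft (gaussianPacket v q κ)) x = gaussianPacket v q κ (-x) := by
  rw [ft_gaussianPacket q κ hv, ft_gaussianPacket _ _ (by positivity), ← gaussianPacket_neg_neg]
  congr 1
  field

lemma norm_gaussianPacket_le_of_mul_nonpos (hv : 0 < v) {x : ℝ} (hx : x * q ≤ 0) :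
    ‖gaussianPacket v q κ x‖ ≤ Real.exp (-(q ^ 2 / (4 * v))) * ‖gaussianPacket v 0 κ x‖ := by
  have hexp : Real.exp (-(x - q) ^ 2 / (4 * v)) ≤
      Real.exp (-(q ^ 2 / (4 * v))) * Real.exp (-(x - 0) ^ 2 / (4 * v)) := by
    rw [← Real.exp_add, Real.exp_le_exp, ← neg_div, ← add_div]
    gcongr
    nlinarith
  rw [norm_gaussianPacket q κ hv, norm_gaussianPacket 0 κ hv, mul_left_comm]
  gcongr

lemma eLpNorm_indicator_gaussianPacket_le (hv : 0 < v) {S : Set ℝ} (hS : ∀ x ∈ S, x * q ≤ 0) :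
    eLpNorm (S.indicator (gaussianPacket v q κ)) 2 ≤
      ENNReal.ofReal (Real.exp (-(q ^ 2 / (4 * v)))) := by
  have hbound : ∀ x, ‖S.indicator (gaussianPacket v q κ) x‖ ≤
      Real.exp (-(q ^ 2 / (4 * v))) * ‖gaussianPacket v 0 κ x‖ := fun x => by
    by_cases hx : x ∈ S
    · rw [Set.indicator_of_mem hx]
      exact norm_gaussianPacket_le_of_mul_nonpos q κ hv (hS x hx)
    · rw [Set.indicator_of_notMem hx, norm_zero]
      positivity
  refine (eLpNorm_le_mul_eLpNorm_of_ae_le_mul (.of_forall hbound) 2).trans_eq ?_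
  rw [eLpNorm_gaussianPacket 0 κ hv, mul_one]

lemma eLpNorm_sub_mean_gaussianReal (v : ℝ≥0) :
    eLpNorm (fun x => x - q) 2 (gaussianReal q v) = ENNReal.ofReal √v := by
  rw [eLpNorm_eq_lintegral_rpow_enorm_toReal two_ne_zero ENNReal.ofNat_ne_top,
    ENNReal.toReal_ofNat, Real.sqrt_eq_rpow, ← ENNReal.ofReal_rpow_of_nonneg v.coe_nonneg (by simp),
    ← variance_id_gaussianReal (μ := q) (v := v),
    (memLp_id_gaussianReal 2).ofReal_variance_eq, evariance]
  simp only [id_eq, integral_id_gaussianReal, ENNReal.rpow_ofNat]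

lemma eLpNorm_sub_mul_gaussianPacket_le (hv : 0 < v) {L : ℝ≥0} {ρ : ℝ → ℂ}
    (hL : LipschitzWith L ρ) (hρ : ∀ x, ‖ρ x‖ ≤ 1) :
    eLpNorm (fun x => (ρ x - ρ q) * gaussianPacket v q κ x) 2 ≤
      ENNReal.ofReal (min (L * √v) 2) := by
  rw [eLpNorm_mul_gaussianPacket q κ hv fun x => ρ x - ρ q, ENNReal.ofReal_min]
  refine le_min ?_ ?_
  · refine (eLpNorm_le_mul_eLpNorm_of_ae_le_mul (c := (L : ℝ)) (g := fun x => x - q)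
      (.of_forall fun x => by simpa only [dist_eq_norm] using hL.dist_le_mul x q) 2).trans_eq ?_
    rw [eLpNorm_sub_mean_gaussianReal, ENNReal.ofReal_mul L.coe_nonneg, Real.coe_toNNReal v hv.le]
  · refine (eLpNorm_le_of_ae_bound (C := 2) (.of_forall fun x => ?_)).trans_eq (by simp)
    exact (norm_sub_le _ _).trans (by linarith [hρ x, hρ q])

end GaussianPacket

section SphericalTransform

/-- The transform with kernel `exp(-i s |k| |x|)`, the spherical wave of sign `s = ±1`; the
scattered part of `Ω_α^±` is `sphericalTransform s` applied to `R_± ψ̂`. -/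
noncomputable def sphericalTransform (s : ℝ) (g : ℝ → ℂ) (x : ℝ) : ℂ :=
  (((Real.sqrt (2 * Real.pi))⁻¹ : ℝ) : ℂ) *
    ∫ k : ℝ, cexp (-(s : ℂ) * I * ((|k| : ℝ) : ℂ) * ((|x| : ℝ) : ℂ)) * g k

lemma integrable_cexp_abs_mul {g : ℝ → ℂ} (hg : Integrable g) (s x : ℝ) :
    Integrable fun k : ℝ => cexp (-(s : ℂ) * I * ((|k| : ℝ) : ℂ) * ((|x| : ℝ) : ℂ)) * g k := by
  refine hg.bdd_mul (c := 1) (Continuous.aestronglyMeasurable (by fun_prop))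
    (.of_forall fun k => ?_)
  rw [show -(s : ℂ) * I * ((|k| : ℝ) : ℂ) * ((|x| : ℝ) : ℂ) =
    ((-(s * |k| * |x|) : ℝ) : ℂ) * I by push_cast; ring, norm_exp_ofReal_mul_I]

lemma sphericalTransform_add {f g : ℝ → ℂ} (hf : Integrable f) (hg : Integrable g) (s x : ℝ) :
    sphericalTransform s (fun k => f k + g k) x =
      sphericalTransform s f x + sphericalTransform s g x := by
  simp only [sphericalTransform, mul_add]
  rw [integral_add (integrable_cexp_abs_mul hf s x) (integrable_cexp_abs_mul hg s x), mul_add]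

lemma sphericalTransform_const_mul (c : ℂ) (g : ℝ → ℂ) (s x : ℝ) :
    sphericalTransform s (fun k => c * g k) x = c * sphericalTransform s g x := by
  simp only [sphericalTransform, mul_left_comm _ c]
  rw [integral_const_mul, mul_left_comm]

lemma sphericalTransform_mul_eq_add {ρ g : ℝ → ℂ} {c : ℂ}
    (hρ : Integrable fun k => (ρ k - c) * g k) (hg : Integrable g) (s x : ℝ) :
    sphericalTransform s (fun k => ρ k * g k) x =
      sphericalTransform s (fun k => (ρ k - c) * g k) x + c * sphericalTransform s g x := by
  rw [← sphericalTransform_const_mul, ← sphericalTransform_add hρ (hg.const_mul c)]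
  congr 1
  funext k
  ring

lemma sphericalTransform_eq_ft_add {g : ℝ → ℂ} (hg : Integrable g) (s : ℝ) {ε : ℝ}
    (hε : |ε| = 1) (x : ℝ) :
    sphericalTransform s g x = ft g (s * ε * |x|) +
      (ft ({k | ε * k ≤ 0}.indicator g) (-(s * ε) * |x|) -
        ft ({k | ε * k ≤ 0}.indicator g) (s * ε * |x|)) := by
  set h := {k | ε * k ≤ 0}.indicator g with h_def
  have hmeas : MeasurableSet {k : ℝ | ε * k ≤ 0} := measurableSet_le (by fun_prop) (by fun_prop)
  have hh : Integrable h := hg.indicator hmeas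
  have hsplit : ∀ k : ℝ, cexp (-(s : ℂ) * I * ((|k| : ℝ) : ℂ) * ((|x| : ℝ) : ℂ)) * g k =
      cexp (-I * ((s * ε * |x| : ℝ) : ℂ) * k) * g k +
        (cexp (-I * ((-(s * ε) * |x| : ℝ) : ℂ) * k) * h k -
          cexp (-I * ((s * ε * |x| : ℝ) : ℂ) * k) * h k) := fun k => by
    have habs : |(ε * k)| = |k| := by rw [abs_mul, hε, one_mul]
    by_cases hk : ε * k ≤ 0
    · rw [h_def, Set.indicator_of_mem (by exact hk), add_sub_cancel, ← habs, abs_of_nonpos hk]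
      push_cast
      ring_nf
    · rw [h_def, Set.indicator_of_notMem (by exact hk), ← habs, abs_of_pos (not_le.1 hk)]
      push_cast
      ring_nf
  simp only [sphericalTransform, hsplit, ft]
  rw [integral_add (integrable_cexp_mul hg _)
    (by exact (integrable_cexp_mul hh _).sub (integrable_cexp_mul hh _)),
    integral_sub (integrable_cexp_mul hh _) (integrable_cexp_mul hh _), mul_add, mul_sub]

lemma eLpNorm_ft_comp_mul_abs_le {g : ℝ → ℂ} (hg : Integrable g) (hg2 : MemLp g 2) {t : ℝ}
    (ht : |t| = 1) : eLpNorm (fun x => ft g (t * |x|)) 2 ≤ 2 * eLpNorm g 2 := by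
  rw [← eLpNorm_ft hg hg2]
  exact eLpNorm_comp_mul_abs_le (continuous_ft hg).aestronglyMeasurable one_le_two ht

lemma continuous_sphericalTransform {g : ℝ → ℂ} (hg : Integrable g) (s : ℝ) :
    Continuous (sphericalTransform s g) := by
  have hh : Integrable ({k : ℝ | 1 * k ≤ 0}.indicator g) :=
    hg.indicator (measurableSet_le (by fun_prop) (by fun_prop))
  rw [funext (sphericalTransform_eq_ft_add hg s abs_one)]
  have := continuous_ft hg
  have := continuous_ft hh
  fun_prop

lemma eLpNorm_sphericalTransform_sub_ft_le {g : ℝ → ℂ} (hg : Integrable g) (hg2 : MemLp g 2)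
    {s ε : ℝ} (hs : |s| = 1) (hε : |ε| = 1) :
    eLpNorm (fun x => sphericalTransform s g x - ft g (s * ε * |x|)) 2 ≤
      4 * eLpNorm ({k | ε * k ≤ 0}.indicator g) 2 := by
  set h := {k | ε * k ≤ 0}.indicator g
  have hmeas : MeasurableSet {k : ℝ | ε * k ≤ 0} := measurableSet_le (by fun_prop) (by fun_prop)
  have hh : Integrable h := hg.indicator hmeas
  have hh2 : MemLp h 2 := hg2.indicator hmeas
  have hsε : |s * ε| = 1 := by rw [abs_mul, hs, hε, one_mul]
  have hcont := continuous_ft hh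
  simp only [sphericalTransform_eq_ft_add hg s hε, add_sub_cancel_left]
  have htri := eLpNorm_sub_le (μ := volume) (p := 2) (f := fun x : ℝ => ft h (-(s * ε) * |x|))
    (g := fun x : ℝ => ft h (s * ε * |x|)) (Continuous.aestronglyMeasurable (by fun_prop))
    (Continuous.aestronglyMeasurable (by fun_prop)) one_le_two
  refine htri.trans ((add_le_add (eLpNorm_ft_comp_mul_abs_le hh hh2 (by rwa [abs_neg]))
    (eLpNorm_ft_comp_mul_abs_le hh hh2 hsε)).trans_eq ?_)
  ring

lemma eLpNorm_sphericalTransform_le {g : ℝ → ℂ} (hg : Integrable g) (hg2 : MemLp g 2) {s : ℝ}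
    (hs : |s| = 1) : eLpNorm (sphericalTransform s g) 2 ≤ 6 * eLpNorm g 2 := by
  have hft := continuous_ft hg
  have hsph := continuous_sphericalTransform hg s
  have htri := eLpNorm_add_le (μ := volume) (p := 2)
    (f := fun x : ℝ => sphericalTransform s g x - ft g (s * 1 * |x|))
    (g := fun x : ℝ => ft g (s * 1 * |x|)) (Continuous.aestronglyMeasurable (by fun_prop))
    (Continuous.aestronglyMeasurable (by fun_prop)) one_le_two
  simp only [Pi.add_def, sub_add_cancel] at htri
  have hdirect := (eLpNorm_sphericalTransform_sub_ft_le hg hg2 hs abs_one).trans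
    (mul_le_mul_right (eLpNorm_indicator_le g) 4)
  refine htri.trans ((add_le_add hdirect
    (eLpNorm_ft_comp_mul_abs_le hg hg2 (by rwa [mul_one]))).trans_eq ?_)
  ring

end SphericalTransform

section PacketScattering

lemma heav_of_pos {x : ℝ} (hx : 0 < x) : heav x = 1 := if_pos hx

lemma heav_of_nonpos {x : ℝ} (hx : x ≤ 0) : heav x = 0 := if_neg hx.not_gt

lemma exists_abs_eq_one_mul_nonneg_heav_mul (κ r : ℝ) :
    ∃ ε : ℝ, |ε| = 1 ∧ 0 ≤ ε * κ ∧ heav (κ * r) = heav (ε * r) := by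
  rcases lt_trichotomy κ 0 with hκ | rfl | hκ
  · refine ⟨-1, by simp, by linarith, ?_⟩
    have hκr := smul_pos_iff_of_neg_left (b := r) hκ
    rw [smul_eq_mul] at hκr
    simp only [heav, neg_one_mul, neg_pos, hκr]
  · rcases lt_or_ge 0 r with hr | hr
    · exact ⟨-1, by simp, by simp, by rw [heav_of_nonpos, heav_of_nonpos] <;> linarith⟩
    · exact ⟨1, by simp, by simp, by rw [heav_of_nonpos, heav_of_nonpos] <;> linarith⟩
  · refine ⟨1, by simp, by linarith, ?_⟩
    simp only [heav, one_mul, mul_pos_iff_of_pos_left hκ]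

variable {v s : ℝ} (q κ : ℝ)

lemma exists_norm_sub_heav_mul_eq (P : ℝ → ℂ) {t : ℝ} (ht : |t| = 1) :
    ∃ u : ℝ, |u| = 1 ∧ u * q ≤ 0 ∧
      ∀ x, ‖P (t * |x|) - (heav (t * q) : ℂ) * (P x + P (-x))‖ = ‖P (u * |x|)‖ := by
  rcases lt_or_ge 0 (t * q) with htq | htq
  · refine ⟨-t, by rwa [abs_neg], by linarith, fun x => ?_⟩
    have hpair : P x + P (-x) = P (t * |x|) + P (-t * |x|) := by
      rcases mul_abs_eq_self_or_neg ht x with h | h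
      · rw [neg_mul, h]
      · rw [neg_mul, h, neg_neg, add_comm]
    rw [hpair, heav_of_pos htq, ofReal_one, one_mul, sub_add_cancel_left, norm_neg]
  · refine ⟨t, ht, htq, fun x => ?_⟩
    rw [heav_of_nonpos htq, ofReal_zero, zero_mul, sub_zero]

lemma eLpNorm_gaussianPacket_mul_abs_sub_le (hv : 0 < v) {t : ℝ} (ht : |t| = 1) :
    eLpNorm (fun x => gaussianPacket v q κ (t * |x|) -
        (heav (t * q) : ℂ) * (gaussianPacket v q κ x + gaussianPacket v q κ (-x))) 2 ≤
      ENNReal.ofReal (2 * Real.exp (-(q ^ 2 / (4 * v)))) := by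
  obtain ⟨u, hu, huq, hnorm⟩ := exists_norm_sub_heav_mul_eq q (gaussianPacket v q κ) ht
  have hS : MeasurableSet {x : ℝ | x * q ≤ 0} := measurableSet_le (by fun_prop) (by fun_prop)
  have hmem : ∀ x : ℝ, u * |x| ∈ {x | x * q ≤ 0} := fun x => by
    change u * |x| * q ≤ 0
    rw [mul_right_comm]
    exact mul_nonpos_of_nonpos_of_nonneg huq (abs_nonneg x)
  have hnorm' : ∀ x, ‖gaussianPacket v q κ (t * |x|) -
      (heav (t * q) : ℂ) * (gaussianPacket v q κ x + gaussianPacket v q κ (-x))‖ =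
        ‖{x | x * q ≤ 0}.indicator (gaussianPacket v q κ) (u * |x|)‖ := fun x => by
    rw [hnorm, Set.indicator_of_mem (hmem x)]
  rw [eLpNorm_congr_norm_ae (.of_forall hnorm'), ENNReal.ofReal_mul zero_le_two,
    ENNReal.ofReal_ofNat]
  refine (eLpNorm_comp_mul_abs_le
    ((continuous_gaussianPacket q κ v).aestronglyMeasurable.indicator hS) one_le_two hu).trans ?_
  gcongr
  exact eLpNorm_indicator_gaussianPacket_le q κ hv fun x hx => hx

lemma eLpNorm_sphericalTransform_ft_gaussianPacket_sub_le (hv : 0 < v) (hs : |s| = 1) {ε : ℝ}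
    (hε : |ε| = 1) (hεκ : 0 ≤ ε * κ) :
    eLpNorm (fun x => sphericalTransform s (ft (gaussianPacket v q κ)) x -
        gaussianPacket v q κ (-(s * ε) * |x|)) 2 ≤
      ENNReal.ofReal (4 * Real.exp (-(v * κ ^ 2))) := by
  have hw : 0 < (4 * v)⁻¹ := by positivity
  have hmem : ∀ k ∈ {k : ℝ | ε * k ≤ 0}, k * κ ≤ 0 := fun k hk => by
    have hεε : ε * ε = 1 := by rw [← abs_mul_abs_self, hε, one_mul]
    calc k * κ = (ε * k) * (ε * κ) := by linear_combination (-(k * κ)) * hεε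
      _ ≤ 0 := mul_nonpos_of_nonpos_of_nonneg hk hεκ
  have hdirect := eLpNorm_sphericalTransform_sub_ft_le (integrable_gaussianPacket κ (-q) hw)
    (memLp_gaussianPacket κ (-q) hw) hs hε
  simp only [← ft_gaussianPacket q κ hv, ft_ft_gaussianPacket q κ hv, ← neg_mul (s * ε)] at hdirect
  refine hdirect.trans ?_
  rw [ENNReal.ofReal_mul zero_le_four, ENNReal.ofReal_ofNat, ft_gaussianPacket q κ hv]
  gcongr
  refine (eLpNorm_indicator_gaussianPacket_le κ (-q) hw hmem).trans_eq ?_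
  congr 3
  field

lemma integrable_sub_mul_ft_gaussianPacket (hv : 0 < v) {ρ : ℝ → ℂ} (hρ : Continuous ρ)
    (hρ1 : ∀ k, ‖ρ k‖ ≤ 1) (c : ℂ) :
    Integrable fun k => (ρ k - c) * ft (gaussianPacket v q κ) k := by
  rw [ft_gaussianPacket q κ hv]
  refine (integrable_gaussianPacket κ (-q) (by positivity)).bdd_mul (c := 1 + ‖c‖)
    (hρ.sub continuous_const).aestronglyMeasurable (.of_forall fun k => ?_)
  exact (norm_sub_le _ _).trans (by gcongr; exact hρ1 k)

lemma eLpNorm_sphericalTransform_sub_mul_le (hv : 0 < v) (hs : |s| = 1) {L : ℝ≥0} {ρ : ℝ → ℂ}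
    (hL : LipschitzWith L ρ) (hρ : ∀ k, ‖ρ k‖ ≤ 1) :
    eLpNorm (sphericalTransform s fun k => (ρ k - ρ κ) * ft (gaussianPacket v q κ) k) 2 ≤
      ENNReal.ofReal (3 * min (L / √v) 4) := by
  have hfreeze : eLpNorm (fun k => (ρ k - ρ κ) * ft (gaussianPacket v q κ) k) 2 ≤
      ENNReal.ofReal (min (L * √(4 * v)⁻¹) 2) := by
    rw [ft_gaussianPacket q κ hv]
    exact eLpNorm_sub_mul_gaussianPacket_le κ (-q) (by positivity) hL hρ
  have hint := integrable_sub_mul_ft_gaussianPacket q κ hv hL.continuous hρ (ρ κ)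
  have hsqrt : √(4 * v)⁻¹ = (√v)⁻¹ / 2 := by
    rw [Real.sqrt_inv, Real.sqrt_mul zero_le_four, show (4 : ℝ) = 2 ^ 2 by norm_num,
      Real.sqrt_sq zero_le_two]
    field
  have hmin : 6 * min (L * √(4 * v)⁻¹) 2 = 3 * min (L / √v) 4 := by
    rw [hsqrt, mul_min_of_nonneg _ _ (by norm_num), mul_min_of_nonneg _ _ (by norm_num)]
    ring_nf
  refine (eLpNorm_sphericalTransform_le hint
    ⟨hint.aestronglyMeasurable, hfreeze.trans_lt ENNReal.ofReal_lt_top⟩ hs).trans ?_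
  rw [← hmin, ENNReal.ofReal_mul (by norm_num), ENNReal.ofReal_ofNat]
  gcongr

lemma eLpNorm_const_smul_le_of_norm_le_one {X 𝕜 E : Type*} [MeasurableSpace X]
    {μ : Measure X} [NormedField 𝕜] [NormedAddCommGroup E] [NormedSpace 𝕜 E] {c : 𝕜}
    (hc : ‖c‖ ≤ 1) (f : X → E) (p : ℝ≥0∞) : eLpNorm (c • f) p μ ≤ eLpNorm f p μ := by
  rw [eLpNorm_const_smul]
  exact mul_le_of_le_one_left' (by rw [← ofReal_norm]; exact ENNReal.ofReal_le_one.2 hc)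

lemma eLpNorm_add_smul_add_smul_le {X 𝕜 E : Type*} [MeasurableSpace X] {μ : Measure X}
    [NormedField 𝕜] [NormedAddCommGroup E] [NormedSpace 𝕜 E] {f g h : X → E} {c : 𝕜}
    {p : ℝ≥0∞} (hc : ‖c‖ ≤ 1) (hf : AEStronglyMeasurable f μ) (hg : AEStronglyMeasurable g μ)
    (hh : AEStronglyMeasurable h μ) (hp : 1 ≤ p) :
    eLpNorm (f + c • g + c • h) p μ ≤ eLpNorm f p μ + eLpNorm g p μ + eLpNorm h p μ :=
  (eLpNorm_add_le (hf.add (hg.const_smul c)) (hh.const_smul c) hp).trans <| add_le_add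
    ((eLpNorm_add_le hf (hg.const_smul c) hp).trans <| add_le_add le_rfl <|
      eLpNorm_const_smul_le_of_norm_le_one hc g p)
    (eLpNorm_const_smul_le_of_norm_le_one hc h p)

theorem eLpNorm_sphericalTransform_mul_ft_gaussianPacket_sub_le (hv : 0 < v) (hs : |s| = 1)
    {L : ℝ≥0} {ρ : ℝ → ℂ} (hL : LipschitzWith L ρ) (hρ : ∀ k, ‖ρ k‖ ≤ 1) :
    eLpNorm (fun x => sphericalTransform s (fun k => ρ k * ft (gaussianPacket v q κ) k) x -
        (heav (-(s * q * κ)) : ℂ) * ρ κ * (gaussianPacket v q κ x + gaussianPacket v q κ (-x))) 2 ≤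
      ENNReal.ofReal (3 * min (L / √v) 4 + 4 * Real.exp (-(v * κ ^ 2)) +
        2 * Real.exp (-(q ^ 2 / (4 * v)))) := by
  obtain ⟨ε, hε, hεκ, hheav⟩ := exists_abs_eq_one_mul_nonneg_heav_mul κ (-(s * q))
  have hsε : |(-(s * ε))| = 1 := by rw [abs_neg, abs_mul, hs, hε, one_mul]
  have hGint : Integrable (ft (gaussianPacket v q κ)) := by
    rw [ft_gaussianPacket q κ hv]
    exact integrable_gaussianPacket κ (-q) (by positivity)
  have hGcont := continuous_sphericalTransform hGint s
  have hDint := integrable_sub_mul_ft_gaussianPacket q κ hv hL.continuous hρ (ρ κ)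
  have hPcont := continuous_gaussianPacket q κ v
  set P := gaussianPacket v q κ
  set freezing := sphericalTransform s fun k => (ρ k - ρ κ) * ft P k
  set direction := fun x => sphericalTransform s (ft P) x - P (-(s * ε) * |x|)
  set reflection := fun x => P (-(s * ε) * |x|) - (heav (-(s * ε) * q) : ℂ) * (P x + P (-x))
  have hdecomp : (fun x => sphericalTransform s (fun k => ρ k * ft P k) x -
      (heav (-(s * q * κ)) : ℂ) * ρ κ * (P x + P (-x))) =
        freezing + ρ κ • direction + ρ κ • reflection := by
    funext x
    have hsplit := sphericalTransform_mul_eq_add hDint hGint s x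
    have hsign : heav (-(s * q * κ)) = heav (-(s * ε) * q) := by
      convert hheav using 2 <;> ring
    simp only [hsplit, hsign, freezing, direction, reflection, Pi.add_apply, Pi.smul_apply,
      smul_eq_mul]
    ring
  have hfm : AEStronglyMeasurable freezing :=
    (continuous_sphericalTransform hDint s).aestronglyMeasurable
  have hdm : AEStronglyMeasurable direction := Continuous.aestronglyMeasurable (by fun_prop)
  have hrm : AEStronglyMeasurable reflection := Continuous.aestronglyMeasurable (by fun_prop)
  rw [hdecomp, ENNReal.ofReal_add (by positivity) (by positivity),
    ENNReal.ofReal_add (by positivity) (by positivity)]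
  exact (eLpNorm_add_smul_add_smul_le (hρ κ) hfm hdm hrm one_le_two).trans <| add_le_add
    (add_le_add (eLpNorm_sphericalTransform_sub_mul_le q κ hv hs hL hρ)
      (eLpNorm_sphericalTransform_ft_gaussianPacket_sub_le q κ hv hs hε hεκ))
    (eLpNorm_gaussianPacket_mul_abs_sub_le q κ hv hsε)

end PacketScattering

section DeltaInteraction

lemma one_le_norm_one_add_mul_I (r : ℝ) : 1 ≤ ‖1 + (r : ℂ) * I‖ := by
  simpa using abs_re_le_norm (1 + (r : ℂ) * I)

lemma norm_inv_one_add_mul_I_le_one (r : ℝ) : ‖(1 + (r : ℂ) * I)⁻¹‖ ≤ 1 := by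
  rw [norm_inv]
  exact inv_le_one_of_one_le₀ (one_le_norm_one_add_mul_I r)

lemma lipschitzWith_inv_one_add_mul_I : LipschitzWith 1 fun r : ℝ => (1 + (r : ℂ) * I)⁻¹ := by
  have hne : ∀ r : ℝ, 1 + (r : ℂ) * I ≠ 0 := fun r =>
    norm_pos_iff.1 (one_pos.trans_le (one_le_norm_one_add_mul_I r))
  refine LipschitzWith.of_dist_le_mul fun r t => ?_
  have hdist : dist (1 + (r : ℂ) * I) (1 + (t : ℂ) * I) = dist r t := by
    rw [dist_add_left, dist_eq_norm, ← sub_mul, norm_mul, norm_I, mul_one, ← ofReal_sub, norm_real,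
      ← dist_eq_norm]
  rw [dist_inv_inv₀ (hne r) (hne t), hdist, NNReal.coe_one, one_mul]
  exact div_le_self dist_nonneg (one_le_mul_of_one_le_of_one_le (one_le_norm_one_add_mul_I r)
    (one_le_norm_one_add_mul_I t))

lemma Rpm_eq_neg_inv (ℏ m α s k : ℝ) :
    Rpm ℏ m α s k = -(1 + ((s * ℏ ^ 2 / (m * α) * |k| : ℝ) : ℂ) * I)⁻¹ := by
  rw [Rpm]
  push_cast
  ring_nf

lemma norm_Rpm_le_one (ℏ m α s k : ℝ) : ‖Rpm ℏ m α s k‖ ≤ 1 := by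
  rw [Rpm_eq_neg_inv, norm_neg]
  exact norm_inv_one_add_mul_I_le_one _

lemma lipschitzWith_Rpm (ℏ m α s : ℝ) : LipschitzWith ‖s * ℏ ^ 2 / (m * α)‖₊ (Rpm ℏ m α s) := by
  have harg : LipschitzWith ‖s * ℏ ^ 2 / (m * α)‖₊ fun k => s * ℏ ^ 2 / (m * α) * |k| :=
    LipschitzWith.of_dist_le_mul fun k l => by
      rw [Real.dist_eq, ← mul_sub, abs_mul, Real.dist_eq]
      exact mul_le_mul_of_nonneg_left (abs_abs_sub_abs_le k l) (abs_nonneg _)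
  rw [funext (Rpm_eq_neg_inv ℏ m α s)]
  exact ((lipschitzWith_inv_one_add_mul_I.comp harg).weaken (one_mul _).le).neg

lemma neg_Rpm_div_eq {ℏ : ℝ} (hℏ : 0 < ℏ) (m α s p : ℝ) :
    -Rpm ℏ m α s (p / ℏ) =
      (1 + (s : ℂ) * 2 * I * ((|p| : ℝ) : ℂ) / ((m : ℂ) * ((2 * α / ℏ : ℝ) : ℂ)))⁻¹ := by
  have hℏ' : (ℏ : ℂ) ≠ 0 := ofReal_ne_zero.2 hℏ.ne'
  rw [Rpm, neg_neg, abs_div, abs_of_pos hℏ]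
  push_cast
  congr 2
  field

lemma waveOpQ_eq_add_sphericalTransform (ℏ m α s : ℝ) (ψ : ℝ → ℂ) (x : ℝ) :
    waveOpQ ℏ m α s ψ x = ψ x + sphericalTransform s (fun k => Rpm ℏ m α s k * ft ψ k) x := by
  simp only [waveOpQ, sphericalTransform, mul_assoc]

lemma waveOpQ_const_mul (ℏ m α s : ℝ) (c : ℂ) (ψ : ℝ → ℂ) (x : ℝ) :
    waveOpQ ℏ m α s (fun y => c * ψ y) x = c * waveOpQ ℏ m α s ψ x := by
  simp only [waveOpQ_eq_add_sphericalTransform, ft_const_mul, mul_left_comm _ c,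
    sphericalTransform_const_mul, mul_add]

lemma coh_eq_mul_gaussianPacket {ℏ σ₀ : ℝ} (hℏ : 0 < ℏ) (hσ₀ : 0 < σ₀) (q p x : ℝ) :
    coh ℏ (σ₀ : ℂ) (σ₀ : ℂ)⁻¹ q p x =
      cexp (((-(p * q / (2 * ℏ)) : ℝ) : ℂ) * I) * gaussianPacket (ℏ * σ₀ ^ 2) q (p / ℏ) x := by
  have hℏ' : (ℏ : ℂ) ≠ 0 := ofReal_ne_zero.2 hℏ.ne'
  have hσ₀' : (σ₀ : ℂ) ≠ 0 := ofReal_ne_zero.2 hσ₀.ne'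
  have hconst : ((2 * Real.pi * ℏ : ℝ) : ℂ) ^ (-(1 / 4 : ℂ)) * (σ₀ : ℂ) ^ (-(1 / 2 : ℂ)) =
      (((2 * Real.pi * (ℏ * σ₀ ^ 2)) ^ (-(1 / 4) : ℝ) : ℝ) : ℂ) := by
    have hreal : (2 * Real.pi * (ℏ * σ₀ ^ 2)) ^ (-(1 / 4) : ℝ) =
        (2 * Real.pi * ℏ) ^ (-(1 / 4) : ℝ) * σ₀ ^ (-(1 / 2) : ℝ) := by
      rw [← mul_assoc, Real.mul_rpow (by positivity) (by positivity), ← Real.rpow_natCast σ₀,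
        ← Real.rpow_mul hσ₀.le]
      norm_num
    rw [hreal, ofReal_mul (_ ^ _), ofReal_cpow (by positivity), ofReal_cpow hσ₀.le]
    norm_num
  rw [coh, gaussianPacket, hconst, mul_left_comm (cexp _), ← Complex.exp_add]
  congr 2
  push_cast
  field

lemma coh_neg_neg (ℏ : ℝ) (σ σ' : ℂ) (q p x : ℝ) :
    coh ℏ σ σ' (-q) (-p) x = coh ℏ σ σ' q p (-x) := by
  simp only [coh]
  push_cast
  ring_nf

lemma norm_waveOpQ_coh_sub_eq {ℏ σ₀ : ℝ} (hℏ : 0 < ℏ) (hσ₀ : 0 < σ₀) (m α s q p x : ℝ) (c : ℂ) :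
    ‖waveOpQ ℏ m α s (coh ℏ (σ₀ : ℂ) (σ₀ : ℂ)⁻¹ q p) x -
        (coh ℏ (σ₀ : ℂ) (σ₀ : ℂ)⁻¹ q p x - c * (-Rpm ℏ m α s (p / ℏ)) *
          (coh ℏ (σ₀ : ℂ) (σ₀ : ℂ)⁻¹ q p x + coh ℏ (σ₀ : ℂ) (σ₀ : ℂ)⁻¹ (-q) (-p) x))‖ =
      ‖sphericalTransform s
          (fun k => Rpm ℏ m α s k * ft (gaussianPacket (ℏ * σ₀ ^ 2) q (p / ℏ)) k) x -
        c * Rpm ℏ m α s (p / ℏ) * (gaussianPacket (ℏ * σ₀ ^ 2) q (p / ℏ) x +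
          gaussianPacket (ℏ * σ₀ ^ 2) q (p / ℏ) (-x))‖ := by
  simp only [coh_neg_neg, funext (coh_eq_mul_gaussianPacket hℏ hσ₀ q p), waveOpQ_const_mul]
  simp only [waveOpQ_eq_add_sphericalTransform]
  rw [← one_mul ‖sphericalTransform _ _ _ - _‖, ← norm_exp_ofReal_mul_I (-(p * q / (2 * ℏ))),
    ← norm_mul]
  congr 1
  ring

lemma sq_div_div_sqrt_eq_rpow {ℏ Y σ : ℝ} (hℏ : 0 < ℏ) (hY : 0 < Y) (hσ : 0 < σ) :
    ℏ ^ 2 / Y / √(ℏ * σ ^ 2) = (ℏ / (Y * σ) ^ (2 / 3 : ℝ)) ^ (3 / 2 : ℝ) := by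
  have hpow : ℏ ^ (3 / 2 : ℝ) = ℏ ^ 2 / √ℏ := by
    rw [Real.sqrt_eq_rpow, ← Real.rpow_natCast, ← Real.rpow_sub hℏ]
    norm_num
  rw [Real.div_rpow hℏ.le (by positivity), ← Real.rpow_mul (by positivity), hpow,
    Real.sqrt_mul hℏ.le, Real.sqrt_sq hσ.le]
  norm_num
  field

lemma min_le_mul_add_exp {a u : ℝ} (ha : 0 ≤ a) (hu : 0 ≤ u) :
    min a 4 ≤ 8 * (a * u + Real.exp (-(1 / 2) * u ^ 2)) := by
  have hexp := Real.exp_pos (-(1 / 2) * u ^ 2)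
  rcases le_total 1 u with h | h
  · nlinarith [min_le_left a 4, mul_le_mul_of_nonneg_left h ha]
  · have hhalf : 1 / 2 ≤ Real.exp (-(1 / 2) * u ^ 2) := by
      nlinarith [Real.add_one_le_exp (-(1 / 2) * u ^ 2)]
    nlinarith [min_le_right a 4, mul_nonneg ha hu]

lemma min_rpow_le_rpow_sub_add_exp {x : ℝ} (hx : 0 < x) (a b : ℝ) :
    min (x ^ a) 4 ≤ 8 * (x ^ (a - b) + Real.exp (-(1 / 2) * (x⁻¹) ^ (2 * b))) := by
  have h := min_le_mul_add_exp (Real.rpow_nonneg hx.le a) (Real.rpow_nonneg hx.le (-b))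
  rwa [← Real.rpow_add hx, ← sub_eq_add_neg, Real.rpow_neg_eq_inv_rpow,
    ← Real.rpow_mul_natCast (inv_nonneg.2 hx.le), Nat.cast_ofNat, mul_comm b] at h

theorem eLpNorm_waveOpQ_coh_sub_le {ℏ m σ₀ α s : ℝ} (hℏ : 0 < ℏ) (hm : 0 < m) (hσ₀ : 0 < σ₀)
    (hα : α ≠ 0) (hs : |s| = 1) (q p : ℝ) :
    eLpNorm (fun x : ℝ =>
        waveOpQ ℏ m α s (coh ℏ (σ₀ : ℂ) (σ₀ : ℂ)⁻¹ q p) x -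
        (coh ℏ (σ₀ : ℂ) (σ₀ : ℂ)⁻¹ q p x -
          (heav (-(s * q * p)) : ℂ) *
            (1 + (s : ℂ) * 2 * I * ((|p| : ℝ) : ℂ) / ((m : ℂ) * ((2 * α / ℏ : ℝ) : ℂ)))⁻¹ *
            (coh ℏ (σ₀ : ℂ) (σ₀ : ℂ)⁻¹ q p x + coh ℏ (σ₀ : ℂ) (σ₀ : ℂ)⁻¹ (-q) (-p) x))) 2 ≤
      ENNReal.ofReal (3 * min ((ℏ / (m * |α| * σ₀) ^ (2 / 3 : ℝ)) ^ (3 / 2 : ℝ)) 4 +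
        4 * Real.exp (-(σ₀ ^ 2 * p ^ 2 / ℏ)) +
        2 * Real.exp (-(q ^ 2 / (4 * ℏ * σ₀ ^ 2)))) := by
  have hsign : heav (-(s * q * p)) = heav (-(s * q * (p / ℏ))) := by
    simp only [heav, ← mul_div_assoc, ← neg_div, div_pos_iff_of_pos_right hℏ]
  have hrate : ‖s * ℏ ^ 2 / (m * α)‖ / √(ℏ * σ₀ ^ 2) =
      (ℏ / (m * |α| * σ₀) ^ (2 / 3 : ℝ)) ^ (3 / 2 : ℝ) := by
    rw [← sq_div_div_sqrt_eq_rpow hℏ (by positivity) hσ₀, Real.norm_eq_abs, abs_div, abs_mul,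
      abs_mul, hs, one_mul, abs_of_pos hm, abs_of_nonneg (sq_nonneg ℏ)]
  have hmomentum : ℏ * σ₀ ^ 2 * (p / ℏ) ^ 2 = σ₀ ^ 2 * p ^ 2 / ℏ := by field
  have hbound := eLpNorm_sphericalTransform_mul_ft_gaussianPacket_sub_le q (p / ℏ)
    (by positivity : 0 < ℏ * σ₀ ^ 2) hs (lipschitzWith_Rpm ℏ m α s) (norm_Rpm_le_one ℏ m α s)
  rw [coe_nnnorm, hrate, hmomentum, ← mul_assoc] at hbound
  simp only [← neg_Rpm_div_eq hℏ, hsign]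
  rwa [eLpNorm_congr_norm_ae (.of_forall fun x =>
    norm_waveOpQ_coh_sub_eq hℏ hσ₀ m α s q p x _)]

end DeltaInteraction

/-- Theorem 2, Eq. (t2_1): semiclassical approximation of the quantum wave
operators `Ω_α^±` applied to a coherent state by the classical wave operators `W_β^±`. -/
theorem statement2 :
    ∃ C : ℝ, 0 < C ∧
      ∀ (ℏ m σ₀ α : ℝ), 0 < ℏ → 0 < m → 0 < σ₀ → α ≠ 0 →
      ∀ lam : ℝ, 0 < lam →
      ∀ q p : ℝ, q * p ≠ 0 →
      ∀ s : ℝ, (s = 1 ∨ s = -1) →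
      eLpNorm (fun x : ℝ =>
          waveOpQ ℏ m α s (fun y => coh ℏ (σ₀ : ℂ) ((σ₀ : ℂ))⁻¹ q p y) x -
          (coh ℏ (σ₀ : ℂ) ((σ₀ : ℂ))⁻¹ q p x -
            ((heav (-(s * q * p)) : ℝ) : ℂ) *
              (1 + (s : ℂ) * 2 * Complex.I * ((|p| : ℝ) : ℂ) /
                ((m : ℂ) * ((2 * α / ℏ : ℝ) : ℂ)))⁻¹ *
              (coh ℏ (σ₀ : ℂ) ((σ₀ : ℂ))⁻¹ q p x + coh ℏ (σ₀ : ℂ) ((σ₀ : ℂ))⁻¹ (-q) (-p) x)))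
        2 volume
      ≤ ENNReal.ofReal (C * (
          (ℏ / (m * |α| * σ₀) ^ ((2 : ℝ) / 3)) ^ ((3 : ℝ) / 2 - lam)
        + Real.exp (-(1 / 2) * ((m * |α| * σ₀) ^ ((2 : ℝ) / 3) / ℏ) ^ (2 * lam))
        + Real.exp (-(σ₀ ^ 2 * p ^ 2 / ℏ))
        + Real.exp (-(q ^ 2 / (4 * ℏ * σ₀ ^ 2))))) := by
  refine ⟨24, by norm_num, fun ℏ m σ₀ α hℏ hm hσ₀ hα lam _ q p _ s hs => ?_⟩
  have hs1 : |s| = 1 := by rcases hs with rfl | rfl <;> simp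
  refine (eLpNorm_waveOpQ_coh_sub_le hℏ hm hσ₀ hα hs1 q p).trans (ENNReal.ofReal_le_ofReal ?_)
  have hrate := min_rpow_le_rpow_sub_add_exp
    (by positivity : 0 < ℏ / (m * |α| * σ₀) ^ (2 / 3 : ℝ)) (3 / 2) lam
  rw [inv_div] at hrate
  have hmomentum := Real.exp_nonneg (-(σ₀ ^ 2 * p ^ 2 / ℏ))
  have hposition := Real.exp_nonneg (-(q ^ 2 / (4 * ℏ * σ₀ ^ 2)))
  linarith
end

section
/- Let ℏ>0, m>0, σ₀>0, α∈ℝ\{0}, β := 2α/ℏ. There exists a constant C>0, independent of all parameters, such that for every λ>0 and every ξ=(q,p)∈ℝ² with q·p≠0: ‖ S_αψ^ℏ_{σ₀,ξ} − (S^cl_βφ^ℏ_{σ₀,(·)})(ξ) ‖_{L²(ℝ,dx)} ≤ C·[ (ℏ/(m|α|σ₀)^{2/3})^{3/2−λ} + exp(−(1/2)·((m|α|σ₀)^{2/3}/ℏ)^{2λ}) + exp(−σ₀²p²/ℏ) + exp(−q²/(8ℏσ₀²)) + exp(−m|α||q|/(8ℏ²)) ], where S_α := (Ω_α^+)^*∘Ω_α^−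 (Hilbert-space adjoint in L²(ℝ)) and (S^cl_βφ^ℏ_{σ₀,(·)})(ξ)(x) = ψ^ℏ_{σ₀,ξ}(x) − (1 − 2i|p|/(mβ))⁻¹·(ψ^ℏ_{σ₀,ξ}(x)+ψ^ℏ_{σ₀,−ξ}(x)). -/
open MeasureTheory Complex Filter

/-!
Let `a = ℏ² / (m α)`. The wave operators fix odd functions and send an even function to
`sign · w + a w'`, where `w` is odd and its Fourier transform is that of the given function times
`sign k (s + i a |k|)⁻¹`. In an inner product of two such functions the cross terms add up to the
total derivative `a (conj w₁ w₂)'` weighted by `sign`, and integrate to zero because `w` vanishes at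
the origin. Hence the wave operators are isometric, and since `Ω⁻ = Ω⁺ S` with `S` acting on even
functions by an explicit Fourier multiplier, the scattering operator is `S`.

The classical scattering operator freezes the symbol of `S` at the wave number `p / ℏ`. The symbol
is bounded and `|a|`-Lipschitz, and the modulus squared of the Fourier transform of the coherent
state is a Gaussian density centred at `p / ℏ`, so the error is at most `|a|` times its standard
deviation up to a constant, which is `(ℏ / (m |α| σ₀)^(2/3))^(3/2)`. When this quantity exceeds one,
the trivial bound is controlled by the first exponential term of the claim.
-/

namespace DeltaScattering

open FourierTransform Topology ProbabilityTheory
open scoped SchwartzMap InnerProductSpace NNReal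

section Reflection

variable {V F : Type*} [MeasurableSpace V] [AddGroup V] [MeasurableNeg V] {μ : Measure V}
  [μ.IsNegInvariant] [NormedAddCommGroup F]

lemma memLp_comp_neg {f : V → F} {p : ENNReal} (hf : MemLp f p μ) : MemLp (fun v ↦ f (-v)) p μ :=
  hf.comp_measurePreserving (Measure.measurePreserving_neg μ)

lemma integral_eq_zero_of_odd [NormedSpace ℝ F] {f : V → F} (hf : f.Odd) : ∫ v, f v ∂μ = 0 := by
  have : IsAddTorsionFree F := .of_isTorsionFree ℝ F
  rw [← self_eq_neg, ← integral_neg, ← integral_neg_eq_self]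
  exact integral_congr_ae (.of_forall hf)

end Reflection

section Pairing

variable {V F : Type*} [MeasurableSpace V] {μ : Measure V}
  [NormedAddCommGroup F] [InnerProductSpace ℂ F]

lemma integrable_inner_of_memLp {f g : V → F} (hf : MemLp f 2 μ) (hg : MemLp g 2 μ) :
    Integrable (fun v ↦ ⟪f v, g v⟫_ℂ) μ := by
  refine (L2.integrable_inner (𝕜 := ℂ) (hf.toLp f) (hg.toLp g)).congr ?_
  filter_upwards [hf.coeFn_toLp, hg.coeFn_toLp] with v hfv hgv
  rw [hfv, hgv]

lemma inner_Lp_eq_integral {u v : Lp F 2 μ}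
    {f g : V → F} (hu : u =ᵐ[μ] f) (hv : v =ᵐ[μ] g) : ⟪u, v⟫_ℂ = ∫ x, ⟪f x, g x⟫_ℂ ∂μ := by
  rw [L2.inner_def]
  refine integral_congr_ae ?_
  filter_upwards [hu, hv] with x hux hvx
  rw [hux, hvx]

variable [AddGroup V] [MeasurableNeg V] [μ.IsNegInvariant]

lemma integral_inner_odd_add_even {o₁ o₂ e₁ e₂ : V → F}
    (ho₁ : o₁.Odd) (ho₂ : o₂.Odd) (he₁ : e₁.Even) (he₂ : e₂.Even)
    (mo₁ : MemLp o₁ 2 μ) (mo₂ : MemLp o₂ 2 μ) (me₁ : MemLp e₁ 2 μ) (me₂ : MemLp e₂ 2 μ) :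
    ∫ v, ⟪o₁ v + e₁ v, o₂ v + e₂ v⟫_ℂ ∂μ = ∫ v, ⟪o₁ v, o₂ v⟫_ℂ ∂μ + ∫ v, ⟪e₁ v, e₂ v⟫_ℂ ∂μ := by
  have cross_odd : Function.Odd fun v ↦ ⟪o₁ v, e₂ v⟫_ℂ + ⟪e₁ v, o₂ v⟫_ℂ := fun v ↦ by
    simp only [ho₁ v, ho₂ v, he₁ v, he₂ v, inner_neg_left, inner_neg_right, neg_add]
  have oo := integrable_inner_of_memLp mo₁ mo₂
  have ee := integrable_inner_of_memLp me₁ me₂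
  have diag_int : Integrable (fun v ↦ ⟪o₁ v, o₂ v⟫_ℂ + ⟪e₁ v, e₂ v⟫_ℂ) μ := oo.add ee
  have cross_int : Integrable (fun v ↦ ⟪o₁ v, e₂ v⟫_ℂ + ⟪e₁ v, o₂ v⟫_ℂ) μ :=
    (integrable_inner_of_memLp mo₁ me₂).add (integrable_inner_of_memLp me₁ mo₂)
  calc ∫ v, ⟪o₁ v + e₁ v, o₂ v + e₂ v⟫_ℂ ∂μ
      = ∫ v, (⟪o₁ v, o₂ v⟫_ℂ + ⟪e₁ v, e₂ v⟫_ℂ) + (⟪o₁ v, e₂ v⟫_ℂ + ⟪e₁ v, o₂ v⟫_ℂ) ∂μ := by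
        congr with v
        simp only [inner_add_left, inner_add_right]
        ring
    _ = ∫ v, ⟪o₁ v, o₂ v⟫_ℂ ∂μ + ∫ v, ⟪e₁ v, e₂ v⟫_ℂ ∂μ := by
        rw [integral_add diag_int cross_int, integral_eq_zero_of_odd cross_odd, add_zero,
          integral_add oo ee]

end Pairing

section Plancherel

variable {V F : Type*} [NormedAddCommGroup V] [InnerProductSpace ℝ V] [FiniteDimensional ℝ V]
  [MeasurableSpace V] [BorelSpace V] [NormedAddCommGroup F] [InnerProductSpace ℂ F]

lemma continuous_fourier {f : V → F} (hf : Integrable f) : Continuous (𝓕 f) :=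
  VectorFourier.fourierIntegral_continuous Real.continuous_fourierChar
    (L := innerₗ V) continuous_inner hf

lemma fourier_add_of_integrable {f g : V → F} (hf : Integrable f) (hg : Integrable g) :
    𝓕 (f + g) = 𝓕 f + 𝓕 g :=
  VectorFourier.fourierIntegral_add Real.continuous_fourierChar (L := innerₗ V) continuous_inner
    hf hg

lemma fourier_const_smul (c : ℂ) (f : V → F) : 𝓕 (c • f) = c • 𝓕 f :=
  VectorFourier.fourierIntegral_const_smul _ _ _ _ _

lemma tendsto_fourierInv_cocompact (f : ℝ → F) : Tendsto (𝓕⁻ f) (cocompact ℝ) (𝓝 0) := by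
  rw [Real.fourierInv_eq_fourier_comp_neg]
  exact Real.zero_at_infty_fourier _

lemma odd_fourierInv {f : V → F} (hf : f.Odd) : (𝓕⁻ f).Odd := fun v ↦ by
  rw [Real.fourierInv_eq_fourier_neg, neg_neg, Real.fourierInv_eq_fourier_comp_neg, funext hf]
  simp only [Real.fourier_eq, smul_neg, integral_neg, neg_neg]

lemma even_fourierInv {f : V → F} (hf : f.Even) : (𝓕⁻ f).Even := fun v ↦ by
  rw [Real.fourierInv_eq_fourier_neg, neg_neg, Real.fourierInv_eq_fourier_comp_neg, funext hf]

lemma hasDerivAt_fourierInv {f : ℝ → F} (hf : Integrable f) (hf' : Integrable fun ξ ↦ ξ • f ξ)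
    (x : ℝ) :
    HasDerivAt (𝓕⁻ f) (𝓕⁻ (fun ξ : ℝ ↦ (2 * Real.pi * I * ξ) • f ξ) x) x := by
  have hf'_neg : Integrable fun ξ ↦ ξ • f (-ξ) := by simpa using hf'.comp_neg.neg
  simpa [Real.fourierInv_eq_fourier_comp_neg] using Real.hasDerivAt_fourier hf.comp_neg hf'_neg x

variable [CompleteSpace F]

lemma fourier_toLp_ae_eq {f : V → F} (hf : Integrable f) (hf2 : MemLp f 2) :
    (𝓕 (hf2.toLp f) : Lp F 2 (volume : Measure V)) =ᵐ[volume] 𝓕 f := by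
  refine ae_eq_of_integral_contDiff_smul_eq ((Lp.memLp _).locallyIntegrable (by norm_num))
    (continuous_fourier hf).locallyIntegrable fun g hg hgs ↦ ?_
  let s : 𝓢(V, ℂ) :=
    (hgs.comp_left (g := ((↑) : ℝ → ℂ)) ofReal_zero).toSchwartzMap (ofRealCLM.contDiff.comp hg)
  have hs (u : V → F) : ∫ x, g x • u x = ∫ x, s x • u x := rfl
  calc ∫ x, g x • (𝓕 (hf2.toLp f) : Lp F 2 (volume : Measure V)) x
      = ∫ x, 𝓕 s x • hf2.toLp f x := by
        simpa only [hs, TemperedDistribution.fourier_apply, Lp.toTemperedDistribution_apply]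
          using DFunLike.congr_fun (Lp.fourier_toTemperedDistribution_eq (hf2.toLp f)).symm s
    _ = ∫ x, 𝓕 (s : V → ℂ) x • f x :=
      integral_congr_ae (hf2.coeFn_toLp.mono fun x hx ↦ by
        simp only [hx, SchwartzMap.fourier_coe])
    _ = ∫ x, g x • 𝓕 f x := by
      simpa only [hs, flip_innerₗ] using! VectorFourier.integral_fourierIntegral_smul_eq_flip
        (L := innerₗ V) Real.continuous_fourierChar continuous_inner s.integrable hf

lemma memLp_fourier {f : V → F} (hf : Integrable f) (hf2 : MemLp f 2) : MemLp (𝓕 f) 2 :=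
  (memLp_congr_ae (fourier_toLp_ae_eq hf hf2)).1 (Lp.memLp _)

lemma integral_inner_fourier_eq {f g : V → F} (hf : Integrable f) (hf2 : MemLp f 2)
    (hg : Integrable g) (hg2 : MemLp g 2) :
    ∫ v, ⟪𝓕 f v, 𝓕 g v⟫_ℂ = ∫ v, ⟪f v, g v⟫_ℂ := by
  rw [← inner_Lp_eq_integral (fourier_toLp_ae_eq hf hf2) (fourier_toLp_ae_eq hg hg2),
    Lp.inner_fourier_eq, inner_Lp_eq_integral hf2.coeFn_toLp hg2.coeFn_toLp]

lemma memLp_fourierInv {f : V → F} (hf : Integrable f) (hf2 : MemLp f 2) : MemLp (𝓕⁻ f) 2 := by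
  rw [Real.fourierInv_eq_fourier_comp_neg]
  exact memLp_fourier hf.comp_neg (memLp_comp_neg hf2)

lemma integral_inner_fourierInv_eq {f g : V → F} (hf : Integrable f) (hf2 : MemLp f 2)
    (hg : Integrable g) (hg2 : MemLp g 2) :
    ∫ v, ⟪𝓕⁻ f v, 𝓕⁻ g v⟫_ℂ = ∫ v, ⟪f v, g v⟫_ℂ := by
  rw [Real.fourierInv_eq_fourier_comp_neg, Real.fourierInv_eq_fourier_comp_neg,
    integral_inner_fourier_eq hf.comp_neg (memLp_comp_neg hf2) hg.comp_neg (memLp_comp_neg hg2)]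
  exact integral_neg_eq_self (fun v ↦ ⟪f v, g v⟫_ℂ) volume

lemma eLpNorm_fourier_Lp (u : Lp F 2 (volume : Measure V)) :
    eLpNorm (𝓕 u : Lp F 2 (volume : Measure V)) 2 volume = eLpNorm u 2 volume := by
  rw [← Lp.enorm_def, ← Lp.enorm_def, ← ofReal_norm, ← ofReal_norm, Lp.norm_fourier_eq]

end Plancherel

section Robin

variable {F : Type*} [NormedAddCommGroup F]

lemma measurable_sign : Measurable Real.sign :=
  Measurable.ite measurableSet_Iio measurable_const
    (Measurable.ite measurableSet_Ioi measurable_const measurable_const)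

lemma abs_sign_le_one (x : ℝ) : |x.sign| ≤ 1 := by
  rcases Real.sign_apply_eq x with h | h | h <;> simp [h]

section
variable [NormedSpace ℝ F]

lemma memLp_sign_smul {f : ℝ → F} {p : ENNReal} (hf : MemLp f p) :
    MemLp (fun x ↦ x.sign • f x) p := by
  refine hf.of_le (measurable_sign.aestronglyMeasurable.smul hf.1) (.of_forall fun x ↦ ?_)
  rw [norm_smul]
  exact mul_le_of_le_one_left (norm_nonneg _) (abs_sign_le_one x)

lemma integral_sign_smul_deriv_eq_zero [CompleteSpace F] {f f' : ℝ → F}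
    (hf : ∀ x, HasDerivAt f (f' x) x) (hf' : Integrable f') (hf_zero : f 0 = 0)
    (hf_lim : Tendsto f (cocompact ℝ) (𝓝 0)) : ∫ x : ℝ, x.sign • f' x = 0 := by
  have hint : Integrable fun x : ℝ ↦ x.sign • f' x :=
    memLp_one_iff_integrable.1 (memLp_sign_smul (memLp_one_iff_integrable.2 hf'))
  have left : ∫ x in Set.Iic (0 : ℝ), x.sign • f' x = -∫ x in Set.Iic (0 : ℝ), f' x := by
    rw [← integral_neg, integral_Iic_eq_integral_Iio, integral_Iic_eq_integral_Iio]
    exact setIntegral_congr_fun measurableSet_Iio fun x hx ↦ by simp [Real.sign_of_neg hx]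
  have right : ∫ x in Set.Ioi (0 : ℝ), x.sign • f' x = ∫ x in Set.Ioi (0 : ℝ), f' x :=
    setIntegral_congr_fun measurableSet_Ioi fun x hx ↦ by simp [Real.sign_of_pos hx]
  rw [← intervalIntegral.integral_Iic_add_Ioi (b := 0) hint.integrableOn hint.integrableOn,
    left, right,
    integral_Ioi_of_hasDerivAt_of_tendsto' (fun x _ ↦ hf x) hf'.integrableOn
      (hf_lim.mono_left atTop_le_cocompact),
    integral_Iic_of_hasDerivAt_of_tendsto' (fun x _ ↦ hf x) hf'.integrableOn
      (hf_lim.mono_left atBot_le_cocompact), hf_zero]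
  simp
end

variable [InnerProductSpace ℂ F]

lemma inner_sign_smul_add_smul (a : ℝ) {x : ℝ} {v₁ : F} (hv₁ : x = 0 → v₁ = 0) (v₂ d₁ d₂ : F) :
    ⟪x.sign • v₁ + a • d₁, x.sign • v₂ + a • d₂⟫_ℂ =
      (⟪v₁, v₂⟫_ℂ + (a : ℂ) ^ 2 * ⟪d₁, d₂⟫_ℂ) +
        (a : ℂ) * (x.sign • (⟪v₁, d₂⟫_ℂ + ⟪d₁, v₂⟫_ℂ)) := by
  have sign_sq : (x.sign : ℂ) * x.sign * ⟪v₁, v₂⟫_ℂ = ⟪v₁, v₂⟫_ℂ := by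
    rcases lt_trichotomy x 0 with hx | hx | hx
    · simp [Real.sign_of_neg hx]
    · simp [hv₁ hx]
    · simp [Real.sign_of_pos hx]
  simp only [← Complex.coe_smul, inner_add_left, inner_add_right, inner_smul_left,
    inner_smul_right, conj_ofReal, smul_eq_mul]
  linear_combination sign_sq

-- The cross terms add up to `sign • a (⟪w₁, w₂⟫)'`, and `⟪w₁, w₂⟫` vanishes at `0` and at infinity.
lemma integral_inner_sign_smul_add_deriv {w₁ w₂ w₁' w₂' : ℝ → F} (a : ℝ)
    (hw₁ : ∀ x, HasDerivAt w₁ (w₁' x) x) (hw₂ : ∀ x, HasDerivAt w₂ (w₂' x) x)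
    (mw₁ : MemLp w₁ 2) (mw₂ : MemLp w₂ 2) (mw₁' : MemLp w₁' 2) (mw₂' : MemLp w₂' 2)
    (zw₁ : w₁ 0 = 0)
    (lw₁ : Tendsto w₁ (cocompact ℝ) (𝓝 0)) (lw₂ : Tendsto w₂ (cocompact ℝ) (𝓝 0)) :
    ∫ x, ⟪x.sign • w₁ x + a • w₁' x, x.sign • w₂ x + a • w₂' x⟫_ℂ =
      (∫ x, ⟪w₁ x, w₂ x⟫_ℂ) + (a : ℂ) ^ 2 * ∫ x, ⟪w₁' x, w₂' x⟫_ℂ := by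
  have ww := integrable_inner_of_memLp mw₁ mw₂
  have dd := (integrable_inner_of_memLp mw₁' mw₂').const_mul ((a : ℂ) ^ 2)
  have diag_int : Integrable fun x ↦ ⟪w₁ x, w₂ x⟫_ℂ + (a : ℂ) ^ 2 * ⟪w₁' x, w₂' x⟫_ℂ := ww.add dd
  have cross_int : Integrable fun x ↦ ⟪w₁ x, w₂' x⟫_ℂ + ⟪w₁' x, w₂ x⟫_ℂ :=
    (integrable_inner_of_memLp mw₁ mw₂').add (integrable_inner_of_memLp mw₁' mw₂)
  have cross_zero : ∫ x : ℝ, x.sign • (⟪w₁ x, w₂' x⟫_ℂ + ⟪w₁' x, w₂ x⟫_ℂ) = 0 :=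
    integral_sign_smul_deriv_eq_zero (f := fun x ↦ ⟪w₁ x, w₂ x⟫_ℂ)
      (fun x ↦ (hw₁ x).inner ℂ (hw₂ x)) cross_int (by rw [zw₁, inner_zero_left])
      (by simpa using lw₁.inner (𝕜 := ℂ) lw₂)
  have cross_sign_int := memLp_one_iff_integrable.1
    (memLp_sign_smul (memLp_one_iff_integrable.2 cross_int))
  calc ∫ x, ⟪x.sign • w₁ x + a • w₁' x, x.sign • w₂ x + a • w₂' x⟫_ℂ
      = ∫ x, (⟪w₁ x, w₂ x⟫_ℂ + (a : ℂ) ^ 2 * ⟪w₁' x, w₂' x⟫_ℂ) +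
          (a : ℂ) * (x.sign • (⟪w₁ x, w₂' x⟫_ℂ + ⟪w₁' x, w₂ x⟫_ℂ)) := by
        congr with x
        exact inner_sign_smul_add_smul a (by rintro rfl; exact zw₁) _ _ _
    _ = (∫ x, ⟪w₁ x, w₂ x⟫_ℂ) + (a : ℂ) ^ 2 * ∫ x, ⟪w₁' x, w₂' x⟫_ℂ := by
        rw [integral_add diag_int (cross_sign_int.const_mul (a : ℂ)), integral_add ww dd,
          integral_const_mul, integral_const_mul, cross_zero, mul_zero, add_zero]

end Robin

section Parts

/-- The even part of a function on `ℝ`. -/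
noncomputable def evenPart (f : ℝ → ℂ) (x : ℝ) : ℂ := (f x + f (-x)) / 2

/-- The odd part of a function on `ℝ`. -/
noncomputable def oddPart (f : ℝ → ℂ) (x : ℝ) : ℂ := (f x - f (-x)) / 2

lemma even_evenPart (f : ℝ → ℂ) : (evenPart f).Even := fun x ↦ by
  simp only [evenPart, neg_neg, add_comm]

lemma odd_oddPart (f : ℝ → ℂ) : (oddPart f).Odd := fun x ↦ by
  simp only [oddPart, neg_neg]
  ring

lemma oddPart_add_evenPart (f : ℝ → ℂ) (x : ℝ) : oddPart f x + evenPart f x = f x := by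
  simp only [oddPart, evenPart]
  ring

lemma memLp_evenPart {f : ℝ → ℂ} {p : ENNReal} (hf : MemLp f p) : MemLp (evenPart f) p :=
  (hf.add (memLp_comp_neg hf)).mul_const 2⁻¹

lemma memLp_oddPart {f : ℝ → ℂ} {p : ENNReal} (hf : MemLp f p) : MemLp (oddPart f) p :=
  (hf.sub (memLp_comp_neg hf)).mul_const 2⁻¹

lemma eLpNorm_two_mul_mul_evenPart_le {u f : ℝ → ℂ} (hu : u.Even)
    (huf : AEStronglyMeasurable fun x ↦ u x * f x) :
    eLpNorm (fun x ↦ 2 * u x * evenPart f x) 2 volume ≤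
      2 * eLpNorm (fun x ↦ u x * f x) 2 volume := by
  have neg_preserving := Measure.measurePreserving_neg (volume : Measure ℝ)
  have decomposition : (fun x ↦ 2 * u x * evenPart f x) =
      (fun x ↦ u x * f x) + (fun x ↦ u x * f x) ∘ Neg.neg := by
    ext x
    simp only [evenPart, Pi.add_apply, Function.comp_apply, hu x]
    ring
  calc eLpNorm (fun x ↦ 2 * u x * evenPart f x) 2 volume
      ≤ eLpNorm (fun x ↦ u x * f x) 2 volume +
          eLpNorm ((fun x ↦ u x * f x) ∘ Neg.neg) 2 volume := by
        rw [decomposition]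
        exact eLpNorm_add_le huf (huf.comp_measurePreserving neg_preserving) one_le_two
    _ = 2 * eLpNorm (fun x ↦ u x * f x) 2 volume := by
        rw [eLpNorm_comp_measurePreserving huf neg_preserving, two_mul]

end Parts

section Symbol

/-- The symbol `(s + i a |k|)⁻¹` of the wave operators at wave number `k`, with `s = ±1` and
`a = ℏ² / (m α)`; the reflection coefficient is `R_±(k) = -s (s + i a |k|)⁻¹`. -/
noncomputable def robinSymbol (a s k : ℝ) : ℂ := (s + I * (a * |k|))⁻¹

variable {a s : ℝ}

lemma even_robinSymbol (a s : ℝ) : (robinSymbol a s).Even := fun k ↦ by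
  simp only [robinSymbol, abs_neg]

lemma measurable_robinSymbol (a s : ℝ) : Measurable (robinSymbol a s) := by
  unfold robinSymbol
  fun_prop

lemma normSq_robinSymbol_inv (hs : s ^ 2 = 1) (k : ℝ) :
    normSq (s + I * (a * |k|)) = 1 + (a * k) ^ 2 := by
  have re : (s + I * (a * |k|) : ℂ).re = s := by simp
  have im : (s + I * (a * |k|) : ℂ).im = a * |k| := by simp
  rw [normSq_apply, re, im]
  linear_combination hs + a ^ 2 * sq_abs k

lemma robinSymbol_mul_cancel (hs : s ^ 2 = 1) (k : ℝ) :
    robinSymbol a s k * (s + I * (a * |k|)) = 1 := by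
  refine inv_mul_cancel₀ (normSq_pos.1 ?_)
  rw [normSq_robinSymbol_inv hs]
  positivity

lemma normSq_robinSymbol (hs : s ^ 2 = 1) (k : ℝ) :
    normSq (robinSymbol a s k) = (1 + (a * k) ^ 2)⁻¹ := by
  rw [robinSymbol, normSq_inv, normSq_robinSymbol_inv hs]

lemma sq_norm_robinSymbol (hs : s ^ 2 = 1) (k : ℝ) :
    ‖robinSymbol a s k‖ ^ 2 = (1 + (a * k) ^ 2)⁻¹ := by
  rw [← normSq_eq_norm_sq, normSq_robinSymbol hs]

lemma norm_robinSymbol_le_one (hs : s ^ 2 = 1) (k : ℝ) : ‖robinSymbol a s k‖ ≤ 1 := by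
  rw [← sq_le_one_iff₀ (norm_nonneg _), sq_norm_robinSymbol hs]
  exact inv_le_one_of_one_le₀ (by linarith [sq_nonneg (a * k)])

lemma norm_mul_robinSymbol_le_one (hs : s ^ 2 = 1) (k : ℝ) : ‖a * k * robinSymbol a s k‖ ≤ 1 := by
  rw [← sq_le_one_iff₀ (norm_nonneg _), norm_mul, mul_pow, sq_norm_robinSymbol hs, ← ofReal_mul,
    norm_real, Real.norm_eq_abs, sq_abs, ← div_eq_mul_inv, div_le_one (by positivity)]
  linarith

lemma robinSymbol_one_mul (a k : ℝ) :
    robinSymbol a 1 k * (1 + 2 * robinSymbol a (-1) k) = robinSymbol a (-1) k := by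
  have h₁ := robinSymbol_mul_cancel (a := a) (s := 1) (by norm_num) k
  have h₂ := robinSymbol_mul_cancel (a := a) (s := -1) (by norm_num) k
  push_cast at h₁ h₂
  linear_combination robinSymbol a (-1) k * h₁ - robinSymbol a 1 k * h₂

lemma norm_robinSymbol_sub (hs : s ^ 2 = 1) (k l : ℝ) :
    ‖robinSymbol a s k - robinSymbol a s l‖ =
      |a| * |(|l| - |k|)| * (‖robinSymbol a s k‖ * ‖robinSymbol a s l‖) := by
  have hk := robinSymbol_mul_cancel (a := a) hs k
  have hl := robinSymbol_mul_cancel (a := a) hs l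
  have : robinSymbol a s k - robinSymbol a s l =
      I * (a * (|l| - |k| : ℝ)) * (robinSymbol a s k * robinSymbol a s l) := by
    push_cast
    linear_combination robinSymbol a s l * hk - robinSymbol a s k * hl
  rw [this]
  simp only [norm_mul, norm_I, one_mul, norm_real, Real.norm_eq_abs]

lemma norm_robinSymbol_sub_le (hs : s ^ 2 = 1) (k l : ℝ) :
    ‖robinSymbol a s k - robinSymbol a s l‖ ≤ |a| * |k - l| := by
  rw [norm_robinSymbol_sub hs, abs_sub_comm k]
  calc |a| * |(|l| - |k|)| * (‖robinSymbol a s k‖ * ‖robinSymbol a s l‖)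
      ≤ |a| * |l - k| * (1 * 1) := by
        exact mul_le_mul
          (mul_le_mul_of_nonneg_left (abs_abs_sub_abs_le_abs_sub l k) (abs_nonneg a))
          (mul_le_mul (norm_robinSymbol_le_one hs k) (norm_robinSymbol_le_one hs l)
            (norm_nonneg _) zero_le_one) (by positivity) (by positivity)
    _ = |a| * |l - k| := by ring

lemma norm_robinSymbol_sub_le_one (hs : s ^ 2 = 1) (k l : ℝ) :
    ‖robinSymbol a s k - robinSymbol a s l‖ ≤ 1 := by
  rw [← sq_le_one_iff₀ (norm_nonneg _), norm_robinSymbol_sub hs, mul_pow, mul_pow, mul_pow,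
    sq_norm_robinSymbol hs, sq_norm_robinSymbol hs, ← mul_inv, ← div_eq_mul_inv,
    div_le_one (by positivity), sq_abs, sq_abs]
  calc a ^ 2 * (|l| - |k|) ^ 2
      ≤ a ^ 2 * (|l| - |k|) ^ 2 + (1 + a ^ 2 * (|k| * |l|)) ^ 2 :=
        le_add_of_nonneg_right (sq_nonneg _)
    _ = (1 + a ^ 2 * |k| ^ 2) * (1 + a ^ 2 * |l| ^ 2) := by ring
    _ = (1 + (a * k) ^ 2) * (1 + (a * l) ^ 2) := by simp only [sq_abs, mul_pow]

lemma memLp_robinSymbol_mul (hs : s ^ 2 = 1) {f : ℝ → ℂ} {p : ENNReal} (hf : MemLp f p) :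
    MemLp (fun ξ ↦ robinSymbol a s (2 * Real.pi * ξ) * f ξ) p := by
  have hM : AEStronglyMeasurable fun ξ : ℝ ↦ robinSymbol a s (2 * Real.pi * ξ) :=
    ((measurable_robinSymbol a s).comp (measurable_const_mul _)).aestronglyMeasurable
  refine hf.of_le (hM.mul hf.1) (.of_forall fun ξ ↦ ?_)
  rw [norm_mul]
  exact mul_le_of_le_one_left (norm_nonneg _) (norm_robinSymbol_le_one hs _)

end Symbol

section WaveFourier

/-- The function `sign · w + a w'`, where `w = 𝓕⁻ g`. -/
noncomputable def robinTransform (a : ℝ) (g : ℝ → ℂ) (x : ℝ) : ℂ :=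
  x.sign • 𝓕⁻ g x + a • 𝓕⁻ (fun ξ : ℝ ↦ (2 * Real.pi * I * ξ) • g ξ) x

/-- The Fourier transform of the odd function whose `robinTransform` is the even part of the wave
operator applied to `𝓕⁻ A`. -/
noncomputable def robinDensity (a s : ℝ) (A : ℝ → ℂ) (ξ : ℝ) : ℂ :=
  ξ.sign • (robinSymbol a s (2 * Real.pi * ξ) * evenPart A ξ)

/-- The wave operator `Ω_α^s`, with `a = ℏ² / (m α)`, applied to the function with Fourier
transform `A`. It leaves the odd part untouched. -/
noncomputable def waveFourier (a s : ℝ) (A : ℝ → ℂ) (x : ℝ) : ℂ :=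
  𝓕⁻ (oddPart A) x + robinTransform a (robinDensity a s A) x

/-- The scattering operator `(Ω_α^+)^* Ω_α^-`, with `a = ℏ² / (m α)`, on the Fourier side. -/
noncomputable def scatteringFourier (a : ℝ) (A : ℝ → ℂ) (ξ : ℝ) : ℂ :=
  A ξ + 2 * robinSymbol a (-1) (2 * Real.pi * ξ) * evenPart A ξ

variable {a s : ℝ} {A B : ℝ → ℂ} {p : ENNReal}

section
variable {g g₁ g₂ : ℝ → ℂ}

lemma even_robinTransform (hg : g.Odd) (a : ℝ) : (robinTransform a g).Even := fun x ↦ by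
  have hg' : Function.Even fun ξ : ℝ ↦ (2 * Real.pi * I * ξ) • g ξ := fun ξ ↦ by
    simp only [hg ξ, ofReal_neg, mul_neg, neg_smul, smul_neg, neg_neg]
  simp only [robinTransform, Real.sign_neg, odd_fourierInv hg x, even_fourierInv hg' x, smul_neg,
    neg_smul, neg_neg]

lemma memLp_robinTransform (a : ℝ) (hg : Integrable g) (hg2 : MemLp g 2)
    (hg' : Integrable fun ξ : ℝ ↦ (2 * Real.pi * I * ξ) • g ξ)
    (hg'2 : MemLp (fun ξ : ℝ ↦ (2 * Real.pi * I * ξ) • g ξ) 2) :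
    MemLp (robinTransform a g) 2 :=
  (memLp_sign_smul (memLp_fourierInv hg hg2)).add ((memLp_fourierInv hg' hg'2).const_smul a)

lemma integrable_smul_of_integrable_two_pi_I_mul_smul
    (hg : Integrable fun ξ : ℝ ↦ (2 * Real.pi * I * ξ) • g ξ) : Integrable fun ξ : ℝ ↦ ξ • g ξ := by
  refine (hg.smul (2 * Real.pi * I)⁻¹).congr (.of_forall fun ξ ↦ ?_)
  have := two_pi_I_ne_zero
  simp only [Pi.smul_apply, smul_eq_mul, real_smul]
  field_simp

lemma integral_inner_robinTransform (a : ℝ)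
    (hg₁ : Integrable g₁) (hg₁2 : MemLp g₁ 2)
    (hg₁' : Integrable fun ξ : ℝ ↦ (2 * Real.pi * I * ξ) • g₁ ξ)
    (hg₁'2 : MemLp (fun ξ : ℝ ↦ (2 * Real.pi * I * ξ) • g₁ ξ) 2)
    (hg₂ : Integrable g₂) (hg₂2 : MemLp g₂ 2)
    (hg₂' : Integrable fun ξ : ℝ ↦ (2 * Real.pi * I * ξ) • g₂ ξ)
    (hg₂'2 : MemLp (fun ξ : ℝ ↦ (2 * Real.pi * I * ξ) • g₂ ξ) 2) (hodd : g₁.Odd) :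
    ∫ x, ⟪robinTransform a g₁ x, robinTransform a g₂ x⟫_ℂ =
      ∫ ξ : ℝ, ⟪g₁ ξ, g₂ ξ⟫_ℂ + (a : ℂ) ^ 2 *
        ⟪(2 * Real.pi * I * ξ) • g₁ ξ, (2 * Real.pi * I * ξ) • g₂ ξ⟫_ℂ := by
  simp only [robinTransform]
  rw [integral_inner_sign_smul_add_deriv a
      (hasDerivAt_fourierInv hg₁ (integrable_smul_of_integrable_two_pi_I_mul_smul hg₁'))
      (hasDerivAt_fourierInv hg₂ (integrable_smul_of_integrable_two_pi_I_mul_smul hg₂'))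
      (memLp_fourierInv hg₁ hg₁2) (memLp_fourierInv hg₂ hg₂2)
      (memLp_fourierInv hg₁' hg₁'2) (memLp_fourierInv hg₂' hg₂'2)
      (odd_fourierInv hodd).map_zero (tendsto_fourierInv_cocompact g₁)
      (tendsto_fourierInv_cocompact g₂),
    integral_inner_fourierInv_eq hg₁ hg₁2 hg₂ hg₂2,
    integral_inner_fourierInv_eq hg₁' hg₁'2 hg₂' hg₂'2, integral_add
      (integrable_inner_of_memLp hg₁2 hg₂2)
      ((integrable_inner_of_memLp hg₁'2 hg₂'2).const_mul _), integral_const_mul]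

end

lemma odd_robinDensity (a s : ℝ) (A : ℝ → ℂ) : (robinDensity a s A).Odd := fun ξ ↦ by
  simp only [robinDensity, mul_neg, Real.sign_neg, even_robinSymbol a s _, even_evenPart A ξ,
    neg_smul]

lemma memLp_robinDensity (hs : s ^ 2 = 1) (hA : MemLp A p) : MemLp (robinDensity a s A) p :=
  memLp_sign_smul (memLp_robinSymbol_mul hs (memLp_evenPart hA))

lemma memLp_mul_robinDensity (ha : a ≠ 0) (hs : s ^ 2 = 1) (hA : MemLp A p) :
    MemLp (fun ξ : ℝ ↦ (2 * Real.pi * I * ξ) • robinDensity a s A ξ) p := by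
  have hmeas : AEStronglyMeasurable fun ξ : ℝ ↦ 2 * Real.pi * I * (ξ : ℂ) := by fun_prop
  refine (memLp_evenPart hA).of_le_mul (c := |a|⁻¹) (hmeas.smul (memLp_robinDensity hs hA).1)
    (.of_forall fun ξ ↦ ?_)
  have hM := norm_mul_robinSymbol_le_one (a := a) hs (2 * Real.pi * ξ)
  calc ‖(2 * Real.pi * I * ξ) • robinDensity a s A ξ‖
      = |ξ.sign| * (|a|⁻¹ * (‖a * (2 * Real.pi * ξ : ℝ) * robinSymbol a s (2 * Real.pi * ξ)‖ *
          ‖evenPart A ξ‖)) := by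
        have : |a| ≠ 0 := abs_ne_zero.2 ha
        simp only [robinDensity, norm_smul, norm_mul, norm_I, norm_real, Real.norm_eq_abs,
          RCLike.norm_ofNat]
        field_simp
    _ ≤ 1 * (|a|⁻¹ * (1 * ‖evenPart A ξ‖)) := by
        gcongr
        exact abs_sign_le_one ξ
    _ = |a|⁻¹ * ‖evenPart A ξ‖ := by ring

lemma inner_robinDensity_add_inner_mul_robinDensity (a : ℝ) (hs : s ^ 2 = 1) (A B : ℝ → ℂ)
    {ξ : ℝ} (hξ : ξ ≠ 0) :
    ⟪robinDensity a s A ξ, robinDensity a s B ξ⟫_ℂ + (a : ℂ) ^ 2 *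
      ⟪(2 * Real.pi * I * ξ) • robinDensity a s A ξ,
        (2 * Real.pi * I * ξ) • robinDensity a s B ξ⟫_ℂ = ⟪evenPart A ξ, evenPart B ξ⟫_ℂ := by
  set M := robinSymbol a s (2 * Real.pi * ξ) with hM
  have hsign : (ξ.sign : ℂ) ^ 2 = 1 := by
    rcases hξ.lt_or_gt with h | h
    · simp [Real.sign_of_neg h]
    · simp [Real.sign_of_pos h]
  have hsymbol : (1 + (a * (2 * Real.pi * ξ)) ^ 2 : ℂ) * (starRingEnd ℂ M * M) = 1 := by
    rw [← normSq_eq_conj_mul_self, hM, normSq_robinSymbol hs]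
    norm_cast
    exact mul_inv_cancel₀ (by positivity)
  simp only [robinDensity, RCLike.inner_apply, ← hM, smul_eq_mul, real_smul, map_mul, conj_ofReal,
    conj_I, map_ofNat]
  set conjA := starRingEnd ℂ (evenPart A ξ)
  set conjM := starRingEnd ℂ M
  linear_combination
    (1 + (a * (2 * Real.pi * ξ)) ^ 2 : ℂ) * conjM * M * evenPart B ξ * conjA * hsign +
      evenPart B ξ * conjA * hsymbol -
      (ξ.sign : ℂ) ^ 2 * M * conjM * evenPart B ξ * conjA * (2 * a * Real.pi * ξ) ^ 2 * I_sq

lemma integral_inner_waveFourier (ha : a ≠ 0) (hs : s ^ 2 = 1)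
    (hA : Integrable A) (hA2 : MemLp A 2) (hB : Integrable B) (hB2 : MemLp B 2) :
    ∫ x, ⟪waveFourier a s A x, waveFourier a s B x⟫_ℂ = ∫ ξ, ⟪A ξ, B ξ⟫_ℂ := by
  have hA1 := memLp_one_iff_integrable.2 hA
  have hB1 := memLp_one_iff_integrable.2 hB
  have oA := memLp_one_iff_integrable.1 (memLp_oddPart hA1)
  have oB := memLp_one_iff_integrable.1 (memLp_oddPart hB1)
  have gA := memLp_one_iff_integrable.1 (memLp_robinDensity (a := a) hs hA1)
  have gB := memLp_one_iff_integrable.1 (memLp_robinDensity (a := a) hs hB1)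
  have gA' := memLp_one_iff_integrable.1 (memLp_mul_robinDensity ha hs hA1)
  have gB' := memLp_one_iff_integrable.1 (memLp_mul_robinDensity ha hs hB1)
  have even_part : ∫ x, ⟪robinTransform a (robinDensity a s A) x,
      robinTransform a (robinDensity a s B) x⟫_ℂ = ∫ ξ, ⟪evenPart A ξ, evenPart B ξ⟫_ℂ := by
    rw [integral_inner_robinTransform a gA (memLp_robinDensity hs hA2) gA'
      (memLp_mul_robinDensity ha hs hA2) gB (memLp_robinDensity hs hB2) gB'
      (memLp_mul_robinDensity ha hs hB2) (odd_robinDensity a s A)]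
    refine integral_congr_ae ((Measure.ae_ne volume 0).mono fun ξ hξ ↦ ?_)
    exact inner_robinDensity_add_inner_mul_robinDensity a hs A B hξ
  simp only [waveFourier]
  rw [integral_inner_odd_add_even (odd_fourierInv (odd_oddPart A)) (odd_fourierInv (odd_oddPart B))
      (even_robinTransform (odd_robinDensity a s A) a)
      (even_robinTransform (odd_robinDensity a s B) a)
      (memLp_fourierInv oA (memLp_oddPart hA2)) (memLp_fourierInv oB (memLp_oddPart hB2))
      (memLp_robinTransform a gA (memLp_robinDensity hs hA2) gA' (memLp_mul_robinDensity ha hs hA2))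
      (memLp_robinTransform a gB (memLp_robinDensity hs hB2) gB'
        (memLp_mul_robinDensity ha hs hB2)),
    even_part, integral_inner_fourierInv_eq oA (memLp_oddPart hA2) oB (memLp_oddPart hB2),
    ← integral_inner_odd_add_even (odd_oddPart A) (odd_oddPart B) (even_evenPart A)
      (even_evenPart B) (memLp_oddPart hA2) (memLp_oddPart hB2) (memLp_evenPart hA2)
      (memLp_evenPart hB2)]
  simp only [oddPart_add_evenPart]

lemma memLp_scatteringFourier (a : ℝ) (hA : MemLp A p) : MemLp (scatteringFourier a A) p := by
  have := (memLp_robinSymbol_mul (a := a) (s := -1) (by norm_num) (memLp_evenPart hA)).const_mul 2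
  simp only [← mul_assoc 2 (robinSymbol _ _ _)] at this
  exact hA.add this

lemma waveFourier_neg_one (a : ℝ) (A : ℝ → ℂ) :
    waveFourier a (-1) A = waveFourier a 1 (scatteringFourier a A) := by
  have hsymbol (ξ : ℝ) : robinSymbol a (-1) (2 * Real.pi * -ξ) =
      robinSymbol a (-1) (2 * Real.pi * ξ) := by rw [mul_neg, even_robinSymbol]
  have odd_eq : oddPart (scatteringFourier a A) = oddPart A := funext fun ξ ↦ by
    simp only [oddPart, scatteringFourier, hsymbol, even_evenPart A ξ]
    ring
  have even_eq (ξ : ℝ) : evenPart (scatteringFourier a A) ξ =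
      (1 + 2 * robinSymbol a (-1) (2 * Real.pi * ξ)) * evenPart A ξ := by
    simp only [evenPart, scatteringFourier, hsymbol, neg_neg]
    ring
  have density_eq : robinDensity a 1 (scatteringFourier a A) = robinDensity a (-1) A := by
    funext ξ
    simp only [robinDensity]
    rw [even_eq, ← mul_assoc, robinSymbol_one_mul]
  funext x
  simp only [waveFourier, odd_eq, density_eq]

end WaveFourier

section WaveOperator

variable {a s : ℝ}

lemma integrable_exp_mul_I_mul {f : ℝ → ℂ} (hf : Integrable f) {φ : ℝ → ℝ} (hφ : Measurable φ) :
    Integrable fun ξ ↦ cexp (φ ξ * I) * f ξ :=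
  hf.bdd_mul (c := 1) (by fun_prop) (.of_forall fun ξ ↦ (norm_exp_ofReal_mul_I _).le)

lemma fourierInv_eq_integral_exp (f : ℝ → ℂ) (x : ℝ) :
    𝓕⁻ f x = ∫ ξ : ℝ, cexp ((2 * Real.pi * ξ * x : ℝ) * I) * f ξ := by
  rw [Real.fourierInv_eq']
  simp only [RCLike.inner_apply, conj_trivial, smul_eq_mul, mul_comm x, mul_assoc]

lemma ft_two_pi_mul (ψ : ℝ → ℂ) (ξ : ℝ) :
    ft ψ (2 * Real.pi * ξ) = ((√(2 * Real.pi))⁻¹ : ℝ) * 𝓕 ψ ξ := by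
  simp only [ft, Real.fourier_eq', smul_eq_mul, RCLike.inner_apply, conj_trivial]
  congr! 5
  push_cast
  ring

lemma Rpm_eq_neg_mul_robinSymbol (ℏ m α k : ℝ) (hs : s ^ 2 = 1) :
    Rpm ℏ m α s k = -(s * robinSymbol (ℏ ^ 2 / (m * α)) s k) := by
  have hs0 : (s : ℂ) ^ 2 = 1 := by exact_mod_cast hs
  have hs' : (s : ℂ) = (s : ℂ)⁻¹ := eq_inv_of_mul_eq_one_left (by rw [← sq, hs0])
  rw [Rpm, robinSymbol]
  nth_rewrite 2 [hs']
  rw [← mul_inv]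
  congr 2
  push_cast
  linear_combination -hs0

/-- The mismatch between the incoming wave `exp (i θ)` and the outgoing wave `exp (-i s |θ|)`. -/
noncomputable def phaseDefect (s θ : ℝ) : ℂ :=
  s * (cexp (θ * I) - cexp ((-s * |θ| : ℝ) * I)) - θ.sign * cexp (θ * I)

-- Adding the values at `±θ` gives `2 s (cos θ - exp (-i s |θ|)) - 2 i sin |θ|`.
lemma odd_phaseDefect (hs : s ^ 2 = 1) : (phaseDefect s).Odd := fun θ ↦ by
  rcases sq_eq_one_iff.1 hs with rfl | rfl <;>
    rcases lt_trichotomy θ 0 with h | h | h <;>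
    simp [phaseDefect, Real.sign_of_neg, Real.sign_of_pos, abs_of_neg, abs_of_pos, h]

lemma sign_mul_sign (x y : ℝ) : (x * y).sign = x.sign * y.sign := by
  rcases lt_trichotomy x 0 with hx | hx | hx <;> rcases lt_trichotomy y 0 with hy | hy | hy <;>
    simp [Real.sign_of_neg, Real.sign_of_pos, mul_pos_of_neg_of_neg, mul_neg_of_neg_of_pos,
      mul_neg_of_pos_of_neg, hx, hy]

lemma sign_mul_self (x : ℝ) : x.sign * x = |x| := by
  rcases lt_trichotomy x 0 with h | h | h <;>
    simp [Real.sign_of_neg, Real.sign_of_pos, abs_of_neg, abs_of_pos, h]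

lemma waveFourier_integrand_sub (hs : s ^ 2 = 1) (A : ℝ → ℂ) (x ξ : ℝ) :
    cexp ((2 * Real.pi * ξ * x : ℝ) * I) * oddPart A ξ +
        (x.sign * (cexp ((2 * Real.pi * ξ * x : ℝ) * I) * robinDensity a s A ξ) +
          a * (cexp ((2 * Real.pi * ξ * x : ℝ) * I) *
            ((2 * Real.pi * I * ξ) • robinDensity a s A ξ))) -
      (cexp ((2 * Real.pi * ξ * x : ℝ) * I) * A ξ +
        cexp ((-s * |2 * Real.pi * ξ * x| : ℝ) * I) *
          (-(s * robinSymbol a s (2 * Real.pi * ξ) * A ξ))) =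
    robinSymbol a s (2 * Real.pi * ξ) *
      (s * cexp ((-s * |2 * Real.pi * ξ * x| : ℝ) * I) * oddPart A ξ -
        phaseDefect s (2 * Real.pi * ξ * x) * evenPart A ξ) := by
  have cancel := robinSymbol_mul_cancel (a := a) hs (2 * Real.pi * ξ)
  have abs_eq : ((|2 * Real.pi * ξ| : ℝ) : ℂ) = 2 * Real.pi * (ξ.sign * ξ) := by
    rw [abs_mul, abs_of_pos Real.two_pi_pos, ← sign_mul_self]
    push_cast
    ring
  have sign_eq : (2 * Real.pi * ξ * x).sign = ξ.sign * x.sign := by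
    rw [sign_mul_sign, sign_mul_sign, Real.sign_of_pos Real.two_pi_pos, one_mul]
  rw [abs_eq] at cancel
  simp only [robinDensity, phaseDefect, sign_eq, real_smul, smul_eq_mul]
  rw [← oddPart_add_evenPart A ξ]
  push_cast
  linear_combination cexp (2 * Real.pi * ξ * x * I) * evenPart A ξ * cancel

lemma waveFourier_eq_fourierInv_add_integral (ha : a ≠ 0) (hs : s ^ 2 = 1) {A : ℝ → ℂ}
    (hA : Integrable A) (x : ℝ) :
    waveFourier a s A x = 𝓕⁻ A x + ∫ ξ : ℝ, cexp ((-s * |2 * Real.pi * ξ * x| : ℝ) * I) *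
      (-(s * robinSymbol a s (2 * Real.pi * ξ) * A ξ)) := by
  have hA1 := memLp_one_iff_integrable.2 hA
  have exp_int {f : ℝ → ℂ} (hf : MemLp f 1) :
      Integrable fun ξ : ℝ ↦ cexp ((2 * Real.pi * ξ * x : ℝ) * I) * f ξ :=
    integrable_exp_mul_I_mul (memLp_one_iff_integrable.1 hf) (by fun_prop)
  have odd_int := exp_int (memLp_oddPart hA1)
  have sign_int := (exp_int (memLp_robinDensity (a := a) hs hA1)).const_mul (x.sign : ℂ)
  have deriv_int := (exp_int (memLp_mul_robinDensity ha hs hA1)).const_mul (a : ℂ)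
  have refl_int : Integrable fun ξ : ℝ ↦ cexp ((-s * |2 * Real.pi * ξ * x| : ℝ) * I) *
      (-(s * robinSymbol a s (2 * Real.pi * ξ) * A ξ)) := by
    refine integrable_exp_mul_I_mul (memLp_one_iff_integrable.1 ?_) (by fun_prop)
    simpa only [mul_assoc, Pi.neg_def] using ((memLp_robinSymbol_mul hs hA1).const_mul (s : ℂ)).neg
  simp only [waveFourier, robinTransform, fourierInv_eq_integral_exp, real_smul]
  rw [← integral_const_mul, ← integral_const_mul, ← integral_add sign_int deriv_int,
    ← integral_add odd_int, ← integral_add (exp_int hA1) refl_int, ← sub_eq_zero, ← integral_sub]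
  · simp only [waveFourier_integrand_sub hs]
    refine integral_eq_zero_of_odd fun ξ ↦ ?_
    have neg_angle : 2 * Real.pi * -ξ * x = -(2 * Real.pi * ξ * x) := by ring
    rw [neg_angle, odd_phaseDefect hs, abs_neg, odd_oddPart, even_evenPart, mul_neg,
      even_robinSymbol]
    ring
  · exact odd_int.add (sign_int.add deriv_int)
  · exact (exp_int hA1).add refl_int
  · exact sign_int.add deriv_int

lemma waveOpQ_eq_waveFourier {ℏ m α : ℝ} (ha : ℏ ^ 2 / (m * α) ≠ 0) (hs : s ^ 2 = 1) {ψ : ℝ → ℂ}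
    (hc : Continuous ψ) (hψ : Integrable ψ) (hF : Integrable (𝓕 ψ)) :
    waveOpQ ℏ m α s ψ = waveFourier (ℏ ^ 2 / (m * α)) s (𝓕 ψ) := by
  funext x
  have scale : ((2 * Real.pi : ℝ) : ℂ) = √(2 * Real.pi) * √(2 * Real.pi) := by
    exact_mod_cast (Real.mul_self_sqrt Real.two_pi_pos.le).symm
  have sqrt_ne : (√(2 * Real.pi) : ℂ) ≠ 0 := by
    exact_mod_cast (Real.sqrt_pos.2 Real.two_pi_pos).ne'
  have change_var (f : ℝ → ℂ) : ∫ k, f k = ∫ ξ, (2 * Real.pi : ℝ) * f (2 * Real.pi * ξ) := by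
    rw [integral_const_mul, Measure.integral_comp_mul_left, abs_of_pos (by positivity), real_smul,
      ← mul_assoc, ← ofReal_mul, mul_inv_cancel₀ Real.two_pi_pos.ne', ofReal_one, one_mul]
  rw [waveFourier_eq_fourierInv_add_integral ha hs hF, hc.fourierInv_fourier_eq hψ hF, waveOpQ,
    change_var, ← integral_const_mul]
  congr with ξ
  rw [ft_two_pi_mul, Rpm_eq_neg_mul_robinSymbol _ _ _ _ hs, scale, abs_mul (2 * Real.pi * ξ)]
  push_cast
  field_simp

end WaveOperator

section ScatteringOperator

/-- The functions for which the stationary representation of the wave operators can be rewritten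
as an absolutely convergent inverse Fourier transform. -/
structure IsFourierRegular (ψ : ℝ → ℂ) : Prop where
  continuous : Continuous ψ
  integrable : Integrable ψ
  memLp_two : MemLp ψ 2
  integrable_fourier : Integrable (𝓕 ψ)

/-- The operator `Ω` on `L²(ℝ)` is the wave operator `Ω_α^±`: it is given by the stationary
representation on the dense subspace of integrable functions; `s = ±1`. -/
def IsWaveOperator (ℏ m α s : ℝ)
    (Ω : Lp ℂ 2 (volume : Measure ℝ) →L[ℂ] Lp ℂ 2 (volume : Measure ℝ)) : Prop :=
  ∀ g : ℝ → ℂ, Integrable g → ∀ u : Lp ℂ 2 (volume : Measure ℝ),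
    u =ᵐ[volume] g → Ω u =ᵐ[volume] waveOpQ ℏ m α s g

lemma isFourierRegular_schwartzMap (φ : 𝓢(ℝ, ℂ)) : IsFourierRegular φ where
  continuous := φ.continuous
  integrable := φ.integrable
  memLp_two := φ.memLp 2
  integrable_fourier := by
    rw [← SchwartzMap.fourier_coe]
    exact (𝓕 φ).integrable

lemma fourier_evenPart {ψ : ℝ → ℂ} (hψ : Integrable ψ) : 𝓕 (evenPart ψ) = evenPart (𝓕 ψ) := by
  have evenPart_eq (f : ℝ → ℂ) : evenPart f = (2⁻¹ : ℂ) • (f + fun x ↦ f (-x)) := funext fun x ↦ by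
    simp only [evenPart, Pi.smul_apply, Pi.add_apply, smul_eq_mul]
    ring
  have fourier_reflect : 𝓕 (fun x ↦ ψ (-x)) = fun ξ ↦ 𝓕 ψ (-ξ) := funext fun ξ ↦ by
    rw [← Real.fourierInv_eq_fourier_neg, Real.fourierInv_eq_fourier_comp_neg]
  rw [evenPart_eq ψ, evenPart_eq (𝓕 ψ), fourier_const_smul,
    fourier_add_of_integrable hψ hψ.comp_neg, fourier_reflect]

lemma fourier_add_const_mul_evenPart {ψ : ℝ → ℂ} (hψ : Integrable ψ) (c : ℂ) :
    𝓕 (fun x ↦ ψ x + c * evenPart ψ x) = fun ξ ↦ 𝓕 ψ ξ + c * evenPart (𝓕 ψ) ξ := by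
  have even_int := memLp_one_iff_integrable.1 (memLp_evenPart (memLp_one_iff_integrable.2 hψ))
  refine (fourier_add_of_integrable hψ (even_int.const_mul c)).trans ?_
  exact congrArg (𝓕 ψ + ·) ((fourier_const_smul c _).trans (by rw [fourier_evenPart hψ]; rfl))

variable {ℏ m α : ℝ} {Ωp Ωm : Lp ℂ 2 (volume : Measure ℝ) →L[ℂ] Lp ℂ 2 (volume : Measure ℝ)}
  {φ ψ : ℝ → ℂ}

lemma integral_inner_waveOpQ (ha : ℏ ^ 2 / (m * α) ≠ 0) (hφ : IsFourierRegular φ)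
    (hψ : IsFourierRegular ψ) :
    ∫ x, ⟪waveOpQ ℏ m α 1 φ x, waveOpQ ℏ m α (-1) ψ x⟫_ℂ =
      ∫ ξ, ⟪𝓕 φ ξ, scatteringFourier (ℏ ^ 2 / (m * α)) (𝓕 ψ) ξ⟫_ℂ := by
  rw [waveOpQ_eq_waveFourier ha (by norm_num) hφ.continuous hφ.integrable hφ.integrable_fourier,
    waveOpQ_eq_waveFourier ha (by norm_num) hψ.continuous hψ.integrable hψ.integrable_fourier,
    waveFourier_neg_one]
  exact integral_inner_waveFourier ha (by norm_num) hφ.integrable_fourier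
    (memLp_fourier hφ.integrable hφ.memLp_two)
    (memLp_one_iff_integrable.1
      (memLp_scatteringFourier _ (memLp_one_iff_integrable.2 hψ.integrable_fourier)))
    (memLp_scatteringFourier _ (memLp_fourier hψ.integrable hψ.memLp_two))

lemma fourier_adjoint_waveOperator_ae_eq (ha : ℏ ^ 2 / (m * α) ≠ 0)
    (hΩp : IsWaveOperator ℏ m α 1 Ωp) (hΩm : IsWaveOperator ℏ m α (-1) Ωm)
    (hψ : IsFourierRegular ψ) {u : Lp ℂ 2 (volume : Measure ℝ)} (hu : u =ᵐ[volume] ψ) :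
    (𝓕 (ContinuousLinearMap.adjoint Ωp (Ωm u)) : Lp ℂ 2 (volume : Measure ℝ)) =ᵐ[volume]
      scatteringFourier (ℏ ^ 2 / (m * α)) (𝓕 ψ) := by
  have hS := memLp_scatteringFourier (ℏ ^ 2 / (m * α)) (memLp_fourier hψ.integrable hψ.memLp_two)
  suffices 𝓕 (ContinuousLinearMap.adjoint Ωp (Ωm u)) = hS.toLp from this ▸ hS.coeFn_toLp
  refine (SchwartzMap.denseRange_toLpCLM (E := ℝ) (F := ℂ) (μ := volume) (p := 2)
    ENNReal.ofNat_ne_top).eq_of_inner_right ℂ fun χ ↦ ?_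
  rw [SchwartzMap.toLpCLM_apply]
  obtain ⟨φ, rfl⟩ : ∃ φ : 𝓢(ℝ, ℂ), 𝓕 φ = χ := ⟨𝓕⁻ χ, FourierTransform.fourier_fourierInv_eq χ⟩
  have hφ := isFourierRegular_schwartzMap φ
  calc ⟪(𝓕 φ).toLp 2 volume, 𝓕 (ContinuousLinearMap.adjoint Ωp (Ωm u))⟫_ℂ
      = ⟪Ωp (φ.toLp 2 volume), Ωm u⟫_ℂ := by
        rw [← SchwartzMap.toLp_fourier_eq, Lp.inner_fourier_eq,
          ContinuousLinearMap.adjoint_inner_right]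
    _ = ∫ x, ⟪waveOpQ ℏ m α 1 φ x, waveOpQ ℏ m α (-1) ψ x⟫_ℂ :=
        inner_Lp_eq_integral (hΩp _ hφ.integrable _ (φ.coeFn_toLp 2 volume))
          (hΩm _ hψ.integrable _ hu)
    _ = ∫ ξ, ⟪𝓕 φ ξ, scatteringFourier (ℏ ^ 2 / (m * α)) (𝓕 ψ) ξ⟫_ℂ := by
        rw [integral_inner_waveOpQ ha hφ hψ, SchwartzMap.fourier_coe]
    _ = ⟪(𝓕 φ).toLp 2 volume, hS.toLp⟫_ℂ :=
        (inner_Lp_eq_integral ((𝓕 φ).coeFn_toLp 2 volume) hS.coeFn_toLp).symm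

lemma eLpNorm_adjoint_waveOperator_sub (ha : ℏ ^ 2 / (m * α) ≠ 0)
    (hΩp : IsWaveOperator ℏ m α 1 Ωp) (hΩm : IsWaveOperator ℏ m α (-1) Ωm)
    (hψ : IsFourierRegular ψ) {u : Lp ℂ 2 (volume : Measure ℝ)} (hu : u =ᵐ[volume] ψ) (c : ℂ) :
    eLpNorm (fun x ↦ ContinuousLinearMap.adjoint Ωp (Ωm u) x - (ψ x + 2 * c * evenPart ψ x)) 2
        volume =
      eLpNorm (fun ξ ↦ 2 * (robinSymbol (ℏ ^ 2 / (m * α)) (-1) (2 * Real.pi * ξ) - c) *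
        evenPart (𝓕 ψ) ξ) 2 volume := by
  have int_classical : Integrable fun x ↦ ψ x + 2 * c * evenPart ψ x :=
    hψ.integrable.add ((memLp_one_iff_integrable.1
      (memLp_evenPart (memLp_one_iff_integrable.2 hψ.integrable))).const_mul _)
  have mem_classical : MemLp (fun x ↦ ψ x + 2 * c * evenPart ψ x) 2 :=
    hψ.memLp_two.add ((memLp_evenPart hψ.memLp_two).const_mul _)
  set T := ContinuousLinearMap.adjoint Ωp (Ωm u)
  calc eLpNorm (fun x ↦ T x - (ψ x + 2 * c * evenPart ψ x)) 2 volume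
      = eLpNorm (T - mem_classical.toLp : Lp ℂ 2 volume) 2 volume := by
        refine eLpNorm_congr_ae ?_
        filter_upwards [Lp.coeFn_sub T mem_classical.toLp, mem_classical.coeFn_toLp] with x hx hx'
        rw [hx, Pi.sub_apply, hx']
    _ = eLpNorm (𝓕 T - 𝓕 mem_classical.toLp : Lp ℂ 2 volume) 2 volume := by
        rw [← eLpNorm_fourier_Lp, sub_eq_add_neg, FourierTransform.fourier_add,
          FourierTransform.fourier_neg, ← sub_eq_add_neg]
    _ = _ := by
        refine eLpNorm_congr_ae ?_
        filter_upwards [Lp.coeFn_sub (𝓕 T) (𝓕 mem_classical.toLp),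
          fourier_adjoint_waveOperator_ae_eq ha hΩp hΩm hψ hu,
          fourier_toLp_ae_eq int_classical mem_classical] with ξ hξ hT hc
        rw [hξ, Pi.sub_apply, hT, hc, fourier_add_const_mul_evenPart hψ.integrable]
        simp only [scatteringFourier]
        ring

end ScatteringOperator

section Gaussian

variable {A : ℝ → ℂ} {μ : ℝ} {v : ℝ≥0}

lemma eLpNorm_mul_of_sq_norm_eq_gaussianPDFReal (hv : v ≠ 0)
    (hA : ∀ x, ‖A x‖ ^ 2 = gaussianPDFReal μ v x) (u : ℝ → ℂ) :
    eLpNorm (fun x ↦ u x * A x) 2 volume = eLpNorm u 2 (gaussianReal μ v) := by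
  have enorm_sq (x : ℝ) : ‖A x‖ₑ ^ 2 = gaussianPDF μ v x := by
    rw [gaussianPDF, ← hA, ← ofReal_norm, ENNReal.ofReal_pow (norm_nonneg _)]
  simp only [eLpNorm_eq_lintegral_rpow_enorm_toReal two_ne_zero ENNReal.ofNat_ne_top,
    gaussianReal_of_var_ne_zero μ hv, ENNReal.toReal_ofNat, ENNReal.rpow_ofNat]
  rw [lintegral_withDensity_eq_lintegral_mul_non_measurable _ (measurable_gaussianPDF μ v)
    (ae_of_all _ fun _ ↦ gaussianPDF_lt_top)]
  simp only [enorm_mul, mul_pow, enorm_sq, Pi.mul_apply, mul_comm]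

lemma memLp_two_of_sq_norm_eq_gaussianPDFReal (hA_meas : AEStronglyMeasurable A)
    (hA : ∀ x, ‖A x‖ ^ 2 = gaussianPDFReal μ v x) : MemLp A 2 := by
  rw [memLp_two_iff_integrable_sq_norm hA_meas]
  simpa only [hA] using integrable_gaussianPDFReal μ v

lemma sqrt_gaussianPDFReal (μ : ℝ) (v : ℝ≥0) (x : ℝ) :
    √(gaussianPDFReal μ v x) =
      √(√(2 * Real.pi * v))⁻¹ * √(2 * Real.pi * (2 * v : ℝ≥0)) * gaussianPDFReal μ (2 * v) x := by
  rcases eq_or_ne v 0 with rfl | hv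
  · simp
  · have : 0 < (v : ℝ) := by positivity
    have : √(2 * Real.pi * (2 * v : ℝ≥0)) ≠ 0 := by positivity
    rw [gaussianPDFReal, gaussianPDFReal, Real.sqrt_mul (by positivity), ← Real.exp_half,
      mul_assoc (√_), mul_inv_cancel_left₀ this]
    congr 2
    push_cast
    field_simp

lemma integrable_of_sq_norm_eq_gaussianPDFReal (hA_meas : AEStronglyMeasurable A)
    (hA : ∀ x, ‖A x‖ ^ 2 = gaussianPDFReal μ v x) : Integrable A := by
  rw [← integrable_norm_iff hA_meas]
  have norm_eq : (fun x ↦ ‖A x‖) = fun x ↦ √(gaussianPDFReal μ v x) := by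
    ext x
    rw [← hA, Real.sqrt_sq (norm_nonneg _)]
  simp only [norm_eq, sqrt_gaussianPDFReal]
  exact (integrable_gaussianPDFReal μ (2 * v)).const_mul _

lemma eLpNorm_sub_mean_gaussianReal (μ : ℝ) (v : ℝ≥0) :
    eLpNorm (fun x ↦ x - μ) 2 (gaussianReal μ v) = ENNReal.ofReal √v := by
  have second_moment : ∫⁻ x, ‖x - μ‖ₑ ^ 2 ∂gaussianReal μ v = v := by
    have := (memLp_id_gaussianReal (μ := μ) (v := v) 2).ofReal_variance_eq
    simpa only [variance_id_gaussianReal, ENNReal.ofReal_coe_nnreal, evariance, id,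
      integral_id_gaussianReal] using this.symm
  rw [eLpNorm_eq_lintegral_rpow_enorm_toReal two_ne_zero ENNReal.ofNat_ne_top]
  simp only [ENNReal.toReal_ofNat, ENNReal.rpow_ofNat, second_moment]
  rw [Real.sqrt_eq_rpow, ← ENNReal.ofReal_rpow_of_nonneg v.coe_nonneg (by norm_num),
    ENNReal.ofReal_coe_nnreal]

lemma eLpNorm_gaussianReal_le {u : ℝ → ℂ} {L B : ℝ} (hL : 0 ≤ L)
    (lipschitz : ∀ x, ‖u x‖ ≤ L * |x - μ|) (bound : ∀ x, ‖u x‖ ≤ B) :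
    eLpNorm u 2 (gaussianReal μ v) ≤ ENNReal.ofReal (min B (L * √v)) := by
  rw [ENNReal.ofReal_min]
  refine le_min ?_ ?_
  · simpa using eLpNorm_le_of_ae_bound (p := 2) (ae_of_all (gaussianReal μ v) bound)
  · rw [ENNReal.ofReal_mul hL, ← eLpNorm_sub_mean_gaussianReal μ v]
    exact eLpNorm_le_mul_eLpNorm_of_ae_le_mul (ae_of_all _ lipschitz) 2

lemma sq_norm_fourier_gaussian {b : ℝ} (hb : 0 < b) (c : ℂ) (ξ : ℝ) :
    ‖𝓕 (fun x : ℝ ↦ cexp (-Real.pi * b * x ^ 2 + 2 * Real.pi * c * x)) ξ‖ ^ 2 =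
      b⁻¹ * Real.exp (-(2 * Real.pi / b) * ((ξ - c.im) ^ 2 - c.re ^ 2)) := by
  have re_exponent : (-Real.pi / b * (ξ + I * c) ^ 2 : ℂ).re =
      -(Real.pi / b) * ((ξ - c.im) ^ 2 - c.re ^ 2) := by
    rw [neg_div, ← ofReal_div, ← ofReal_neg, re_ofReal_mul]
    simp only [sq, mul_re, add_re, add_im, ofReal_re, ofReal_im, I_re, I_im, mul_im]
    ring
  rw [fourier_gaussian_pi' (by simpa using hb)]
  dsimp only
  rw [norm_mul, norm_exp, re_exponent, mul_pow, norm_div, norm_one,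
    norm_cpow_eq_rpow_re_of_pos hb, ← Real.exp_nat_mul]
  have : ((1 / 2 : ℂ)).re = 1 / 2 := by norm_num
  rw [this, ← Real.sqrt_eq_rpow, div_pow, Real.sq_sqrt hb.le, one_pow, one_div]
  congr 2
  push_cast
  ring

end Gaussian

section CoherentState

variable {ℏ σ₀ : ℝ}

lemma coh_neg (ℏ : ℝ) (σ σ' : ℂ) (q p x : ℝ) :
    coh ℏ σ σ' (-q) (-p) x = coh ℏ σ σ' q p (-x) := by
  unfold coh
  congr 2
  push_cast
  ring

lemma sq_norm_coh_prefactor (hℏ : 0 < ℏ) (hσ : 0 < σ₀) :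
    ‖((2 * Real.pi * ℏ : ℝ) : ℂ) ^ (-(1 / 4 : ℂ)) * (σ₀ : ℂ) ^ (-(1 / 2 : ℂ))‖ ^ 2 =
      (√(2 * Real.pi * ℏ) * σ₀)⁻¹ := by
  have hp : 0 < 2 * Real.pi * ℏ := by positivity
  have re_quarter : (-(1 / 4 : ℂ)).re = -(1 / 4) := by norm_num
  have re_half : (-(1 / 2 : ℂ)).re = -(1 / 2) := by norm_num
  rw [norm_mul, norm_cpow_eq_rpow_re_of_pos hp, norm_cpow_eq_rpow_re_of_pos hσ, re_quarter,
    re_half, mul_pow, ← Real.rpow_mul_natCast hp.le, ← Real.rpow_mul_natCast hσ.le, mul_inv,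
    Real.sqrt_eq_rpow, ← Real.rpow_neg hp.le, ← Real.rpow_neg_one σ₀]
  norm_num

lemma exists_coh_eq_smul_cexp (hℏ : 0 < ℏ) (hσ : 0 < σ₀) (q p : ℝ) :
    ∃ K : ℂ, ‖K‖ ^ 2 = (√(2 * Real.pi * ℏ) * σ₀)⁻¹ * Real.exp (-(q ^ 2 / (2 * ℏ * σ₀ ^ 2))) ∧
      coh ℏ σ₀ (σ₀ : ℂ)⁻¹ q p = K • fun x : ℝ ↦ cexp (
        -Real.pi * (1 / (4 * Real.pi * ℏ * σ₀ ^ 2) : ℝ) * x ^ 2 + 2 * Real.pi *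
          ((q / (4 * Real.pi * ℏ * σ₀ ^ 2) : ℝ) + (p / (2 * Real.pi * ℏ) : ℝ) * I) * x) := by
  refine ⟨((2 * Real.pi * ℏ : ℝ) : ℂ) ^ (-(1 / 4 : ℂ)) * (σ₀ : ℂ) ^ (-(1 / 2 : ℂ)) *
    cexp ((-(q ^ 2 / (4 * ℏ * σ₀ ^ 2)) : ℝ) + (-(p * q / ℏ) : ℝ) * I), ?_, ?_⟩
  · rw [norm_mul, mul_pow, sq_norm_coh_prefactor hℏ hσ, norm_exp, ← Real.exp_nat_mul, add_re,
      ofReal_re, re_ofReal_mul, I_re, mul_zero, add_zero]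
    congr 2
    push_cast
    ring
  · ext x
    have := hℏ.ne'
    rw [Pi.smul_apply, smul_eq_mul, mul_assoc (_ * _), ← Complex.exp_add, coh]
    congr 2
    push_cast
    field_simp
    ring

lemma sq_norm_coh_eq_gaussianPDFReal (hℏ : 0 < ℏ) (hσ : 0 < σ₀) (q p x : ℝ) :
    ‖coh ℏ σ₀ (σ₀ : ℂ)⁻¹ q p x‖ ^ 2 = gaussianPDFReal q (ℏ * σ₀ ^ 2).toNNReal x := by
  have exponent : -((σ₀ : ℂ)⁻¹ * (x - q) ^ 2) / (4 * ℏ * σ₀) + I * p * (x - q) / ℏ =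
      (-((x - q) ^ 2 / (4 * ℏ * σ₀ ^ 2)) : ℝ) + (p * (x - q) / ℏ : ℝ) * I := by
    push_cast
    field_simp
  rw [coh, norm_mul, mul_pow, sq_norm_coh_prefactor hℏ hσ, norm_exp, exponent,
    ← Real.exp_nat_mul, add_re, ofReal_re, re_ofReal_mul, I_re, mul_zero, add_zero,
    gaussianPDFReal, Real.coe_toNNReal _ (by positivity), ← mul_assoc (2 * Real.pi),
    Real.sqrt_mul (by positivity) (σ₀ ^ 2), Real.sqrt_sq hσ.le]
  congr 2
  push_cast
  field_simp
  ring

lemma sq_norm_fourier_coh_eq_gaussianPDFReal (hℏ : 0 < ℏ) (hσ : 0 < σ₀) (q p ξ : ℝ) :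
    ‖𝓕 (coh ℏ σ₀ (σ₀ : ℂ)⁻¹ q p) ξ‖ ^ 2 =
      gaussianPDFReal (p / (2 * Real.pi * ℏ)) ((4 * Real.pi * σ₀) ^ 2 * ℏ)⁻¹.toNNReal ξ := by
  obtain ⟨K, norm_K, coh_eq⟩ := exists_coh_eq_smul_cexp hℏ hσ q p
  have sq_prefactor : (2 * √(2 * Real.pi * ℏ) * σ₀) ^ 2 = 8 * Real.pi * ℏ * σ₀ ^ 2 := by
    rw [mul_pow, mul_pow, Real.sq_sqrt (by positivity)]
    ring
  have sqrt_variance : √(2 * Real.pi * ((4 * Real.pi * σ₀) ^ 2 * ℏ)⁻¹) =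
      (2 * √(2 * Real.pi * ℏ) * σ₀)⁻¹ := by
    rw [Real.sqrt_eq_iff_eq_sq (by positivity) (by positivity), inv_pow, sq_prefactor]
    field_simp
    norm_num
  have prefactor : (√(2 * Real.pi * ℏ) * σ₀)⁻¹ * (1 / (4 * Real.pi * ℏ * σ₀ ^ 2))⁻¹ =
      2 * √(2 * Real.pi * ℏ) * σ₀ := by
    field_simp
    rw [Real.sq_sqrt (by positivity)]
    ring
  rw [coh_eq, fourier_const_smul, Pi.smul_apply, norm_smul,
    mul_pow, norm_K, sq_norm_fourier_gaussian (by positivity), mul_mul_mul_comm,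
    prefactor, ← Real.exp_add, gaussianPDFReal, Real.coe_toNNReal _ (by positivity),
    sqrt_variance, inv_inv]
  simp only [add_re, add_im, ofReal_re, ofReal_im, re_ofReal_mul, im_ofReal_mul, I_re, I_im]
  congr 2
  field_simp
  ring

lemma isFourierRegular_coh (hℏ : 0 < ℏ) (hσ : 0 < σ₀) (q p : ℝ) :
    IsFourierRegular (coh ℏ σ₀ (σ₀ : ℂ)⁻¹ q p) := by
  have hcont : Continuous (coh ℏ σ₀ (σ₀ : ℂ)⁻¹ q p) := by
    unfold coh
    fun_prop
  have hint := integrable_of_sq_norm_eq_gaussianPDFReal hcont.aestronglyMeasurable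
    (sq_norm_coh_eq_gaussianPDFReal hℏ hσ q p)
  exact ⟨hcont, hint, memLp_two_of_sq_norm_eq_gaussianPDFReal hcont.aestronglyMeasurable
    (sq_norm_coh_eq_gaussianPDFReal hℏ hσ q p),
    integrable_of_sq_norm_eq_gaussianPDFReal (continuous_fourier hint).aestronglyMeasurable
      (sq_norm_fourier_coh_eq_gaussianPDFReal hℏ hσ q p)⟩

end CoherentState

section Estimate

lemma inv_classical_denominator_eq_robinSymbol {ℏ m α : ℝ} (hℏ : 0 < ℏ) (hm : 0 < m)
    (hα : α ≠ 0) (p : ℝ) :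
    (1 - 2 * I * |p| / (m * (2 * α / ℏ : ℝ)))⁻¹ =
      -robinSymbol (ℏ ^ 2 / (m * α)) (-1) (p / ℏ) := by
  rw [robinSymbol, neg_inv, abs_div, abs_of_pos hℏ]
  congr 1
  have hmc : (m : ℂ) ≠ 0 := ofReal_ne_zero.2 hm.ne'
  have hαc : (α : ℂ) ≠ 0 := ofReal_ne_zero.2 hα
  have : (ℏ : ℂ) ≠ 0 := ofReal_ne_zero.2 hℏ.ne'
  push_cast
  field_simp
  ring

lemma rpow_div_rpow_two_thirds {x M : ℝ} (hx : 0 ≤ x) (hM : 0 ≤ M) :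
    (x / M ^ (2 / 3 : ℝ)) ^ (3 / 2 : ℝ) = x ^ (3 / 2 : ℝ) / M := by
  rw [Real.div_rpow hx (by positivity), ← Real.rpow_mul hM]
  norm_num

lemma min_two_rpow_le {ε lam : ℝ} (hε : 0 < ε) (hlam : 0 < lam) :
    min 2 (ε ^ (3 / 2 : ℝ)) ≤
      4 * (ε ^ (3 / 2 - lam) + Real.exp (-(1 / 2) * ε⁻¹ ^ (2 * lam))) := by
  have power_pos := Real.rpow_pos_of_pos hε (3 / 2 - lam)
  rcases le_or_gt ε 1 with hle | hgt
  · have : ε ^ (3 / 2 : ℝ) ≤ ε ^ (3 / 2 - lam) :=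
      Real.rpow_le_rpow_of_exponent_ge hε hle (by linarith)
    have := Real.exp_pos (-(1 / 2) * ε⁻¹ ^ (2 * lam))
    exact (min_le_right _ _).trans (by linarith)
  · have : ε⁻¹ ^ (2 * lam) ≤ 1 :=
      Real.rpow_le_one (by positivity) (inv_le_one_of_one_le₀ hgt.le) (by positivity)
    have := Real.add_one_le_exp (-(1 / 2) * ε⁻¹ ^ (2 * lam))
    exact (min_le_left _ _).trans (by linarith)

lemma eLpNorm_robinSymbol_sub_mul_evenPart_le (a : ℝ) {A : ℝ → ℂ} {μ : ℝ} {v : ℝ≥0}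
    (hv : v ≠ 0) (hA_meas : AEStronglyMeasurable A)
    (hA : ∀ ξ, ‖A ξ‖ ^ 2 = gaussianPDFReal μ v ξ) :
    eLpNorm (fun ξ ↦ 2 * (robinSymbol a (-1) (2 * Real.pi * ξ) -
      robinSymbol a (-1) (2 * Real.pi * μ)) * evenPart A ξ) 2 volume ≤
      ENNReal.ofReal (min 2 (4 * Real.pi * |a| * √v)) := by
  set u : ℝ → ℂ := fun ξ ↦
    robinSymbol a (-1) (2 * Real.pi * ξ) - robinSymbol a (-1) (2 * Real.pi * μ)
  have hu_even : u.Even := fun ξ ↦ by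
    simp only [u, mul_neg, even_robinSymbol a (-1) (2 * Real.pi * ξ)]
  have hu_meas : Measurable u :=
    ((measurable_robinSymbol a (-1)).comp (measurable_const_mul _)).sub_const _
  have lipschitz (ξ : ℝ) : ‖u ξ‖ ≤ |a| * (2 * Real.pi) * |ξ - μ| := by
    refine (norm_robinSymbol_sub_le (by norm_num) _ _).trans_eq ?_
    rw [← mul_sub, abs_mul, abs_of_pos Real.two_pi_pos, ← mul_assoc]
  have bound (ξ : ℝ) : ‖u ξ‖ ≤ 1 := norm_robinSymbol_sub_le_one (by norm_num) _ _
  calc eLpNorm (fun ξ ↦ 2 * u ξ * evenPart A ξ) 2 volume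
      ≤ 2 * eLpNorm (fun ξ ↦ u ξ * A ξ) 2 volume :=
        eLpNorm_two_mul_mul_evenPart_le hu_even (hu_meas.aestronglyMeasurable.mul hA_meas)
    _ = 2 * eLpNorm u 2 (gaussianReal μ v) := by
        rw [eLpNorm_mul_of_sq_norm_eq_gaussianPDFReal hv hA]
    _ ≤ 2 * ENNReal.ofReal (min 1 (|a| * (2 * Real.pi) * √v)) := by
        gcongr
        exact eLpNorm_gaussianReal_le (by positivity) lipschitz bound
    _ = ENNReal.ofReal (min 2 (4 * Real.pi * |a| * √v)) := by
        rw [← ENNReal.ofReal_ofNat, ← ENNReal.ofReal_mul zero_le_two,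
          mul_min_of_nonneg _ _ zero_le_two]
        congr 2 <;> ring

lemma resonance_mul_momentum_spread {ℏ m σ₀ α : ℝ} (hℏ : 0 < ℏ) (hm : 0 < m) (hσ : 0 < σ₀) :
    4 * Real.pi * |ℏ ^ 2 / (m * α)| * √((4 * Real.pi * σ₀) ^ 2 * ℏ)⁻¹ =
      (ℏ / (m * |α| * σ₀) ^ (2 / 3 : ℝ)) ^ (3 / 2 : ℝ) := by
  have rpow_three_halves : ℏ ^ (3 / 2 : ℝ) = ℏ * √ℏ := by
    rw [show (3 / 2 : ℝ) = 1 + 1 / 2 by norm_num, Real.rpow_add hℏ, Real.rpow_one,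
      Real.sqrt_eq_rpow]
  rw [rpow_div_rpow_two_thirds hℏ.le (by positivity), rpow_three_halves, Real.sqrt_inv,
    Real.sqrt_mul (by positivity), Real.sqrt_sq (by positivity), abs_div, abs_mul,
    abs_of_pos hm, abs_of_pos (pow_pos hℏ 2)]
  field_simp
  rw [Real.sq_sqrt hℏ.le]

end Estimate

end DeltaScattering

open DeltaScattering

theorem statement3_general {ℏ m σ₀ α : ℝ} (hℏ : 0 < ℏ) (hm : 0 < m) (hσ : 0 < σ₀) (hα : α ≠ 0)
    {Ωp Ωm : Lp ℂ 2 (volume : Measure ℝ) →L[ℂ] Lp ℂ 2 (volume : Measure ℝ)}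
    (hΩp : IsWaveOperator ℏ m α 1 Ωp) (hΩm : IsWaveOperator ℏ m α (-1) Ωm) (q p : ℝ)
    {ψL : Lp ℂ 2 (volume : Measure ℝ)}
    (hψL : ψL =ᵐ[volume] coh ℏ (σ₀ : ℂ) (σ₀ : ℂ)⁻¹ q p) :
    eLpNorm (fun x : ℝ ↦
        ContinuousLinearMap.adjoint Ωp (Ωm ψL) x -
          (coh ℏ (σ₀ : ℂ) (σ₀ : ℂ)⁻¹ q p x -
            (1 - 2 * Complex.I * ((|p| : ℝ) : ℂ) / ((m : ℂ) * ((2 * α / ℏ : ℝ) : ℂ)))⁻¹ *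
              (coh ℏ (σ₀ : ℂ) (σ₀ : ℂ)⁻¹ q p x + coh ℏ (σ₀ : ℂ) (σ₀ : ℂ)⁻¹ (-q) (-p) x)))
        2 volume ≤
      ENNReal.ofReal (min 2 ((ℏ / (m * |α| * σ₀) ^ (2 / 3 : ℝ)) ^ (3 / 2 : ℝ))) := by
  have ha : ℏ ^ 2 / (m * α) ≠ 0 := by positivity
  have hψ := isFourierRegular_coh hℏ hσ q p
  have variance_pos : 0 < ((4 * Real.pi * σ₀) ^ 2 * ℏ)⁻¹ := by positivity
  have momentum : p / ℏ = 2 * Real.pi * (p / (2 * Real.pi * ℏ)) := by field_simp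
  have classical_eq : (fun x : ℝ ↦ ContinuousLinearMap.adjoint Ωp (Ωm ψL) x -
      (coh ℏ (σ₀ : ℂ) (σ₀ : ℂ)⁻¹ q p x -
        (1 - 2 * Complex.I * ((|p| : ℝ) : ℂ) / ((m : ℂ) * ((2 * α / ℏ : ℝ) : ℂ)))⁻¹ *
          (coh ℏ (σ₀ : ℂ) (σ₀ : ℂ)⁻¹ q p x + coh ℏ (σ₀ : ℂ) (σ₀ : ℂ)⁻¹ (-q) (-p) x))) =
      fun x ↦ ContinuousLinearMap.adjoint Ωp (Ωm ψL) x -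
        (coh ℏ σ₀ (σ₀ : ℂ)⁻¹ q p x + 2 * robinSymbol (ℏ ^ 2 / (m * α)) (-1) (p / ℏ) *
          evenPart (coh ℏ σ₀ (σ₀ : ℂ)⁻¹ q p) x) := by
    ext x
    rw [inv_classical_denominator_eq_robinSymbol hℏ hm hα, coh_neg, evenPart]
    ring
  rw [classical_eq, eLpNorm_adjoint_waveOperator_sub ha hΩp hΩm hψ hψL, momentum,
    ← resonance_mul_momentum_spread hℏ hm hσ]
  simpa only [Real.coe_toNNReal _ variance_pos.le] using
    eLpNorm_robinSymbol_sub_mul_evenPart_le (ℏ ^ 2 / (m * α))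
      (Real.toNNReal_pos.2 variance_pos).ne' (continuous_fourier hψ.integrable).aestronglyMeasurable
      (sq_norm_fourier_coh_eq_gaussianPDFReal hℏ hσ q p)

/-- Theorem 2, Eq. (t2_2): semiclassical approximation of the quantum
scattering operator `S_α = (Ω_α^+)^* ∘ Ω_α^-` applied to a coherent state by the classical
scattering operator `S^cl_β`, `β = 2α/ℏ`.  The quantum wave operators are the bounded operators
on `L²(ℝ)` given a.e. by the stationary representation, and `(·)^*` is the Hilbert adjoint. -/
theorem statement3 :
    ∃ C : ℝ, 0 < C ∧
      ∀ (ℏ m σ₀ α : ℝ), 0 < ℏ → 0 < m → 0 < σ₀ → α ≠ 0 →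
      ∀ (Ωp Ωm : Lp ℂ 2 (volume : Measure ℝ) →L[ℂ] Lp ℂ 2 (volume : Measure ℝ)),
      (∀ (g : ℝ → ℂ), Integrable g volume → ∀ gL : Lp ℂ 2 (volume : Measure ℝ),
        (gL : ℝ → ℂ) =ᵐ[volume] g → (Ωp gL : ℝ → ℂ) =ᵐ[volume] waveOpQ ℏ m α 1 g) →
      (∀ (g : ℝ → ℂ), Integrable g volume → ∀ gL : Lp ℂ 2 (volume : Measure ℝ),
        (gL : ℝ → ℂ) =ᵐ[volume] g → (Ωm gL : ℝ → ℂ) =ᵐ[volume] waveOpQ ℏ m α (-1) g) →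
      ∀ lam : ℝ, 0 < lam →
      ∀ q p : ℝ, q * p ≠ 0 →
      ∀ ψL : Lp ℂ 2 (volume : Measure ℝ),
        (ψL : ℝ → ℂ) =ᵐ[volume] (fun x => coh ℏ (σ₀ : ℂ) ((σ₀ : ℂ))⁻¹ q p x) →
      eLpNorm (fun x : ℝ =>
          (ContinuousLinearMap.adjoint Ωp (Ωm ψL) : ℝ → ℂ) x -
          (coh ℏ (σ₀ : ℂ) ((σ₀ : ℂ))⁻¹ q p x -
            (1 - 2 * Complex.I * ((|p| : ℝ) : ℂ) / ((m : ℂ) * ((2 * α / ℏ : ℝ) : ℂ)))⁻¹ *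
              (coh ℏ (σ₀ : ℂ) ((σ₀ : ℂ))⁻¹ q p x + coh ℏ (σ₀ : ℂ) ((σ₀ : ℂ))⁻¹ (-q) (-p) x)))
        2 volume
      ≤ ENNReal.ofReal (C * (
          (ℏ / (m * |α| * σ₀) ^ ((2 : ℝ) / 3)) ^ ((3 : ℝ) / 2 - lam)
        + Real.exp (-(1 / 2) * ((m * |α| * σ₀) ^ ((2 : ℝ) / 3) / ℏ) ^ (2 * lam))
        + Real.exp (-(σ₀ ^ 2 * p ^ 2 / ℏ))
        + Real.exp (-(q ^ 2 / (8 * ℏ * σ₀ ^ 2)))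
        + Real.exp (-(m * |α| * |q| / (8 * ℏ ^ 2))))) := by
  refine ⟨4, four_pos, fun ℏ m σ₀ α hℏ hm hσ hα Ωp Ωm hΩp hΩm lam hlam q p _ ψL hψL ↦
    (statement3_general hℏ hm hσ hα hΩp hΩm q p hψL).trans (ENNReal.ofReal_le_ofReal ?_)⟩
  refine (min_two_rpow_le (by positivity) hlam).trans (mul_le_mul_of_nonneg_left ?_ four_pos.le)
  rw [inv_div, add_assoc, add_assoc]
  exact le_add_of_nonneg_right (by positivity)
end

section
/- Let m>0, z∈ℂ with Im z ≠ 0, and let q,p∈ℝ with q≠0 and p≠0. Then lim_{R→∞} (1/(2π)) ∫_{−R}^{R} e^{ikq}/((kp/m) − z) dk = θ(qp·Im z)·sgn(Im z)·(i m/|p|)·e^{i m z q/p}, where θ is the Heaviside function (θ(x)=1 for x>0, θ(x)=0 for x≤0). In particular the limit is 0 whenever qp·Im z < 0. -/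
/-!
The integral converges only conditionally. After the affine change `k - w = -I (a + I k)`, with
`a = -I w`, one integration by parts turns it into the absolutely convergent
`∫ exp (I k q) / (a + I k) ^ 2`, up to boundary terms that vanish in the limit. For `0 < a.re` the
latter is given pointwise by Fourier inversion, because `1 / (a + 2 π I ξ) ^ 2` is the Fourier
transform of the continuous integrable function `x ↦ max x 0 * exp (-a x)`. Dividing by the factor
`q` produced by the integration by parts turns the ramp `max q 0` into the Heaviside step, and the
reflection `k ↦ -k` reduces `a.re < 0` to `0 < a.re`.
-/

open MeasureTheory Complex Filter

noncomputable section

open scoped FourierTransform Topology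

lemma heav_mul_of_pos {c : ℝ} (hc : 0 < c) (x : ℝ) : heav (x * c) = heav x := by
  simp only [heav, mul_pos_iff_of_pos_right hc]

lemma sign_div_div_self (x : ℝ) {b : ℝ} (hb : b ≠ 0) :
    Real.sign (x / b) / b = Real.sign x / |b| := by
  have hpos : ∀ {c : ℝ}, 0 < c → Real.sign (x / c) = Real.sign x := fun {c} hc => by
    simp only [Real.sign, div_neg_iff, div_pos_iff, hc, hc.not_gt, and_true, and_false,
      false_or, or_false]
  rcases hb.lt_or_gt with hb | hb
  · rw [abs_of_neg hb, ← hpos (neg_pos.mpr hb), div_neg x, Real.sign_neg, neg_div_neg_eq]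
  · rw [abs_of_pos hb, hpos hb]

/-- The ramp `max x 0` damped by the exponential of complex rate `a`. It is the convolution square
of the damped Heaviside step, and unlike the step it is continuous, so that Fourier inversion holds
at every point. -/
def dampedRamp (a : ℂ) (x : ℝ) : ℂ := (max x 0 : ℝ) * exp (-a * x)

section DampedRamp

variable {a : ℂ}

lemma dampedRamp_of_nonneg {x : ℝ} (hx : 0 ≤ x) : dampedRamp a x = x * exp (-a * x) := by
  rw [dampedRamp, max_eq_left hx]

lemma dampedRamp_of_nonpos {x : ℝ} (hx : x ≤ 0) : dampedRamp a x = 0 := by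
  rw [dampedRamp, max_eq_right hx, ofReal_zero, zero_mul]

lemma dampedRamp_eq_heav (q : ℝ) : dampedRamp a q = heav q * q * exp (-a * q) := by
  rcases lt_or_ge 0 q with hq | hq
  · simp [dampedRamp_of_nonneg hq.le, heav, hq]
  · simp [dampedRamp_of_nonpos hq, heav, hq.not_gt]

lemma continuous_dampedRamp (a : ℂ) : Continuous (dampedRamp a) := by
  unfold dampedRamp
  fun_prop

lemma integrableOn_mul_exp_neg_mul_Ioi (ha : 0 < a.re) :
    IntegrableOn (fun x : ℝ => x * exp (-a * x)) (Set.Ioi 0) := by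
  have hreal : IntegrableOn (fun x : ℝ => x * Real.exp (-a.re * x)) (Set.Ioi 0) := by
    simpa only [Real.rpow_one] using
      integrableOn_rpow_mul_exp_neg_mul_rpow (p := 1) (s := 1) (by norm_num) one_pos ha
  refine Integrable.mono hreal (by fun_prop) (Eventually.of_forall fun x => le_of_eq ?_)
  simp [norm_exp]

lemma integral_mul_exp_neg_mul_Ioi (ha : 0 < a.re) :
    ∫ x : ℝ in Set.Ioi 0, x * exp (-a * x) = (a ^ 2)⁻¹ := by
  have ha0 : a ≠ 0 := by
    rintro rfl
    exact ha.false
  have hexp : IntegrableOn (fun x : ℝ => exp (-a * x)) (Set.Ioi 0) :=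
    integrableOn_exp_mul_complex_Ioi (by simpa using ha) 0
  let F : ℝ → ℂ := fun x => -a⁻¹ * (x * exp (-a * x)) - (a ^ 2)⁻¹ * exp (-a * x)
  have hderiv : ∀ x : ℝ, HasDerivAt F (x * exp (-a * x)) x := fun x => by
    have hid : HasDerivAt (fun x : ℝ => (x : ℂ)) 1 x := ofRealCLM.hasDerivAt
    have he := (hid.const_mul (-a)).cexp
    refine (((hid.mul he).const_mul (-a⁻¹)).sub (he.const_mul (a ^ 2)⁻¹)).congr_deriv ?_
    field_simp
    ring
  have hF : IntegrableOn F (Set.Ioi 0) :=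
    ((integrableOn_mul_exp_neg_mul_Ioi ha).const_mul _).sub (hexp.const_mul _)
  have hlim : Tendsto F atTop (𝓝 0) :=
    tendsto_zero_of_hasDerivAt_of_integrableOn_Ioi (fun x _ => hderiv x)
      (integrableOn_mul_exp_neg_mul_Ioi ha) hF
  rw [integral_Ioi_of_hasDerivAt_of_tendsto' (fun x _ => hderiv x)
    (integrableOn_mul_exp_neg_mul_Ioi ha) hlim]
  simp [F]

lemma integrable_dampedRamp (ha : 0 < a.re) : Integrable (dampedRamp a) := by
  refine (integrableOn_iff_integrable_of_support_subset (s := Set.Ioi 0) fun x hx => ?_).mp ?_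
  · exact not_le.mp fun hx0 => hx (dampedRamp_of_nonpos hx0)
  · exact (integrableOn_mul_exp_neg_mul_Ioi ha).congr_fun
      (fun x hx => (dampedRamp_of_nonneg (le_of_lt hx)).symm) measurableSet_Ioi

lemma integral_dampedRamp (ha : 0 < a.re) : ∫ x, dampedRamp a x = (a ^ 2)⁻¹ := by
  rw [← setIntegral_eq_integral_of_forall_compl_eq_zero (s := Set.Ioi 0)
      fun x hx => dampedRamp_of_nonpos (not_lt.mp hx),
    setIntegral_congr_fun measurableSet_Ioi fun x hx => dampedRamp_of_nonneg (le_of_lt hx),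
    integral_mul_exp_neg_mul_Ioi ha]

lemma fourier_dampedRamp (ha : 0 < a.re) (ξ : ℝ) :
    𝓕 (dampedRamp a) ξ = ((a + (2 * Real.pi * ξ : ℝ) * I) ^ 2)⁻¹ := by
  rw [Real.fourier_real_eq_integral_exp_smul, ← integral_dampedRamp (by simpa using ha)]
  refine integral_congr_ae (Eventually.of_forall fun x => ?_)
  simp only [dampedRamp, smul_eq_mul]
  rw [mul_left_comm, ← exp_add]
  congr 2
  push_cast
  ring

end DampedRamp

section ImaginaryLine

variable {a : ℂ}

lemma add_ofReal_mul_I_ne_zero (ha : a.re ≠ 0) (k : ℝ) : a + k * I ≠ 0 := fun h =>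
  ha (by simpa using congrArg re h)

lemma hasDerivAt_inv_add_ofReal_mul_I (ha : a.re ≠ 0) (k : ℝ) :
    HasDerivAt (fun k : ℝ => (a + k * I)⁻¹) (-I * ((a + k * I) ^ 2)⁻¹) k := by
  have hlin : HasDerivAt (fun k : ℝ => a + k * I) I k := by
    simpa using (ofRealCLM.hasDerivAt.mul_const I).const_add a
  simpa only [div_eq_mul_inv] using hlin.fun_inv (add_ofReal_mul_I_ne_zero ha k)

lemma tendsto_inv_add_ofReal_mul_I_cocompact (a : ℂ) :
    Tendsto (fun k : ℝ => (a + k * I)⁻¹) (cocompact ℝ) (𝓝 0) := by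
  have hline : Isometry fun k : ℝ => a + k * I :=
    Isometry.of_dist_eq fun x y => by simp [dist_eq, ← sub_mul, ← ofReal_sub, Real.dist_eq]
  rw [← Metric.cobounded_eq_cocompact]
  exact tendsto_inv₀_cobounded.comp hline.antilipschitz.tendsto_cobounded

lemma integrable_inv_add_ofReal_mul_I_sq (ha : a.re ≠ 0) :
    Integrable fun k : ℝ => ((a + k * I) ^ 2)⁻¹ := by
  have hlorentz : Integrable fun k : ℝ => (a.re ^ 2)⁻¹ * (1 + ((k + a.im) / a.re) ^ 2)⁻¹ :=
    ((integrable_inv_one_add_sq.comp_div ha).comp_add_right a.im).const_mul _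
  have hcont : Continuous fun k : ℝ => ((a + k * I) ^ 2)⁻¹ :=
    Continuous.inv₀ (by fun_prop) fun k => pow_ne_zero 2 (add_ofReal_mul_I_ne_zero ha k)
  refine hlorentz.mono' hcont.aestronglyMeasurable (Eventually.of_forall fun k => le_of_eq ?_)
  have hnorm : ‖a + k * I‖ ^ 2 = a.re ^ 2 * (1 + ((k + a.im) / a.re) ^ 2) := by
    rw [Complex.sq_norm, normSq_apply]
    simp only [add_re, add_im, mul_re, mul_im, ofReal_re, ofReal_im, I_re, I_im]
    field_simp
    ring
  rw [norm_inv, norm_pow, hnorm, mul_inv]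

lemma integral_exp_mul_inv_add_ofReal_mul_I_sq (ha : 0 < a.re) (q : ℝ) :
    ∫ k : ℝ, exp (I * k * q) * ((a + k * I) ^ 2)⁻¹ = 2 * Real.pi * dampedRamp a q := by
  have hfourier : 𝓕 (dampedRamp a) = fun ξ : ℝ => ((a + (2 * Real.pi * ξ : ℝ) * I) ^ 2)⁻¹ :=
    funext (fourier_dampedRamp ha)
  have hint : Integrable (𝓕 (dampedRamp a)) := by
    rw [hfourier]
    exact (integrable_inv_add_ofReal_mul_I_sq ha.ne').comp_mul_left' Real.two_pi_pos.ne'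
  have hinv : 𝓕⁻ (𝓕 (dampedRamp a)) q = dampedRamp a q := by
    rw [(continuous_dampedRamp a).fourierInv_fourier_eq (integrable_dampedRamp ha) hint]
  have hscale : ∫ ξ : ℝ, exp (I * (2 * Real.pi * ξ : ℝ) * q) *
        ((a + (2 * Real.pi * ξ : ℝ) * I) ^ 2)⁻¹ =
      (2 * Real.pi : ℂ)⁻¹ * ∫ k : ℝ, exp (I * k * q) * ((a + k * I) ^ 2)⁻¹ := by
    rw [Measure.integral_comp_mul_left
      (fun k : ℝ => exp (I * k * q) * ((a + k * I) ^ 2)⁻¹), abs_of_pos (by positivity), real_smul,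
      ofReal_inv, ofReal_mul, ofReal_ofNat]
  have hpi : (2 * Real.pi : ℂ) ≠ 0 := by exact_mod_cast Real.two_pi_pos.ne'
  rw [← inv_mul_eq_iff_eq_mul₀ hpi, ← hscale, ← hinv, Real.fourierInv_eq', hfourier]
  refine integral_congr_ae (Eventually.of_forall fun ξ => ?_)
  simp only [smul_eq_mul, RCLike.inner_apply, conj_trivial]
  congr 2
  push_cast
  ring

end ImaginaryLine

lemma tendsto_intervalIntegral_exp_smul_of_integrable_deriv {E : Type*} [NormedAddCommGroup E]
    [NormedSpace ℂ E] [CompleteSpace E] {f f' : ℝ → E} (hf : ∀ k, HasDerivAt f (f' k) k)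
    (hf' : Integrable f') (hlim : Tendsto f (cocompact ℝ) (𝓝 0)) {q : ℝ} (hq : q ≠ 0) :
    Tendsto (fun R : ℝ => ∫ k in (-R)..R, exp (I * k * q) • f k) atTop
      (𝓝 ((I / q) • ∫ k : ℝ, exp (I * k * q) • f' k)) := by
  have hIq : I * q ≠ 0 := mul_ne_zero I_ne_zero (ofReal_ne_zero.mpr hq)
  have hnorm : ∀ k : ℝ, ‖exp (I * k * q)‖ = 1 := fun k => by simp [norm_exp]
  have hexp : ∀ k : ℝ, HasDerivAt (fun k : ℝ => exp (I * k * q)) (I * q * exp (I * k * q)) k :=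
    fun k => by
      have hlin : HasDerivAt (fun k : ℝ => I * k * q) (I * q) k := by
        simpa using (ofRealCLM.hasDerivAt.const_mul I).mul_const (q : ℂ)
      simpa only [mul_comm] using hlin.cexp
  have hparts : ∀ R : ℝ, ∫ k in (-R)..R, exp (I * k * q) • f k = (I * q)⁻¹ •
      (exp (I * R * q) • f R - exp (I * (-R : ℝ) * q) • f (-R) -
        ∫ k in (-R)..R, exp (I * k * q) • f' k) := fun R => by
    rw [intervalIntegral.integral_smul_deriv_eq_deriv_smul (fun k _ => hexp k) (fun k _ => hf k)
      (Continuous.intervalIntegrable (by fun_prop) _ _) hf'.intervalIntegrable, sub_sub_cancel]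
    simp only [mul_smul _ (exp _), intervalIntegral.integral_smul, inv_smul_smul₀ hIq]
  have hboundary : Tendsto (fun k : ℝ => exp (I * k * q) • f k) (cocompact ℝ) (𝓝 0) := by
    rw [tendsto_zero_iff_norm_tendsto_zero] at hlim ⊢
    simpa only [norm_smul, hnorm, one_mul] using hlim
  have hint : Integrable fun k : ℝ => exp (I * k * q) • f' k :=
    hf'.bdd_smul 1 (by fun_prop) (Eventually.of_forall fun k => (hnorm k).le)
  have hright := hboundary.comp (tendsto_id.mono_right atTop_le_cocompact)
  have hleft := hboundary.comp (tendsto_neg_atTop_atBot.mono_right atBot_le_cocompact)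
  have hmain := intervalIntegral_tendsto_integral hint tendsto_neg_atTop_atBot tendsto_id
  have hvalue : (I / q) • ∫ k : ℝ, exp (I * k * q) • f' k =
      (I * q)⁻¹ • (0 - 0 - ∫ k : ℝ, exp (I * k * q) • f' k) := by
    rw [sub_zero, zero_sub, smul_neg, ← neg_smul, mul_inv, inv_I, neg_mul, neg_neg,
      div_eq_mul_inv]
  rw [hvalue]
  exact (((hright.sub hleft).sub hmain).const_smul (I * q : ℂ)⁻¹).congr fun R => (hparts R).symm

lemma tendsto_integral_exp_div_add_mul_I_of_re_pos {a : ℂ} (ha : 0 < a.re) {q : ℝ} (hq : q ≠ 0) :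
    Tendsto (fun R : ℝ => ∫ k in (-R)..R, exp (I * k * q) / (a + k * I)) atTop
      (𝓝 (2 * Real.pi * heav q * exp (-a * q))) := by
  have hlim := tendsto_intervalIntegral_exp_smul_of_integrable_deriv
    (hasDerivAt_inv_add_ofReal_mul_I ha.ne')
    ((integrable_inv_add_ofReal_mul_I_sq ha.ne').const_mul (-I))
    (tendsto_inv_add_ofReal_mul_I_cocompact a) hq
  simp only [smul_eq_mul, ← div_eq_mul_inv] at hlim
  convert hlim using 2
  have hqC : (q : ℂ) ≠ 0 := ofReal_ne_zero.mpr hq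
  simp only [mul_left_comm _ (-I), div_eq_mul_inv _ (_ ^ 2)]
  rw [integral_const_mul, integral_exp_mul_inv_add_ofReal_mul_I_sq ha, dampedRamp_eq_heav]
  calc (2 * Real.pi * heav q * exp (-a * q) : ℂ)
      = -(I * I) * (q / q) * (2 * Real.pi * heav q * exp (-a * q)) := by
        rw [I_mul_I, div_self hqC, neg_neg, one_mul, one_mul]
    _ = I / q * (-I * (2 * Real.pi * (heav q * q * exp (-a * q)))) := by ring

lemma integral_exp_div_add_mul_I_eq_neg (a : ℂ) (q R : ℝ) :
    ∫ k in (-R)..R, exp (I * k * q) / (a + k * I) =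
      -∫ k in (-R)..R, exp (I * k * (-q : ℝ)) / (-a + k * I) := by
  have hreflect := intervalIntegral.integral_comp_neg (a := -R) (b := R)
    fun k : ℝ => exp (I * k * q) / (a + k * I)
  rw [neg_neg] at hreflect
  rw [← hreflect, ← intervalIntegral.integral_neg]
  refine intervalIntegral.integral_congr fun k _ => ?_
  rw [← div_neg]
  push_cast
  congr 2 <;> ring

lemma tendsto_integral_exp_div_add_mul_I {a : ℂ} (ha : a.re ≠ 0) {q : ℝ} (hq : q ≠ 0) :
    Tendsto (fun R : ℝ => ∫ k in (-R)..R, exp (I * k * q) / (a + k * I)) atTop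
      (𝓝 (2 * Real.pi * heav (q * a.re) * Real.sign a.re * exp (-a * q))) := by
  rcases ha.lt_or_gt with hneg | hpos
  · have hreflected := (tendsto_integral_exp_div_add_mul_I_of_re_pos (a := -a)
      (by simpa using hneg) (neg_ne_zero.mpr hq)).neg
    simp only [← integral_exp_div_add_mul_I_eq_neg] at hreflected
    convert hreflected using 2
    rw [← neg_mul_neg q, heav_mul_of_pos (neg_pos.mpr hneg), Real.sign_of_neg hneg]
    push_cast
    ring_nf
  · rw [heav_mul_of_pos hpos, Real.sign_of_pos hpos, ofReal_one, mul_one]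
    exact tendsto_integral_exp_div_add_mul_I_of_re_pos hpos hq

lemma tendsto_integral_exp_div_mul_sub {z : ℂ} (hz : z.im ≠ 0) {b q : ℝ} (hb : b ≠ 0)
    (hq : q ≠ 0) :
    Tendsto (fun R : ℝ => ∫ k in (-R)..R, exp (I * k * q) / (k * b - z)) atTop
      (𝓝 (2 * Real.pi * heav (q * b * z.im) * Real.sign z.im * (I / |b|) *
        exp (I * z * q / b))) := by
  have hbC : (b : ℂ) ≠ 0 := ofReal_ne_zero.mpr hb
  have hre : (-I * z / b).re = z.im / b := by simp [div_ofReal_re]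
  have hcongr : ∀ k : ℝ, exp (I * k * q) / (k * b - z) =
      I / b * (exp (I * k * q) / (-I * z / b + k * I)) := fun k => by
    have hden : (k * b - z : ℂ) * I = b * (-I * z / b + k * I) := by
      field_simp
      ring
    rw [div_mul_div_comm, ← hden, mul_comm I (exp _), mul_div_mul_right _ _ I_ne_zero]
  have hlim := (tendsto_integral_exp_div_add_mul_I (a := -I * z / b)
    (hre ▸ div_ne_zero hz hb) hq).const_mul (I / b)
  simp only [← intervalIntegral.integral_const_mul, ← hcongr, hre] at hlim
  have hheav : heav (q * (z.im / b)) = heav (q * b * z.im) := by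
    rw [← heav_mul_of_pos (by positivity : 0 < b ^ 2)]
    congr 1
    field_simp
  have hsign : (Real.sign (z.im / b) / b : ℂ) = Real.sign z.im / |b| := by
    exact_mod_cast sign_div_div_self z.im hb
  rw [hheav] at hlim
  convert hlim using 2
  calc _ = 2 * Real.pi * heav (q * b * z.im) * (Real.sign z.im / |b|) * I *
        exp (I * z * q / b) := by ring
    _ = _ := by
      rw [← hsign]
      ring_nf

/-- computation of the convolution kernel `g_z(q,p)` of the resolvent of
`L₀ = -i(p/m)∂_q`, as an improper symmetric integral. -/
theorem statement6 (m : ℝ) (hm : 0 < m) (z : ℂ) (hz : z.im ≠ 0) (q p : ℝ)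
    (hq : q ≠ 0) (hp : p ≠ 0) :
    Tendsto (fun R : ℝ =>
        (1 / (2 * (Real.pi : ℂ))) *
          ∫ k in (-R)..R, Complex.exp (Complex.I * (k : ℂ) * (q : ℂ)) /
            ((k : ℂ) * (p : ℂ) / (m : ℂ) - z))
      atTop
      (nhds (((heav (q * p * z.im) : ℝ) : ℂ) * ((Real.sign z.im : ℝ) : ℂ) *
        (Complex.I * (m : ℂ) / ((|p| : ℝ) : ℂ)) *
        Complex.exp (Complex.I * (m : ℂ) * z * (q : ℂ) / (p : ℂ)))) ∧
    (q * p * z.im < 0 →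
      Tendsto (fun R : ℝ =>
          (1 / (2 * (Real.pi : ℂ))) *
            ∫ k in (-R)..R, Complex.exp (Complex.I * (k : ℂ) * (q : ℂ)) /
              ((k : ℂ) * (p : ℂ) / (m : ℂ) - z))
        atTop (nhds 0)) := by
  have hkernel : Tendsto (fun R : ℝ => (1 / (2 * (Real.pi : ℂ))) *
      ∫ k in (-R)..R, exp (I * k * q) / (k * p / m - z)) atTop
      (𝓝 (heav (q * p * z.im) * Real.sign z.im * (I * m / |p|) * exp (I * m * z * q / p))) := by
    have hlim := (tendsto_integral_exp_div_mul_sub hz (div_ne_zero hp hm.ne') hq).const_mul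
      (1 / (2 * Real.pi : ℂ))
    have hheav : heav (q * (p / m) * z.im) = heav (q * p * z.im) := by
      rw [← heav_mul_of_pos hm]
      congr 1
      field_simp
    rw [hheav] at hlim
    simp only [abs_div, abs_of_pos hm, ofReal_div, ← mul_div_assoc] at hlim
    convert hlim using 2
    field_simp
  refine ⟨hkernel, fun hneg => ?_⟩
  simpa [heav, hneg.not_gt] using hkernel
end
end

section
/- Let m>0 and β∈ℝ\{0}. Define bounded linear operators on L²(ℝ²) by (W_β^±f)(q,p) := f(q,p) − θ(∓qp)·(1 ± 2i|p|/(mβ))⁻¹·f_ev(q,p), where f_ev(q,p) := f(q,p)+f(−q,−p). Then the classical scattering operator S^cl_β := (W_β^+)^* ∘ W_β^− (Hilbert adjoint in L²(ℝ²)) is given explicitly by (S^cl_β f)(q,p) = f(q,p) − (1 − 2i|p|/(mβ))⁻¹ · f_ev(q,p) for almost every (q,p)∈ℝ². -/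
open MeasureTheory Complex Filter

noncomputable section

/-- Classical wave operators `W_β^±`; `s = 1` gives `W_β^+`, `s = -1` gives `W_β^-`. -/
def Wcl (m β s : ℝ) (f : ℝ × ℝ → ℂ) : ℝ × ℝ → ℂ := fun z =>
  f z - ((heav (-(s * z.1 * z.2)) : ℝ) : ℂ) *
    (1 + (s : ℂ) * 2 * Complex.I * ((|z.2| : ℝ) : ℂ) / ((m : ℂ) * (β : ℂ)))⁻¹ *
    (f z + f (-z.1, -z.2))

/-!
Operations `f ↦ f - a f_ev` with even multipliers compose by `a, b ↦ a + b - 2ab`, because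
`(f - b f_ev)_ev = (1 - 2b) f_ev`, and passing to the adjoint conjugates the multiplier, because the
two integrands to be compared differ by an odd function. The multipliers of `W_β^+` and `W_β^-` live
on the disjoint regions `qp < 0` and `qp > 0`, so the product term vanishes, while conjugation turns
the factor `(1 + 2i|p|/(mβ))⁻¹` of the first into that of the second. The two pieces thus glue to a
single factor off the null set `qp = 0`.
-/

section InducedOperators

variable {α β γ E F G : Type*} [MeasurableSpace α] [MeasurableSpace β] [MeasurableSpace γ]
  [NormedAddCommGroup E] [NormedAddCommGroup F] [NormedAddCommGroup G]
  {μ : Measure α} {ν : Measure β} {ρ : Measure γ} {p q r : ENNReal}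

/-- The map `W` between Lebesgue spaces is given by the operation `T` on functions, whichever
representative of the argument `T` is applied to. -/
def IsInducedBy (W : Lp E p μ → Lp F q ν) (T : (α → E) → β → F) : Prop :=
  ∀ (f : α → E) (fL : Lp E p μ), fL =ᵐ[μ] f → W fL =ᵐ[ν] T f

theorem IsInducedBy.comp {V : Lp F q ν → Lp G r ρ} {W : Lp E p μ → Lp F q ν}
    {S : (β → F) → γ → G} {T : (α → E) → β → F} (hV : IsInducedBy V S) (hW : IsInducedBy W T) :
    IsInducedBy (V ∘ W) (S ∘ T) :=
  fun f fL hf ↦ hV (T f) (W fL) (hW f fL hf)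

end InducedOperators

section ReflectionPerturbation

variable {α 𝕜 E : Type*} [RCLike 𝕜] [NormedAddCommGroup E] {σ : α → α} {a b : α → 𝕜}

/-- The operation `f ↦ f - a • f_ev` with multiplier `a`, where `f_ev = f + f ∘ σ` is twice the even
part of `f` with respect to `σ`. The operators `W_β^±` are the case `σ = Neg.neg`. -/
def reflectionPerturbation [Module 𝕜 E] (σ : α → α) (a : α → 𝕜) (f : α → E) : α → E :=
  fun x ↦ f x - a x • (f x + f (σ x))

theorem reflectionPerturbation_comp [Module 𝕜 E] (hσ : Function.Involutive σ)
    (hb : ∀ x, b (σ x) = b x) :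
    reflectionPerturbation (E := E) σ a ∘ reflectionPerturbation σ b =
      reflectionPerturbation σ (a + b - 2 * (a * b)) := by
  funext f x
  simp only [reflectionPerturbation, Function.comp_apply, hσ x, hb x, Pi.add_apply, Pi.sub_apply,
    Pi.mul_apply, Pi.ofNat_apply]
  module

theorem inner_reflectionPerturbation_sub_inner [InnerProductSpace 𝕜 E] (f g : α → E) (x : α) :
    inner 𝕜 (reflectionPerturbation σ (star a) f x) (g x) -
        inner 𝕜 (f x) (reflectionPerturbation σ a g x) =
      a x * (inner 𝕜 (f x) (g (σ x)) - inner 𝕜 (f (σ x)) (g x)) := by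
  simp only [reflectionPerturbation, Pi.star_apply, RCLike.star_def, inner_sub_left,
    inner_sub_right, inner_smul_left, inner_smul_right, inner_add_left, inner_add_right,
    RCLike.conj_conj]
  ring

variable [MeasurableSpace α] {μ : Measure α}

theorem reflectionPerturbation_congr_ae [Module 𝕜 E] (hab : a =ᵐ[μ] b) (f : α → E) :
    reflectionPerturbation σ a f =ᵐ[μ] reflectionPerturbation σ b f := by
  filter_upwards [hab] with x hx
  rw [reflectionPerturbation, reflectionPerturbation, hx]

theorem memLp_reflectionPerturbation [NormedSpace 𝕜 E] {p : ENNReal} {f : α → E}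
    (hσ : MeasurePreserving σ μ μ) (ha : MemLp a ⊤ μ) (hf : MemLp f p μ) :
    MemLp (reflectionPerturbation σ a f) p μ :=
  hf.sub ((hf.add (hf.comp_measurePreserving hσ)).smul ha)

theorem integral_eq_zero_of_comp_eq_neg [NormedSpace ℝ E] {f : α → E}
    (hσ : MeasurePreserving σ μ μ) (hσ_emb : MeasurableEmbedding σ) (hf : ∀ x, f (σ x) = -f x) :
    ∫ x, f x ∂μ = 0 := by
  have hneg : ∫ x, f x ∂μ = -∫ x, f x ∂μ := by
    rw [← integral_neg, ← hσ.integral_comp hσ_emb f]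
    simp only [hf]
  have : IsAddTorsionFree E := .of_isTorsionFree ℝ E
  exact self_eq_neg.mp hneg

variable [InnerProductSpace 𝕜 E]

theorem integral_inner_reflectionPerturbation_sub_inner (hσ : Function.Involutive σ)
    (hσ_mp : MeasurePreserving σ μ μ) (ha : ∀ x, a (σ x) = a x) (f g : α → E) :
    ∫ x, (inner 𝕜 (reflectionPerturbation σ (star a) f x) (g x) -
      inner 𝕜 (f x) (reflectionPerturbation σ a g x)) ∂μ = 0 := by
  have hσ_emb := (MeasurableEquiv.ofInvolutive σ hσ hσ_mp.measurable).measurableEmbedding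
  refine integral_eq_zero_of_comp_eq_neg hσ_mp hσ_emb fun x ↦ ?_
  rw [inner_reflectionPerturbation_sub_inner, inner_reflectionPerturbation_sub_inner, hσ x, ha x]
  ring

variable [CompleteSpace E]

theorem IsInducedBy.adjoint_reflectionPerturbation {W : Lp E 2 μ →L[𝕜] Lp E 2 μ}
    (hσ : Function.Involutive σ) (hσ_mp : MeasurePreserving σ μ μ) (ha : ∀ x, a (σ x) = a x)
    (ha_bdd : MemLp a ⊤ μ) (hW : IsInducedBy W (reflectionPerturbation σ a)) :
    IsInducedBy (ContinuousLinearMap.adjoint W) (reflectionPerturbation σ (star a)) := by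
  intro f fL hf
  have hmem : MemLp (reflectionPerturbation σ (star a) f) 2 μ :=
    memLp_reflectionPerturbation hσ_mp ha_bdd.star ((memLp_congr_ae hf).mp (Lp.memLp fL))
  suffices hadj : ContinuousLinearMap.adjoint W fL = hmem.toLp _ by
    rw [hadj]
    exact hmem.coeFn_toLp
  refine ext_inner_right 𝕜 fun g ↦ ?_
  rw [ContinuousLinearMap.adjoint_inner_left, eq_comm, ← sub_eq_zero, L2.inner_def, L2.inner_def,
    ← integral_sub (L2.integrable_inner _ _) (L2.integrable_inner _ _),
    ← integral_inner_reflectionPerturbation_sub_inner hσ hσ_mp ha f g]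
  refine integral_congr_ae ?_
  filter_upwards [hf, hW g g .rfl, hmem.coeFn_toLp] with x hfx hWx hTx
  rw [hfx, hWx, hTx]

theorem statement9_general {Wp Wm : Lp E 2 μ →L[𝕜] Lp E 2 μ}
    (hσ : Function.Involutive σ) (hσ_mp : MeasurePreserving σ μ μ)
    (ha : ∀ x, a (σ x) = a x) (ha_bdd : MemLp a ⊤ μ) (hb : ∀ x, b (σ x) = b x)
    (hWp : IsInducedBy Wp (reflectionPerturbation σ a))
    (hWm : IsInducedBy Wm (reflectionPerturbation σ b)) :
    IsInducedBy (ContinuousLinearMap.adjoint Wp ∘ Wm)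
      (reflectionPerturbation σ (star a + b - 2 * (star a * b))) := by
  rw [← reflectionPerturbation_comp hσ hb]
  exact (hWp.adjoint_reflectionPerturbation hσ hσ_mp ha ha_bdd).comp hWm

end ReflectionPerturbation

theorem ae_fst_mul_snd_ne_zero {R : Type*} [MulZeroClass R] [NoZeroDivisors R] [MeasurableSpace R]
    (μ ν : Measure R) [NullSingletonClass μ] [NullSingletonClass ν] :
    ∀ᵐ z ∂μ.prod ν, z.1 * z.2 ≠ 0 := by
  filter_upwards [Measure.quasiMeasurePreserving_fst.ae (Measure.ae_ne μ 0),
    Measure.quasiMeasurePreserving_snd.ae (Measure.ae_ne ν 0)] with z hq hp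
  exact mul_ne_zero hq hp

section Heaviside

theorem measurable_heav : Measurable heav :=
  Measurable.ite measurableSet_Ioi measurable_const measurable_const

theorem norm_heav_le_one (x : ℝ) : ‖heav x‖ ≤ 1 := by
  unfold heav
  split_ifs <;> simp

theorem heav_mul_heav_neg (x : ℝ) : heav x * heav (-x) = 0 := by
  rcases le_total x 0 with hx | hx <;> simp [heav, hx.not_gt]

theorem heav_add_heav_neg {x : ℝ} (hx : x ≠ 0) : heav x + heav (-x) = 1 := by
  rcases hx.lt_or_gt with hx | hx <;> simp [heav, hx, hx.not_gt]

end Heaviside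

section WaveMultiplier

variable (m β s : ℝ)

/-- The factor `(1 + 2is|p|/(mβ))⁻¹`, where the sign `s = ±1` is that of `W_β^±`. -/
def reflectionAmplitude (p : ℝ) : ℂ :=
  (1 + (s : ℂ) * 2 * Complex.I * ((|p| : ℝ) : ℂ) / ((m : ℂ) * (β : ℂ)))⁻¹

theorem reflectionAmplitude_neg_one (p : ℝ) :
    reflectionAmplitude m β (-1) p =
      (1 - 2 * Complex.I * ((|p| : ℝ) : ℂ) / ((m : ℂ) * (β : ℂ)))⁻¹ := by
  rw [reflectionAmplitude]
  push_cast
  ring_nf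

theorem star_reflectionAmplitude (p : ℝ) :
    star (reflectionAmplitude m β s p) = reflectionAmplitude m β (-s) p := by
  simp [reflectionAmplitude]

theorem norm_reflectionAmplitude_le_one (p : ℝ) : ‖reflectionAmplitude m β s p‖ ≤ 1 := by
  rw [reflectionAmplitude, norm_inv]
  refine inv_le_one_of_one_le₀ (le_trans ?_ (Complex.abs_re_le_norm _))
  have hform : 1 + (s : ℂ) * 2 * Complex.I * ((|p| : ℝ) : ℂ) / ((m : ℂ) * (β : ℂ)) =
      1 + ((s * 2 * |p| / (m * β) : ℝ) : ℂ) * Complex.I := by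
    push_cast
    ring
  rw [hform, Complex.add_re, Complex.one_re, Complex.re_ofReal_mul, Complex.I_re, mul_zero,
    add_zero, abs_one]

theorem measurable_reflectionAmplitude : Measurable (reflectionAmplitude m β s) := by
  unfold reflectionAmplitude
  fun_prop

/-- The function `θ(-sqp) (1 + 2is|p|/(mβ))⁻¹` that multiplies `f_ev` in `W_β^±`, `s = ±1`. -/
def waveMultiplier (z : ℝ × ℝ) : ℂ :=
  ((heav (-(s * z.1 * z.2)) : ℝ) : ℂ) * reflectionAmplitude m β s z.2

theorem Wcl_eq_reflectionPerturbation :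
    Wcl m β s = reflectionPerturbation Neg.neg (waveMultiplier m β s) :=
  rfl

theorem waveMultiplier_neg (z : ℝ × ℝ) : waveMultiplier m β s (-z) = waveMultiplier m β s z := by
  simp [waveMultiplier, reflectionAmplitude]

theorem memLp_top_waveMultiplier (μ : Measure (ℝ × ℝ)) : MemLp (waveMultiplier m β s) ⊤ μ := by
  have hmeas : Measurable (waveMultiplier m β s) :=
    (Complex.measurable_ofReal.comp (measurable_heav.comp (by fun_prop))).mul
      ((measurable_reflectionAmplitude m β s).comp measurable_snd)
  refine memLp_top_of_bound hmeas.aestronglyMeasurable 1 (Eventually.of_forall fun z ↦ ?_)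
  rw [waveMultiplier, norm_mul, Complex.norm_real]
  exact mul_le_one₀ (norm_heav_le_one _) (norm_nonneg _) (norm_reflectionAmplitude_le_one m β s z.2)

theorem scatteringMultiplier_ae_eq {s : ℝ} (hs : s ≠ 0) :
    star (waveMultiplier m β s) + waveMultiplier m β (-s) -
        2 * (star (waveMultiplier m β s) * waveMultiplier m β (-s)) =ᵐ[volume]
      fun z ↦ reflectionAmplitude m β (-s) z.2 := by
  filter_upwards [ae_fst_mul_snd_ne_zero (volume : Measure ℝ) (volume : Measure ℝ)] with z hz
  set x := s * z.1 * z.2 with hx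
  have hx0 : x ≠ 0 := by rw [hx, mul_assoc]; exact mul_ne_zero hs hz
  have hstar : star (waveMultiplier m β s z) = heav (-x) * reflectionAmplitude m β (-s) z.2 := by
    rw [waveMultiplier, star_mul', star_reflectionAmplitude, RCLike.star_def, Complex.conj_ofReal]
  have hneg : waveMultiplier m β (-s) z = heav x * reflectionAmplitude m β (-s) z.2 := by
    rw [waveMultiplier, neg_mul, neg_mul, neg_neg]
  have hsum : (heav x + heav (-x) : ℂ) = 1 := mod_cast heav_add_heav_neg hx0
  have hprod : (heav x * heav (-x) : ℂ) = 0 := mod_cast heav_mul_heav_neg x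
  simp only [Pi.sub_apply, Pi.add_apply, Pi.mul_apply, Pi.star_apply, Pi.ofNat_apply, hstar, hneg]
  linear_combination reflectionAmplitude m β (-s) z.2 * hsum -
    2 * reflectionAmplitude m β (-s) z.2 ^ 2 * hprod

end WaveMultiplier

/-- the classical scattering operator `S^cl_β = (W_β^+)^* ∘ W_β^-` (with the
Hilbert adjoint in `L²(ℝ²)`) is given by `(S^cl_β f)(q,p) = f(q,p) − (1−2i|p|/(mβ))⁻¹ f_ev(q,p)`
almost everywhere. -/
theorem statement9 (m β : ℝ) (hm : 0 < m) (hβ : β ≠ 0)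
    (Wp Wm : Lp ℂ 2 (volume : Measure (ℝ × ℝ)) →L[ℂ] Lp ℂ 2 (volume : Measure (ℝ × ℝ)))
    (hWp : ∀ (f : ℝ × ℝ → ℂ) (fL : Lp ℂ 2 (volume : Measure (ℝ × ℝ))),
      (fL : ℝ × ℝ → ℂ) =ᵐ[(volume : Measure (ℝ × ℝ))] f →
      (Wp fL : ℝ × ℝ → ℂ) =ᵐ[(volume : Measure (ℝ × ℝ))] Wcl m β 1 f)
    (hWm : ∀ (f : ℝ × ℝ → ℂ) (fL : Lp ℂ 2 (volume : Measure (ℝ × ℝ))),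
      (fL : ℝ × ℝ → ℂ) =ᵐ[(volume : Measure (ℝ × ℝ))] f →
      (Wm fL : ℝ × ℝ → ℂ) =ᵐ[(volume : Measure (ℝ × ℝ))] Wcl m β (-1) f) :
    ∀ (f : ℝ × ℝ → ℂ) (fL : Lp ℂ 2 (volume : Measure (ℝ × ℝ))),
      (fL : ℝ × ℝ → ℂ) =ᵐ[(volume : Measure (ℝ × ℝ))] f →
      (ContinuousLinearMap.adjoint Wp (Wm fL) : ℝ × ℝ → ℂ) =ᵐ[(volume : Measure (ℝ × ℝ))]
        fun z => f z -
          (1 - 2 * Complex.I * ((|z.2| : ℝ) : ℂ) / ((m : ℂ) * (β : ℂ)))⁻¹ *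
            (f z + f (-z.1, -z.2)) := by
  intro f fL hf
  simp only [Wcl_eq_reflectionPerturbation] at hWp hWm
  simp only [← reflectionAmplitude_neg_one]
  exact (statement9_general neg_involutive (Measure.measurePreserving_neg volume)
    (waveMultiplier_neg m β 1) (memLp_top_waveMultiplier m β 1 volume) (waveMultiplier_neg m β (-1))
    hWp hWm f fL hf).trans
      (reflectionPerturbation_congr_ae (scatteringMultiplier_ae_eq m β one_ne_zero) f)
end
end

section
/- Let m>0 and β∈ℝ\{0}. The bounded operators W_β^± on L²(ℝ²) defined by (W_β^±f)(q,p) := f(q,p) − θ(∓qp)·(1 ± 2i|p|/(mβ))⁻¹·f_ev(q,p), with f_ev(q,p) := f(q,p)+f(−q,−p), are unitary: for every f∈L²(ℝ²), W_β^±((W_β^±)^*f) = f and (W_β^±)^*(W_β^±f) = f, where (·)^* denotes the Hilbert adjoint in L²(ℝ²). Moreover W_β^+∘W_β^− = W_β^−∘W_β^+. -/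
open MeasureTheory Complex Filter

noncomputable section

/-
The operator `W_β^±` acts as the identity on odd functions and as multiplication by a function
`u` on even ones, where `u = 1 - 2 (1 ± 2i|p|/(mβ))⁻¹` on the support of the Heaviside factor and
`u = 1` elsewhere. As `1 - 2 w⁻¹ = -conj w / w` for `Re w = 1`, the multiplier `u` is unimodular; it
is also even, so it preserves the splitting into even and odd parts. Hence such operators compose by
multiplying their multipliers: they commute, and the one with multiplier `conj u` is an inverse.
They are isometric by the parallelogram law at the pair of points `z`, `-z`.
-/

section Algebra

variable {G 𝕜 E : Type*} [InvolutiveNeg G] [Field 𝕜] [AddCommGroup E] [Module 𝕜 E]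
  {u v : G → 𝕜}

/-- The operator multiplying the even part of a function by `u` and fixing its odd part. -/
def evenMultiplier (u : G → 𝕜) (f : G → E) : G → E :=
  fun z => (2⁻¹ : 𝕜) • (f z - f (-z) + u z • (f z + f (-z)))

variable [NeZero (2 : 𝕜)]

theorem evenMultiplier_add_neg (hu : u.Even) (f : G → E) (z : G) :
    evenMultiplier u f z + evenMultiplier u f (-z) = u z • (f z + f (-z)) := by
  simp only [evenMultiplier, hu z, neg_neg]
  match_scalars <;> field_simp <;> ring

theorem evenMultiplier_sub_neg (hu : u.Even) (f : G → E) (z : G) :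
    evenMultiplier u f z - evenMultiplier u f (-z) = f z - f (-z) := by
  simp only [evenMultiplier, hu z, neg_neg]
  match_scalars <;> field_simp <;> ring

theorem evenMultiplier_one (f : G → E) : evenMultiplier (1 : G → 𝕜) f = f := by
  ext z
  simp only [evenMultiplier, Pi.one_apply]
  match_scalars <;> field_simp <;> ring

theorem evenMultiplier_evenMultiplier (hv : v.Even) (f : G → E) :
    evenMultiplier u (evenMultiplier v f) = evenMultiplier (u * v) f := by
  ext z
  rw [evenMultiplier, evenMultiplier_add_neg hv, evenMultiplier_sub_neg hv, smul_smul]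
  rfl

end Algebra

section Measure

variable {G 𝕜 E : Type*} [InvolutiveNeg G] [MeasurableSpace G] [MeasurableNeg G]
  {μ : Measure G} [μ.IsNegInvariant] [NormedAddCommGroup E]

theorem two_mul_eLpNorm_two_sq {f : G → E} (hf : AEStronglyMeasurable f μ) :
    2 * eLpNorm f 2 μ ^ 2 = ∫⁻ z, ‖f z‖ₑ ^ 2 + ‖f (-z)‖ₑ ^ 2 ∂μ := by
  have h_sq : eLpNorm f 2 μ ^ 2 = ∫⁻ z, ‖f z‖ₑ ^ 2 ∂μ := by
    simpa using eLpNorm_nnreal_pow_eq_lintegral (f := f) (μ := μ) (two_ne_zero (α := NNReal))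
  rw [lintegral_add_left' (hf.enorm.pow_const 2),
    lintegral_neg_eq_self (μ := μ) (fun z => ‖f z‖ₑ ^ 2), h_sq, two_mul]

variable [NormedField 𝕜] [NormedSpace 𝕜 E] {u v : G → 𝕜} {f g : G → E}

theorem evenMultiplier_congr_ae (u : G → 𝕜) (h : f =ᵐ[μ] g) :
    evenMultiplier u f =ᵐ[μ] evenMultiplier u g := by
  have h_neg := (Measure.measurePreserving_neg μ).quasiMeasurePreserving.ae_eq_comp h
  filter_upwards [h, h_neg] with z hz hz_neg
  simp only [Function.comp_apply] at hz_neg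
  simp only [evenMultiplier, hz, hz_neg]

theorem aestronglyMeasurable_evenMultiplier (hu : AEStronglyMeasurable u μ)
    (hf : AEStronglyMeasurable f μ) : AEStronglyMeasurable (evenMultiplier u f) μ := by
  have hf_neg := hf.comp_measurePreserving (Measure.measurePreserving_neg μ)
  exact ((hf.sub hf_neg).add (hu.smul (hf.add hf_neg))).const_smul _

variable [NeZero (2 : 𝕜)] {p : ENNReal} [Fact (1 ≤ p)] {V W : Lp E p μ →L[𝕜] Lp E p μ}

theorem comp_ae_eq_evenMultiplier (hv : v.Even) (hV : ∀ f, V f =ᵐ[μ] evenMultiplier u f)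
    (hW : ∀ f, W f =ᵐ[μ] evenMultiplier v f) (f : Lp E p μ) :
    V (W f) =ᵐ[μ] evenMultiplier (u * v) f :=
  calc V (W f) =ᵐ[μ] evenMultiplier u (W f) := hV _
    _ =ᵐ[μ] evenMultiplier u (evenMultiplier v f) := evenMultiplier_congr_ae u (hW f)
    _ = evenMultiplier (u * v) f := evenMultiplier_evenMultiplier hv _

theorem commute_of_ae_eq_evenMultiplier (hu : u.Even) (hv : v.Even)
    (hV : ∀ f, V f =ᵐ[μ] evenMultiplier u f) (hW : ∀ f, W f =ᵐ[μ] evenMultiplier v f) :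
    Commute V W := by
  ext1 f
  have hWV := comp_ae_eq_evenMultiplier hu hW hV f
  rw [mul_comm] at hWV
  exact Lp.ext ((comp_ae_eq_evenMultiplier hv hV hW f).trans hWV.symm)

end Measure

section InnerProductSpace

variable {G 𝕜 E : Type*} [InvolutiveNeg G] [RCLike 𝕜] [NormedAddCommGroup E]
  [InnerProductSpace 𝕜 E] {u : G → 𝕜}

theorem norm_sq_evenMultiplier_add_norm_sq_neg (hu : u.Even) (hu_norm : ∀ z, ‖u z‖ = 1)
    (f : G → E) (z : G) :
    ‖evenMultiplier u f z‖ ^ 2 + ‖evenMultiplier u f (-z)‖ ^ 2 = ‖f z‖ ^ 2 + ‖f (-z)‖ ^ 2 := by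
  have h_image := parallelogram_law_with_norm 𝕜 (evenMultiplier u f z) (evenMultiplier u f (-z))
  rw [evenMultiplier_add_neg hu, evenMultiplier_sub_neg hu, norm_smul, hu_norm, one_mul] at h_image
  linarith [parallelogram_law_with_norm 𝕜 (f z) (f (-z))]

variable [MeasurableSpace G] [MeasurableNeg G] {μ : Measure G} [μ.IsNegInvariant] {f : G → E}

theorem eLpNorm_two_evenMultiplier (hu : u.Even) (hu_norm : ∀ z, ‖u z‖ = 1)
    (hu_meas : AEStronglyMeasurable u μ) (hf : AEStronglyMeasurable f μ) :
    eLpNorm (evenMultiplier u f) 2 μ = eLpNorm f 2 μ := by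
  have h_pointwise (z : G) : ‖evenMultiplier u f z‖ₑ ^ 2 + ‖evenMultiplier u f (-z)‖ₑ ^ 2
      = ‖f z‖ₑ ^ 2 + ‖f (-z)‖ₑ ^ 2 := by
    have h_nnnorm : ‖evenMultiplier u f z‖₊ ^ 2 + ‖evenMultiplier u f (-z)‖₊ ^ 2
        = ‖f z‖₊ ^ 2 + ‖f (-z)‖₊ ^ 2 :=
      NNReal.eq (norm_sq_evenMultiplier_add_norm_sq_neg hu hu_norm f z)
    simp only [enorm_eq_nnnorm]
    exact_mod_cast h_nnnorm
  have h_sq : 2 * eLpNorm (evenMultiplier u f) 2 μ ^ 2 = 2 * eLpNorm f 2 μ ^ 2 := by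
    rw [two_mul_eLpNorm_two_sq (aestronglyMeasurable_evenMultiplier hu_meas hf),
      two_mul_eLpNorm_two_sq hf]
    simp only [h_pointwise]
  exact (ENNReal.pow_right_strictMono two_ne_zero).injective
    ((ENNReal.mul_right_inj two_ne_zero ENNReal.ofNat_ne_top).1 h_sq)

theorem memLp_two_evenMultiplier (hu : u.Even) (hu_norm : ∀ z, ‖u z‖ = 1)
    (hu_meas : AEStronglyMeasurable u μ) (hf : MemLp f 2 μ) : MemLp (evenMultiplier u f) 2 μ :=
  ⟨aestronglyMeasurable_evenMultiplier hu_meas hf.1,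
    (eLpNorm_two_evenMultiplier hu hu_norm hu_meas hf.1).trans_lt hf.2⟩

variable {W : Lp E 2 μ →L[𝕜] Lp E 2 μ}

theorem norm_map_of_ae_eq_evenMultiplier (hu : u.Even) (hu_norm : ∀ z, ‖u z‖ = 1)
    (hu_meas : AEStronglyMeasurable u μ) (hW : ∀ f, W f =ᵐ[μ] evenMultiplier u f)
    (f : Lp E 2 μ) : ‖W f‖ = ‖f‖ := by
  rw [Lp.norm_def, Lp.norm_def, eLpNorm_congr_ae (hW f),
    eLpNorm_two_evenMultiplier hu hu_norm hu_meas (Lp.aestronglyMeasurable f)]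

theorem surjective_of_ae_eq_evenMultiplier (hu : u.Even) (hu_norm : ∀ z, ‖u z‖ = 1)
    (hu_meas : AEStronglyMeasurable u μ) (hW : ∀ f, W f =ᵐ[μ] evenMultiplier u f) :
    Function.Surjective W := by
  intro f
  have h_even : (star u).Even := fun z => congrArg star (hu z)
  have h_mul_star : u * star u = 1 := by
    ext z
    simp [RCLike.mul_conj, hu_norm]
  have h_memLp : MemLp (evenMultiplier (star u) f) 2 μ :=
    memLp_two_evenMultiplier h_even (fun z => (norm_star _).trans (hu_norm z)) hu_meas.star
      (Lp.memLp f)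
  refine ⟨h_memLp.toLp, Lp.ext ?_⟩
  calc W h_memLp.toLp =ᵐ[μ] evenMultiplier u h_memLp.toLp := hW _
    _ =ᵐ[μ] evenMultiplier u (evenMultiplier (star u) f) :=
      evenMultiplier_congr_ae u h_memLp.coeFn_toLp
    _ = f := by rw [evenMultiplier_evenMultiplier h_even, h_mul_star, evenMultiplier_one]

theorem mem_unitary_of_ae_eq_evenMultiplier [CompleteSpace E] (hu : u.Even)
    (hu_norm : ∀ z, ‖u z‖ = 1) (hu_meas : AEStronglyMeasurable u μ)
    (hW : ∀ f, W f =ᵐ[μ] evenMultiplier u f) : W ∈ unitary (Lp E 2 μ →L[𝕜] Lp E 2 μ) := by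
  have h_norm := norm_map_of_ae_eq_evenMultiplier hu hu_norm hu_meas hW
  have h_isUnit : IsUnit W := ContinuousLinearMap.isUnit_iff_bijective.2
    ⟨(AddMonoidHomClass.isometry_of_norm W h_norm).injective,
      surjective_of_ae_eq_evenMultiplier hu hu_norm hu_meas hW⟩
  exact h_isUnit.mem_unitary_of_star_mul_self (W.norm_map_iff_adjoint_comp_self.1 h_norm)

end InnerProductSpace

theorem norm_one_sub_two_mul_inv {w : ℂ} (hw : w.re = 1) : ‖1 - 2 * w⁻¹‖ = 1 := by
  have hw_ne : w ≠ 0 := by rintro rfl; simp at hw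
  have h_quot : 1 - 2 * w⁻¹ = -(starRingEnd ℂ w / w) := by
    have h_sum : w + starRingEnd ℂ w = 2 := by rw [add_conj, hw]; norm_num
    field_simp
    linear_combination h_sum
  rw [h_quot, norm_neg, norm_div, RCLike.norm_conj, div_self (norm_ne_zero_iff.2 hw_ne)]

/-- The multiplier by which `Wcl m β s` acts on even functions. -/
def wavePhase (m β s : ℝ) (z : ℝ × ℝ) : ℂ :=
  1 - 2 * ((heav (-(s * z.1 * z.2)) : ℂ) * (1 + s * 2 * I * |z.2| / (m * β))⁻¹)

theorem Wcl_eq_evenMultiplier (m β s : ℝ) (f : ℝ × ℝ → ℂ) :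
    Wcl m β s f = evenMultiplier (wavePhase m β s) f := by
  ext z
  simp only [Wcl, evenMultiplier, wavePhase, smul_eq_mul, ← Prod.neg_mk, Prod.mk.eta]
  ring

theorem even_wavePhase (m β s : ℝ) : (wavePhase m β s).Even := fun z => by
  simp [wavePhase]

theorem norm_wavePhase (m β s : ℝ) (z : ℝ × ℝ) : ‖wavePhase m β s z‖ = 1 := by
  have h_re : (1 + s * 2 * I * |z.2| / (m * β) : ℂ).re = 1 := by
    have h_imaginary : (s * 2 * I * |z.2| / (m * β) : ℂ)
        = ((s * 2 * |z.2| / (m * β) : ℝ) : ℂ) * I := by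
      push_cast
      ring
    rw [h_imaginary, add_re, one_re, re_ofReal_mul, I_re, mul_zero, add_zero]
  rw [wavePhase, heav]
  split_ifs
  · rw [ofReal_one, one_mul, norm_one_sub_two_mul_inv h_re]
  · simp

theorem measurable_wavePhase (m β s : ℝ) : Measurable (wavePhase m β s) := by
  have h_heav : Measurable fun z : ℝ × ℝ => heav (-(s * z.1 * z.2)) :=
    measurable_heav.comp (by fun_prop)
  unfold wavePhase
  fun_prop

theorem mem_unitary_of_ae_eq_Wcl {m β s : ℝ}
    {W : Lp ℂ 2 (volume : Measure (ℝ × ℝ)) →L[ℂ] Lp ℂ 2 (volume : Measure (ℝ × ℝ))}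
    (hW : ∀ f, W f =ᵐ[volume] Wcl m β s f) :
    W ∈ unitary (Lp ℂ 2 (volume : Measure (ℝ × ℝ)) →L[ℂ] Lp ℂ 2 (volume : Measure (ℝ × ℝ))) := by
  simp only [Wcl_eq_evenMultiplier] at hW
  exact mem_unitary_of_ae_eq_evenMultiplier (even_wavePhase m β s) (norm_wavePhase m β s)
    (measurable_wavePhase m β s).aestronglyMeasurable hW

theorem commute_of_ae_eq_Wcl {m β s t : ℝ}
    {V W : Lp ℂ 2 (volume : Measure (ℝ × ℝ)) →L[ℂ] Lp ℂ 2 (volume : Measure (ℝ × ℝ))}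
    (hV : ∀ f, V f =ᵐ[volume] Wcl m β s f) (hW : ∀ f, W f =ᵐ[volume] Wcl m β t f) :
    Commute V W := by
  simp only [Wcl_eq_evenMultiplier] at hV hW
  exact commute_of_ae_eq_evenMultiplier (even_wavePhase m β s) (even_wavePhase m β t) hV hW

/-- the classical wave operators `W_β^±` are unitary on `L²(ℝ²)`
(`W_β^±(W_β^±)^* = (W_β^±)^*W_β^± = id`, with the Hilbert adjoint), and they commute:
`W_β^+ ∘ W_β^- = W_β^- ∘ W_β^+`. -/
theorem statement10 (m β : ℝ) (hm : 0 < m) (hβ : β ≠ 0)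
    (Wp Wm : Lp ℂ 2 (volume : Measure (ℝ × ℝ)) →L[ℂ] Lp ℂ 2 (volume : Measure (ℝ × ℝ)))
    (hWp : ∀ (f : ℝ × ℝ → ℂ) (fL : Lp ℂ 2 (volume : Measure (ℝ × ℝ))),
      (fL : ℝ × ℝ → ℂ) =ᵐ[(volume : Measure (ℝ × ℝ))] f →
      (Wp fL : ℝ × ℝ → ℂ) =ᵐ[(volume : Measure (ℝ × ℝ))] Wcl m β 1 f)
    (hWm : ∀ (f : ℝ × ℝ → ℂ) (fL : Lp ℂ 2 (volume : Measure (ℝ × ℝ))),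
      (fL : ℝ × ℝ → ℂ) =ᵐ[(volume : Measure (ℝ × ℝ))] f →
      (Wm fL : ℝ × ℝ → ℂ) =ᵐ[(volume : Measure (ℝ × ℝ))] Wcl m β (-1) f) :
    (∀ f : Lp ℂ 2 (volume : Measure (ℝ × ℝ)),
      Wp (ContinuousLinearMap.adjoint Wp f) = f ∧ ContinuousLinearMap.adjoint Wp (Wp f) = f) ∧
    (∀ f : Lp ℂ 2 (volume : Measure (ℝ × ℝ)),
      Wm (ContinuousLinearMap.adjoint Wm f) = f ∧ ContinuousLinearMap.adjoint Wm (Wm f) = f) ∧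
    (∀ f : Lp ℂ 2 (volume : Measure (ℝ × ℝ)), Wp (Wm f) = Wm (Wp f)) := by
  have hWp_ae (f) : Wp f =ᵐ[volume] Wcl m β 1 f := hWp f f .rfl
  have hWm_ae (f) : Wm f =ᵐ[volume] Wcl m β (-1) f := hWm f f .rfl
  have hWp_unitary := mem_unitary_of_ae_eq_Wcl hWp_ae
  have hWm_unitary := mem_unitary_of_ae_eq_Wcl hWm_ae
  have h_commute := commute_of_ae_eq_Wcl hWp_ae hWm_ae
  refine ⟨fun f => ⟨?_, ?_⟩, fun f => ⟨?_, ?_⟩, fun f => DFunLike.congr_fun h_commute f⟩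
  · exact DFunLike.congr_fun (Unitary.mul_star_self_of_mem hWp_unitary) f
  · exact DFunLike.congr_fun (Unitary.star_mul_self_of_mem hWp_unitary) f
  · exact DFunLike.congr_fun (Unitary.mul_star_self_of_mem hWm_unitary) f
  · exact DFunLike.congr_fun (Unitary.star_mul_self_of_mem hWm_unitary) f
end
end
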